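/- arXiv:2109.11378 — 4 statements merged into one kernel-verified Lean document; each statement's English description precedes it below -/
import Mathlib

section
/- Let λ be a partition and let r, c be nonnegative integers. The super (hook) Schur function s_λ[X_r − Y_c] in r positive variables x_1,…,x_r and c negative variables y_1,…,y_c, defined by s_λ[X_r − Y_c] = Σ_{μ ⊆ λ} s_μ(x_1,…,x_r)·s_{(λ/μ)'}(y_1,…,y_c), is nonzero if and only if the point (c,r) does not belong to the Young diagram [λ], i.e. if and only if λ_{r+1} ≤ c (so that [λ] fits in the fat-hook region consisting of the points with second coordinate < r or first coordinate < c). -/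
open MvPolynomial Finset

/-- Semistandardness of a filling of an arbitrary finite set of cells `s ⊆ ℕ × ℕ`
(cells are `(row, column)` pairs): entries weakly increase along rows and strictly
increase down columns (for adjacent cells that both lie in `s`). -/
def IsSemistandardOn (s : Finset (ℕ × ℕ)) {N : ℕ} (T : s → Fin N) : Prop :=
  (∀ (i j : ℕ) (h1 : (i, j) ∈ s) (h2 : (i, j + 1) ∈ s),
      T ⟨(i, j), h1⟩ ≤ T ⟨(i, j + 1), h2⟩) ∧
  (∀ (i j : ℕ) (h1 : (i, j) ∈ s) (h2 : (i + 1, j) ∈ s),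
      T ⟨(i, j), h1⟩ < T ⟨(i + 1, j), h2⟩)

open scoped Classical in
/-- The generating polynomial, in `N` variables, of semistandard fillings of the cell
set `s` with entries in `{0, …, N-1}`. -/
noncomputable def cellSchur (N : ℕ) (s : Finset (ℕ × ℕ)) : MvPolynomial (Fin N) ℤ :=
  ∑ T ∈ Finset.univ.filter (fun T : s → Fin N => IsSemistandardOn s T),
    ∏ c : s, X (T c)

/-- The Schur polynomial `s_μ(x_1, …, x_N)`: the generating function of semistandard
Young tableaux of shape `μ` with entries in `{0, …, N-1}`. -/
noncomputable def schurPoly (N : ℕ) (μ : YoungDiagram) : MvPolynomial (Fin N) ℤ :=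
  cellSchur N μ.cells

/-- `(c, r)` (column `c`, row `r`, 0-indexed) is an outer corner of `μ`: it is not a
cell of `μ`, and adding it to `μ` again yields a Young diagram. -/
def IsOuterCorner (μ : YoungDiagram) (c r : ℕ) : Prop :=
  (r, c) ∉ μ ∧ ∃ ν : YoungDiagram, ν.cells = insert (r, c) μ.cells

open scoped Classical in
/-- The super (hook) Schur polynomial `s_λ[X_r − Y_c]` in `r` positive variables
(`Sum.inl`) and `c` negative variables (`Sum.inr`), defined by
`s_λ[X_r − Y_c] = Σ_{μ ⊆ λ} s_μ(x_1,…,x_r) · s_{(λ/μ)'}(y_1,…,y_c)`: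
the sum runs over all subdiagrams `μ ⊆ λ` (lower subsets of the cells of `λ`),
and `(λ/μ)'` is the conjugate of the skew shape `λ/μ`, obtained by transposing
(swapping the coordinates of) the cells of `λ/μ`. -/
noncomputable def superSchur (r c : ℕ) (lam : YoungDiagram) :
    MvPolynomial (Fin r ⊕ Fin c) ℤ :=
  ∑ s ∈ lam.cells.powerset.filter (fun s : Finset (ℕ × ℕ) => IsLowerSet (s : Set (ℕ × ℕ))),
    rename Sum.inl (cellSchur r s) *
      rename Sum.inr (cellSchur c ((lam.cells \ s).image Prod.swap))

open scoped Classical in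
/-- Evaluating the generating polynomial at all ones counts the semistandard fillings. -/
lemma eval_one_cellSchur (N : ℕ) (s : Finset (ℕ × ℕ)) :
    eval (fun _ => (1 : ℤ)) (cellSchur N s) =
      ((Finset.univ.filter (fun T : s → Fin N => IsSemistandardOn s T)).card : ℤ) := by
  simp [cellSchur, map_sum, map_prod]

lemma cellSchur_ne_zero_exists {N : ℕ} {s : Finset (ℕ × ℕ)} (h : cellSchur N s ≠ 0) :
    ∃ T : s → Fin N, IsSemistandardOn s T := by
  classical
  by_contra hn
  push Not at hn
  apply h
  unfold cellSchur
  apply Finset.sum_eq_zero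
  intro T hT
  exact absurd (Finset.mem_filter.1 hT).2 (hn T)

lemma eval_one_cellSchur_nonneg (N : ℕ) (s : Finset (ℕ × ℕ)) :
    0 ≤ eval (fun _ => (1 : ℤ)) (cellSchur N s) := by
  rw [eval_one_cellSchur]; positivity

lemma eval_one_cellSchur_pos {N : ℕ} {s : Finset (ℕ × ℕ)} (T : s → Fin N)
    (hT : IsSemistandardOn s T) :
    0 < eval (fun _ => (1 : ℤ)) (cellSchur N s) := by
  classical
  rw [eval_one_cellSchur]
  exact_mod_cast Finset.card_pos.2 ⟨T, by simpa using hT⟩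

/-- In a column contained in the shape, the entry in row `i` is at least `i`. -/
lemma le_entry {N : ℕ} {s : Finset (ℕ × ℕ)} {T : s → Fin N} (hT : IsSemistandardOn s T)
    (j : ℕ) : ∀ (i : ℕ) (h : ∀ k ≤ i, (k, j) ∈ s), i ≤ (T ⟨(i, j), h i le_rfl⟩ : ℕ) := by
  intro i
  induction i with
  | zero => intro h; exact Nat.zero_le _
  | succ i ih =>
    intro h
    have h1 := ih (fun k hk => h k (by omega))
    have h2 := hT.2 i j (h i (by omega)) (h (i + 1) le_rfl)
    have h3 : (T ⟨(i, j), h i (by omega)⟩ : ℕ) < (T ⟨(i + 1, j), h (i + 1) le_rfl⟩ : ℕ) := h2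
    omega

lemma column_not_subset {N : ℕ} {s : Finset (ℕ × ℕ)} {T : s → Fin N}
    (hT : IsSemistandardOn s T) (j : ℕ) (h : ∀ k ≤ N, (k, j) ∈ s) : False := by
  have h1 := le_entry hT j N h
  have h2 := (T ⟨(N, j), h N le_rfl⟩).isLt
  omega

/-- The super Schur function `s_λ[X_r − Y_c]` is nonzero if and only if the point
`(c, r)` (column `c`, row `r`) does not belong to the Young diagram of `λ`,
i.e. if and only if `λ_{r+1} ≤ c`. -/
theorem superSchur_ne_zero_iff (lam : YoungDiagram) (r c : ℕ) :
    superSchur r c lam ≠ 0 ↔ ((r, c) ∉ lam ∧ lam.rowLen r ≤ c) := by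
  classical
  have hiff : ((r, c) ∉ lam ∧ lam.rowLen r ≤ c) ↔ (r, c) ∉ lam := by
    rw [YoungDiagram.mem_iff_lt_rowLen]; omega
  rw [hiff]
  constructor
  · intro hne hmem
    obtain ⟨s, hs, hs0⟩ := Finset.exists_ne_zero_of_sum_ne_zero hne
    rw [Finset.mem_filter] at hs
    obtain ⟨hsub, hlow⟩ := hs
    obtain ⟨T, hT⟩ := cellSchur_ne_zero_exists (N := r) (s := s)
      (fun h => hs0 (by rw [h]; simp))
    obtain ⟨U, hU⟩ := cellSchur_ne_zero_exists (N := c)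
      (s := (lam.cells \ s).image Prod.swap) (fun h => hs0 (by rw [h]; simp))
    have hr0 : (r, 0) ∉ s := by
      intro h0
      exact column_not_subset hT 0 (fun k hk =>
        hlow (show ((k, 0) : ℕ × ℕ) ≤ (r, 0) from ⟨hk, le_rfl⟩) h0)
    refine column_not_subset hU r (fun k hk => ?_)
    refine Finset.mem_image.2 ⟨(r, k), Finset.mem_sdiff.2 ⟨?_, fun h => hr0 ?_⟩, rfl⟩
    · exact lam.up_left_mem le_rfl hk hmem
    · exact hlow (show ((r, 0) : ℕ × ℕ) ≤ (r, k) from ⟨le_rfl, Nat.zero_le _⟩) h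
  · intro hmem h0
    have h1 : eval (fun _ => (1 : ℤ)) (superSchur r c lam) = 0 := by rw [h0]; simp
    have h2 : 0 < eval (fun _ => (1 : ℤ)) (superSchur r c lam) := by
      unfold superSchur
      rw [map_sum]
      have key : ∀ s : Finset (ℕ × ℕ), eval (fun _ => (1 : ℤ))
          (rename (Sum.inl : Fin r → Fin r ⊕ Fin c) (cellSchur r s) *
            rename Sum.inr (cellSchur c ((lam.cells \ s).image Prod.swap))) =
          eval (fun _ => (1 : ℤ)) (cellSchur r s) *
            eval (fun _ => (1 : ℤ)) (cellSchur c ((lam.cells \ s).image Prod.swap)) := by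
        intro s
        rw [map_mul, eval_rename, eval_rename]
        rfl
      simp only [key]
      apply Finset.sum_pos'
      · intro s _
        exact mul_nonneg (eval_one_cellSchur_nonneg _ _) (eval_one_cellSchur_nonneg _ _)
      · refine ⟨lam.cells.filter (fun p => p.1 < r), ?_, ?_⟩
        · rw [Finset.mem_filter, Finset.mem_powerset]
          refine ⟨Finset.filter_subset _ _, ?_⟩
          intro a b hba ha
          simp only [Finset.coe_filter, Set.mem_setOf_eq] at ha ⊢
          exact ⟨lam.isLowerSet hba ha.1, lt_of_le_of_lt hba.1 ha.2⟩
        · apply mul_pos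
          · refine eval_one_cellSchur_pos
              (fun p => ⟨p.1.1, (Finset.mem_filter.1 p.2).2⟩) ⟨?_, ?_⟩
            · intro i j _ _
              exact le_rfl
            · intro i j _ _
              exact Nat.lt_succ_self i
          · refine eval_one_cellSchur_pos (fun p => ⟨p.1.1, ?_⟩) ⟨?_, ?_⟩
            · obtain ⟨q, hq, hqp⟩ := Finset.mem_image.1 p.2
              rw [← hqp]
              rw [Finset.mem_sdiff, Finset.mem_filter] at hq
              obtain ⟨hq1, hq2⟩ := hq
              have hrq : r ≤ q.1 := by
                by_contra hlt
                exact hq2 ⟨hq1, by omega⟩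
              by_contra hcq
              exact hmem (lam.up_left_mem hrq (not_lt.1 hcq) hq1)
            · intro i j _ _
              exact le_rfl
            · intro i j _ _
              exact Nat.lt_succ_self i
    omega
end

section
/- Let n ≥ 1 and let λ, μ⁰, μ¹, …, μ^{n−1} be partitions. If the multi-Littlewood–Richardson coefficient c^λ_{μ⁰,μ¹,…,μ^{n−1}} (the coefficient of the Schur function s_λ in the product s_{μ⁰}·s_{μ¹}⋯s_{μ^{n−1}}) is nonzero, then the Young diagram [λ] is contained in the complement region ⟨Σ_k OC(μ^k)⟩^c; equivalently, for every choice of outer corners (c_k, r_k) ∈ OC(μ^k) for k = 0,…,n−1, the point (c_0+⋯+c_{n−1}, r_0+⋯+r_{n−1}) does not belong to [λ], i.e. λ_{r_0+⋯+r_{n−1}+1} ≤ c_0+⋯+c_{n−1}. -/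
open MvPolynomial Finset

namespace LRB

/-- Alternant. -/
noncomputable def alt {N : ℕ} (l : Fin N → ℕ) : MvPolynomial (Fin N) ℤ :=
  Matrix.det (Matrix.of fun j i => (X i : MvPolynomial (Fin N) ℤ) ^ l j)

def sh {N : ℕ} (p : Fin N → ℕ) : Fin N → ℕ := fun j => p j + (N - 1 - j)

noncomputable def mon {N : ℕ} (b : Fin N → ℕ) : MvPolynomial (Fin N) ℤ := ∏ i, X i ^ b i

lemma mon_eq {N : ℕ} (b : Fin N → ℕ) : mon b = monomial (Finsupp.equivFunOnFinite.symm b) 1 := by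
  rw [monomial_eq]
  simp [mon, Finsupp.prod_fintype]

lemma alt_eq {N : ℕ} (l : Fin N → ℕ) :
    alt l = ∑ σ : Equiv.Perm (Fin N), (Equiv.Perm.sign σ : ℤ) • mon (l ∘ σ) := by
  rw [alt, Matrix.det_apply]
  rfl

lemma sh_strictAnti {N : ℕ} {p : Fin N → ℕ} (hp : Antitone p) : StrictAnti (sh p) := by
  intro i j hij
  have := hp hij.le
  have h2 : (i : ℕ) < j := hij
  have := j.2
  simp only [sh]; omega

lemma sh_inj {N : ℕ} {p q : Fin N → ℕ} (h : sh p = sh q) : p = q := by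
  funext j
  have := congrFun h j
  simpa [sh] using this

lemma coeff_alt {N : ℕ} {l l' : Fin N → ℕ} (h : StrictAnti l) (h' : StrictAnti l') :
    coeff (Finsupp.equivFunOnFinite.symm l) (alt l') = if l' = l then 1 else 0 := by
  classical
  rw [alt_eq, coeff_sum]
  have key : ∀ σ : Equiv.Perm (Fin N), l' ∘ σ = l → σ = 1 := by
    intro σ hσ
    have hm : StrictMono σ := by
      intro i j hij
      have := h hij
      rw [← hσ] at this
      exact h'.lt_iff_gt.1 this
    have : (σ : Fin N → Fin N) = id := by
      exact (StrictMono.range_inj hm strictMono_id).1 (by simp)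
    ext i; simp [this]
  rw [Finset.sum_eq_single 1]
  · simp [mon_eq, coeff_monomial]
  · intro σ _ hσ
    rw [mon_eq, coeff_smul, coeff_monomial, if_neg, smul_zero]
    intro h2
    exact hσ (key σ (Finsupp.equivFunOnFinite.symm.injective h2))
  · simp

lemma alt_ne_zero {N : ℕ} {l : Fin N → ℕ} (h : StrictAnti l) : alt l ≠ 0 := by
  intro h0
  have := coeff_alt h h
  simp [h0] at this

lemma alt_zero {N : ℕ} {l : Fin N → ℕ} {i j : Fin N} (hij : i ≠ j) (h : l i = l j) :
    alt l = 0 := by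
  apply Matrix.det_zero_of_row_eq hij
  funext k; simp [h]

lemma mon_mul {N : ℕ} (a b : Fin N → ℕ) : mon a * mon b = mon (a + b) := by
  simp [mon, pow_add, Finset.prod_mul_distrib]

lemma alt_homog {N : ℕ} (l : Fin N → ℕ) : (alt l).IsHomogeneous (∑ i, l i) := by
  rw [alt_eq]
  apply IsHomogeneous.sum
  intro σ _
  have h1 : (mon (l ∘ σ)).IsHomogeneous (∑ i, l i) := by
    rw [mon_eq]
    apply isHomogeneous_monomial
    simp only [Finsupp.degree_eq_sum, Finsupp.equivFunOnFinite_symm_apply_apply, Function.comp]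
    exact Equiv.sum_comp σ l
  have := (homogeneousSubmodule (Fin N) ℤ (∑ i, l i)).smul_mem (Equiv.Perm.sign σ : ℤ) h1
  exact this

lemma sum_mul_alt {N : ℕ} (B : Finset (Fin N → ℕ))
    (hB : ∀ (σ : Equiv.Perm (Fin N)) b, b ∈ B → b ∘ σ ∈ B) (l : Fin N → ℕ) :
    (∑ b ∈ B, mon b) * alt l = ∑ b ∈ B, alt (l + b) := by
  simp_rw [alt_eq]
  rw [Finset.sum_mul_sum, Finset.sum_comm]
  conv_rhs => rw [Finset.sum_comm]
  refine Finset.sum_congr rfl fun σ _ => ?_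
  symm
  refine Finset.sum_bij' (fun b _ => b ∘ σ) (fun b _ => b ∘ σ.symm) (fun b hb => hB σ b hb)
    (fun b hb => hB σ.symm b hb) ?_ ?_ ?_
  · intro b _; funext i; simp
  · intro b _; funext i; simp
  · intro b _
    rw [mul_smul_comm, mon_mul, add_comm]
    rfl

lemma det_sum {N : ℕ} {A : Type*} [CommRing A] (s : Fin N → Finset ℕ)
    (g : Fin N → ℕ → Fin N → A) :
    Matrix.det (Matrix.of fun j i => ∑ m ∈ s j, g j m i) =
      ∑ m ∈ Fintype.piFinset s, Matrix.det (Matrix.of fun j i => g j (m j) i) := by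
  have := (Matrix.detRowAlternating (n := Fin N) (R := A)).toMultilinearMap.map_sum_finset
    (fun j m => g j m) s
  have e : (Matrix.of fun j i => ∑ m ∈ s j, g j m i) = fun j => ∑ m ∈ s j, g j m := by
    funext j i; simp
  rw [e]
  exact this

lemma det_sum_X {N : ℕ} (s : Fin N → Finset ℕ) :
    Matrix.det (Matrix.of fun j i => ∑ m ∈ s j, (X i : MvPolynomial (Fin N) ℤ) ^ m) =
      ∑ m ∈ Fintype.piFinset s, alt m := det_sum s (fun _ m i => X i ^ m)

/-- horizontal strips -/
def strip {K : ℕ} (p : Fin (K+1) → ℕ) (a : ℕ) : Finset (Fin (K+1) → ℕ) :=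
  (Fintype.piFinset (Fin.cases (Icc (p 0) (p 0 + a)) (fun j => Icc (p j.succ) (p j.castSucc)))).filter
    (fun q => ∑ i, q i = ∑ i, p i + a)

lemma mem_strip {K : ℕ} {p q : Fin (K+1) → ℕ} {a : ℕ} : q ∈ strip p a ↔
    ((p 0 ≤ q 0 ∧ q 0 ≤ p 0 + a) ∧ ∀ j : Fin K, p j.succ ≤ q j.succ ∧ q j.succ ≤ p j.castSucc) ∧
      ∑ i, q i = ∑ i, p i + a := by
  simp [strip, Fin.forall_fin_succ]

noncomputable def hP (N a : ℕ) : MvPolynomial (Fin N) ℤ := ∑ b ∈ Finset.piAntidiag univ a, mon b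

lemma strip_raw {K : ℕ} {l : Fin (K+1) → ℕ} (hl : StrictAnti l) (a : ℕ) :
    ∑ m ∈ Fintype.piFinset (fun j => Ico (l j) (l 0 + a + 1)), alt m =
    ∑ m ∈ Fintype.piFinset (Fin.cases (Ico (l 0) (l 0 + a + 1))
      (fun j : Fin K => Ico (l j.succ) (l j.castSucc)) : Fin (K+1) → Finset ℕ), alt m := by
  rw [← det_sum_X, ← det_sum_X]
  apply Matrix.det_eq_of_forall_row_eq_smul_add_pred (fun _ => 1)
  · intro j; simp
  · intro i j
    simp only [Matrix.of_apply, Fin.cases_succ, one_mul]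
    rw [Finset.sum_Ico_consecutive]
    · exact (hl (Fin.castSucc_lt_succ (i := i))).le
    · have := hl.antitone (Fin.zero_le i.castSucc); omega

lemma hcomp {N : ℕ} (s : Finset (Fin N → ℕ)) (D : ℕ) :
    homogeneousComponent D (∑ m ∈ s, alt m) = ∑ m ∈ s.filter (fun m => ∑ i, m i = D), alt m := by
  rw [map_sum, Finset.sum_filter]
  refine Finset.sum_congr rfl fun m _ => ?_
  rw [homogeneousComponent_of_mem (alt_homog m)]
  simp [eq_comm]

lemma sum_sh {N : ℕ} (p : Fin N → ℕ) : ∑ i, sh p i = ∑ i, p i + ∑ i : Fin N, (N - 1 - (i:ℕ)) := by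
  simp [sh, Finset.sum_add_distrib]

lemma pieri_h {K : ℕ} {p : Fin (K+1) → ℕ} (hp : Antitone p) (a : ℕ) :
    hP (K+1) a * alt (sh p) = ∑ q ∈ strip p a, alt (sh q) := by
  have h := congrArg (homogeneousComponent (∑ i, sh p i + a)) (strip_raw (sh_strictAnti hp) a)
  rw [hcomp, hcomp] at h
  rw [hP, sum_mul_alt]
  · trans
    · trans
      swap
      · exact h
      · refine Finset.sum_bij' (fun b _ => sh p + b) (fun m _ => m - sh p) ?_ ?_ ?_ ?_ ?_
        · intro b hb
          simp only [mem_piAntidiag, mem_filter, Fintype.mem_piFinset, mem_Ico, Pi.add_apply,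
            Finset.sum_add_distrib] at hb ⊢
          refine ⟨fun j => ⟨by omega, ?_⟩, by rw [hb.1]⟩
          have h1 := (sh_strictAnti hp).antitone (Fin.zero_le j)
          have h2 : b j ≤ ∑ i, b i := Finset.single_le_sum (fun _ _ => Nat.zero_le _) (mem_univ j)
          have h3 : ∑ i, b i = a := hb.1
          omega
        · intro m hm
          simp only [mem_piAntidiag, mem_filter, Fintype.mem_piFinset, mem_Ico, Pi.sub_apply] at hm ⊢
          refine ⟨?_, by simp⟩
          have : ∑ i, m i = ∑ i, (m i - sh p i) + ∑ i, sh p i := by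
            rw [← Finset.sum_add_distrib]
            exact Finset.sum_congr rfl fun i _ => by have := (hm.1 i).1; omega
          omega
        · intro b _; simp
        · intro m hm
          simp only [mem_filter, Fintype.mem_piFinset, mem_Ico] at hm
          funext i
          have := (hm.1 i).1
          simp; omega
        · intro b _; rfl
    · symm
      refine Finset.sum_bij' (fun q _ => sh q) (fun m _ => fun j => m j - (K - j)) ?_ ?_ ?_ ?_ ?_
      · intro q hq
        rw [mem_strip] at hq
        simp only [mem_filter, Fintype.mem_piFinset, Fin.forall_fin_succ, Fin.cases_zero,
          Fin.cases_succ, mem_Ico, sum_sh]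
        refine ⟨⟨?_, ?_⟩, by omega⟩
        · simp [sh]; omega
        · intro j; have := hq.1.2 j
          have := j.2
          simp [sh]; omega
      · intro m hm
        rw [mem_strip]
        simp only [mem_filter, Fintype.mem_piFinset, Fin.forall_fin_succ, Fin.cases_zero,
          Fin.cases_succ, mem_Ico] at hm
        have hge : ∀ j : Fin (K+1), K - (j:ℕ) ≤ m j := by
          intro j
          refine Fin.cases ?_ (fun j => ?_) j
          · have := hm.1.1; simp [sh] at this ⊢; omega
          · have := hm.1.2 j; simp [sh] at this ⊢; omega
        refine ⟨⟨?_, ?_⟩, ?_⟩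
        · have := hm.1.1; simp [sh] at this ⊢; omega
        · intro j
          have h1 := hm.1.2 j
          have h2 := j.2
          simp [sh] at h1 ⊢
          omega
        · have h1 : ∑ i, m i = ∑ i, (m i - (K - (i:ℕ))) + ∑ i : Fin (K+1), (K + 1 - 1 - (i:ℕ)) := by
            rw [← Finset.sum_add_distrib]
            exact Finset.sum_congr rfl fun i _ => by have := hge i; omega
          have h2 := hm.2
          rw [sum_sh] at h2
          omega
      · intro q _; funext j; simp [sh]
      · intro m hm
        simp only [mem_filter, Fintype.mem_piFinset, Fin.forall_fin_succ, Fin.cases_zero,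
          Fin.cases_succ, mem_Ico] at hm
        funext j
        refine Fin.cases ?_ (fun j => ?_) j
        · have := hm.1.1; simp [sh] at this ⊢; omega
        · have := hm.1.2 j; simp [sh] at this ⊢; omega
      · intro q _; rfl
  · intro σ b hb
    simp only [mem_piAntidiag] at hb ⊢
    refine ⟨?_, by simp⟩
    rw [← hb.1]; exact Equiv.sum_comp σ b

def ind {N : ℕ} (S : Finset (Fin N)) : Fin N → ℕ := fun j => if j ∈ S then 1 else 0

noncomputable def eP (N b : ℕ) : MvPolynomial (Fin N) ℤ :=
  ∑ v ∈ (Finset.powersetCard b (univ : Finset (Fin N))).image ind, mon v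

lemma ind_inj {N : ℕ} : Function.Injective (ind : Finset (Fin N) → _) := by
  intro S T h
  ext j
  have := congrFun h j
  simp only [ind] at this
  by_cases h1 : j ∈ S <;> by_cases h2 : j ∈ T <;> simp_all

open scoped Classical in
lemma pieri_e {N : ℕ} {p : Fin N → ℕ} (hp : Antitone p) (b : ℕ) :
    eP N b * alt (sh p) = ∑ S ∈ (Finset.powersetCard b (univ : Finset (Fin N))).filter
      (fun S => Antitone (p + ind S)), alt (sh (p + ind S)) := by
  rw [eP, sum_mul_alt]
  · rw [Finset.sum_image (fun _ _ _ _ h => ind_inj h), Finset.sum_filter]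
    refine Finset.sum_congr rfl fun S _ => ?_
    have e : sh p + ind S = sh (p + ind S) := by funext j; simp [sh]; omega
    rw [e]
    split_ifs with h
    · rfl
    · cases N with
      | zero => exact absurd (fun i => i.elim0) h
      | succ K =>
        rw [Fin.antitone_iff_succ_le] at h
        push Not at h
        obtain ⟨i, hi⟩ := h
        have h1 := hp (Fin.castSucc_lt_succ (i := i)).le
        apply alt_zero (i := i.castSucc) (j := i.succ)
        · exact (Fin.castSucc_lt_succ (i := i)).ne
        · have := i.2
          simp only [sh, Pi.add_apply, ind, Fin.val_castSucc, Fin.val_succ] at hi ⊢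
          split_ifs at hi ⊢ <;> omega
  · intro σ v hv
    simp only [mem_image, mem_powersetCard] at hv ⊢
    obtain ⟨S, hS, rfl⟩ := hv
    refine ⟨S.map σ.symm.toEmbedding, ⟨subset_univ _, by simp [hS.2]⟩, ?_⟩
    funext j
    simp [ind, Finset.mem_map_equiv]

lemma det_row_succ {n : ℕ} {R : Type*} [CommRing R] {A B : Matrix (Fin (n+1)) (Fin (n+1)) R}
    (c : Fin n → R) (hl : ∀ j, A (Fin.last n) j = B (Fin.last n) j)
    (hs : ∀ (i : Fin n) j, A i.castSucc j = B i.castSucc j + c i * A i.succ j) :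
    A.det = B.det := by
  rw [← Matrix.det_submatrix_equiv_self Fin.revPerm A, ← Matrix.det_submatrix_equiv_self Fin.revPerm B]
  apply Matrix.det_eq_of_forall_row_eq_smul_add_pred (fun i => c i.rev)
  · intro j; simp [hl]
  · intro i j
    simp [Fin.rev_succ, Fin.rev_castSucc, hs]

lemma geom_aux {R : Type*} [CommRing R] (x y : R) {a b : ℕ} (h : a < b) :
    x ^ b = (x - y) * (∑ m ∈ Ico a b, y ^ (b - 1 - m) * x ^ m) + y ^ (b - a) * x ^ a := by
  obtain ⟨d, rfl⟩ : ∃ d, b = a + d := ⟨b - a, by omega⟩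
  rw [Finset.sum_Ico_eq_sum_range]
  have e : ∑ k ∈ range (a + d - a), y ^ (a + d - 1 - (a + k)) * x ^ (a + k) =
      x ^ a * ∑ k ∈ range d, x ^ k * y ^ (d - 1 - k) := by
    rw [Finset.mul_sum, Nat.add_sub_cancel_left]
    refine Finset.sum_congr rfl fun k hk => ?_
    have : a + d - 1 - (a + k) = d - 1 - k := by omega
    rw [this]; ring
  rw [e, Nat.add_sub_cancel_left]
  have := Commute.geom_sum₂_mul (Commute.all x y) d
  linear_combination x ^ a * (-this)

lemma alt_branch {N : ℕ} {l : Fin (N+1) → ℕ} (hl : StrictAnti l) :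
    alt l = (∏ i : Fin N, ((X i.castSucc : MvPolynomial (Fin (N+1)) ℤ) - X (Fin.last N))) *
      ∑ m ∈ Fintype.piFinset (fun j : Fin N => Ico (l j.succ) (l j.castSucc)),
        X (Fin.last N) ^ (l (Fin.last N) + ∑ j : Fin N, (l j.castSucc - 1 - m j)) *
          rename Fin.castSucc (alt m) := by
  have hlt : ∀ j : Fin N, l j.succ < l j.castSucc := fun j => hl (Fin.castSucc_lt_succ (i := j))
  set y : MvPolynomial (Fin (N+1)) ℤ := X (Fin.last N) with hy
  let B : Matrix (Fin (N+1)) (Fin (N+1)) (MvPolynomial (Fin (N+1)) ℤ) :=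
    Matrix.of (Fin.lastCases (fun i => X i ^ l (Fin.last N))
      (fun j i => (X i - y) * (∑ m ∈ Ico (l j.succ) (l j.castSucc), y ^ (l j.castSucc - 1 - m) * X i ^ m)))
  have h1 : alt l = B.det := by
    apply det_row_succ (fun j => y ^ (l j.castSucc - l j.succ))
    · intro j; simp [B]
    · intro i j
      simp only [B, Matrix.of_apply, Fin.lastCases_castSucc]
      exact geom_aux _ _ (hlt i)
  rw [h1, Matrix.det_succ_column B (Fin.last N), Fin.sum_univ_castSucc]
  have h2 : ∀ j : Fin N, B j.castSucc (Fin.last N) = 0 := by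
    intro j; simp [B, hy]
  have h3 : B (Fin.last N) (Fin.last N) = y ^ l (Fin.last N) := by simp [B, hy]
  simp only [h2, h3, mul_zero, zero_mul, Finset.sum_const_zero, zero_add]
  have h4 : B.submatrix (Fin.last N).succAbove (Fin.last N).succAbove =
     Matrix.of fun j i : Fin N => (X i.castSucc - y) * (Matrix.of fun j i : Fin N => ∑ m ∈ Ico (l j.succ) (l j.castSucc),
        y ^ (l j.castSucc - 1 - m) * X i.castSucc ^ m) j i := by
    ext1 j i
    simp [B]
  rw [h4, Matrix.det_mul_row, det_sum]
  have h5 : ((-1 : MvPolynomial (Fin (N+1)) ℤ)) ^ ((Fin.last N : ℕ) + (Fin.last N : ℕ)) = 1 :=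
    Even.neg_one_pow ⟨_, rfl⟩
  rw [h5, one_mul, mul_left_comm, Finset.mul_sum]
  congr 1
  refine Finset.sum_congr rfl fun m _ => ?_
  have h6 : rename Fin.castSucc (alt m) =
      Matrix.det (Matrix.of fun j i : Fin N => (X i.castSucc : MvPolynomial (Fin (N+1)) ℤ) ^ m j) := by
    rw [alt, AlgHom.map_det]
    congr 1
    ext1 j i
    simp
  have h7 := Matrix.det_mul_column (fun j => y ^ (l j.castSucc - 1 - m j))
    (Matrix.of fun j i : Fin N => (X i.castSucc : MvPolynomial (Fin (N+1)) ℤ) ^ m j)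
  simp only [Matrix.of_apply] at h7
  rw [h7, h6, pow_add, Finset.prod_pow_eq_pow_sum]
  ring

/-- Cells of the diagram with row lengths p. -/
def cells {N : ℕ} (p : Fin N → ℕ) : Finset (ℕ × ℕ) :=
  (univ.sigma fun i => range (p i)).map
    ⟨fun x : (_ : Fin N) × ℕ => ((x.1 : ℕ), x.2), by
      rintro ⟨a, b⟩ ⟨c, d⟩ h
      simp only [Prod.mk.injEq] at h
      obtain ⟨h1, rfl⟩ := h
      have := Fin.ext h1
      subst this; rfl⟩

lemma mem_cells {N : ℕ} {p : Fin N → ℕ} {a b : ℕ} :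
    (a, b) ∈ cells p ↔ ∃ h : a < N, b < p ⟨a, h⟩ := by
  simp only [cells, mem_map, mem_sigma, mem_univ, true_and, mem_range,
    Function.Embedding.coeFn_mk]
  constructor
  · rintro ⟨⟨i, j⟩, h, rfl, rfl⟩
    exact ⟨i.2, h⟩
  · rintro ⟨h, hb⟩
    exact ⟨⟨⟨a, h⟩, b⟩, hb, rfl⟩

lemma card_cells {N : ℕ} (p : Fin N → ℕ) : (cells p).card = ∑ i, p i := by
  simp [cells]

noncomputable def Sc {N : ℕ} (p : Fin N → ℕ) : MvPolynomial (Fin N) ℤ := cellSchur N (cells p)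

lemma row_mono {N M : ℕ} {p : Fin N → ℕ} {T : cells p → Fin M} (hT : IsSemistandardOn (cells p) T)
    (i j k : ℕ) (h1 : (i, j) ∈ cells p) (h2 : (i, j + k) ∈ cells p) :
    T ⟨(i, j), h1⟩ ≤ T ⟨(i, j + k), h2⟩ := by
  induction k with
  | zero => exact le_rfl
  | succ k ih =>
    have h3 : (i, j + k) ∈ cells p := by
      rw [mem_cells] at h2 ⊢
      obtain ⟨h, h'⟩ := h2
      exact ⟨h, by omega⟩
    exact (ih h3).trans (hT.1 i (j + k) h3 h2)

lemma col_ge {N M : ℕ} {p : Fin N → ℕ} (hp : Antitone p) {T : cells p → Fin M}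
    (hT : IsSemistandardOn (cells p) T) (i j : ℕ) (h1 : (i, j) ∈ cells p) :
    i ≤ (T ⟨(i, j), h1⟩ : ℕ) := by
  induction i with
  | zero => omega
  | succ i ih =>
    have h3 : (i, j) ∈ cells p := by
      rw [mem_cells] at h1 ⊢
      obtain ⟨h, h'⟩ := h1
      refine ⟨by omega, lt_of_lt_of_le h' (hp ?_)⟩
      simp [Fin.le_def]
    have h4 := ih h3
    have h5 : (T ⟨(i, j), h3⟩ : ℕ) < T ⟨(i + 1, j), h1⟩ := hT.2 i j h3 h1
    omega

/-- interlacing row length sequences -/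
def inter {N : ℕ} (p : Fin (N+1) → ℕ) : Finset (Fin N → ℕ) :=
  Fintype.piFinset (fun j : Fin N => Icc (p j.succ) (p j.castSucc))

lemma mem_inter {N : ℕ} {p : Fin (N+1) → ℕ} {q : Fin N → ℕ} :
    q ∈ inter p ↔ ∀ j : Fin N, p j.succ ≤ q j ∧ q j ≤ p j.castSucc := by
  simp [inter]

open scoped Classical in
noncomputable def ext {N : ℕ} (p : Fin (N+1) → ℕ) (x : (q : Fin N → ℕ) × (cells q → Fin N)) :
    cells p → Fin (N+1) :=
  fun c => if h : c.1 ∈ cells x.1 then (x.2 ⟨c.1, h⟩).castSucc else Fin.last N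

lemma inter_subset {N : ℕ} {p : Fin (N+1) → ℕ} {q : Fin N → ℕ} (hq : q ∈ inter p) :
    cells q ⊆ cells p := by
  rintro ⟨a, b⟩ h
  rw [mem_cells] at h ⊢
  obtain ⟨h, hb⟩ := h
  exact ⟨by omega, lt_of_lt_of_le hb (mem_inter.1 hq ⟨a, h⟩).2⟩

open scoped Classical in
lemma schur_branch {N : ℕ} {p : Fin (N+1) → ℕ} (hp : Antitone p) :
    Sc p = ∑ q ∈ inter p, X (Fin.last N) ^ (∑ i, p i - ∑ i, q i) * rename Fin.castSucc (Sc q) := by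
  simp only [Sc, cellSchur, map_sum, map_prod, rename_X, Finset.mul_sum]
  rw [Finset.sum_sigma']
  symm
  refine Finset.sum_bij (fun x _ => ext p x) ?_ ?_ ?_ ?_
  · rintro ⟨q, T⟩ hx
    simp only [mem_sigma, mem_filter, mem_univ, true_and] at hx ⊢
    obtain ⟨hq, hT⟩ := hx
    rw [mem_inter] at hq
    constructor
    · intro i j h1 h2
      by_cases h : (i, j + 1) ∈ cells q
      · have h' : (i, j) ∈ cells q := by
          rw [mem_cells] at h ⊢
          obtain ⟨h, hb⟩ := h
          exact ⟨h, by omega⟩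
        simp only [ext, h, h', dif_pos]
        exact hT.1 i j h' h
      · simp only [ext, h, dif_neg, not_false_eq_true]
        exact Fin.le_last _
    · intro i j h1 h2
      have h' : (i, j) ∈ cells q := by
        rw [mem_cells] at h2 ⊢
        obtain ⟨h, hb⟩ := h2
        exact ⟨by omega, lt_of_lt_of_le hb (hq ⟨i, by omega⟩).1⟩
      by_cases h : (i + 1, j) ∈ cells q
      · simp only [ext, h, h', dif_pos]
        exact hT.2 i j h' h
      · simp only [ext, h, h', dif_pos, dif_neg, not_false_eq_true]
        exact Fin.castSucc_lt_last _
  · rintro ⟨q, T⟩ hx ⟨q₂, T₂⟩ hx' he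
    simp only [mem_sigma, mem_filter, mem_univ, true_and] at hx hx'
    have hs := inter_subset hx.1
    have hs' := inter_subset hx'.1
    have key : ∀ c (hc : c ∈ cells p), c ∈ cells q ↔ c ∈ cells q₂ := by
      intro c hc
      have := congrFun he ⟨c, hc⟩
      simp only [ext] at this
      split_ifs at this with h1 h2 h2
      · simp [h1, h2]
      · exact absurd this (Fin.castSucc_lt_last _).ne
      · exact absurd this.symm (Fin.castSucc_lt_last _).ne
      · simp [h1, h2]
    have hcc : ∀ c, c ∈ cells q ↔ c ∈ cells q₂ := fun c =>
      ⟨fun h => (key c (hs h)).1 h, fun h => (key c (hs' h)).2 h⟩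
    have hqq : q = q₂ := by
      funext i
      have h1 := hcc (i, q i)
      have h2 := hcc (i, q₂ i)
      simp only [mem_cells, Fin.eta, i.2, exists_true_left, lt_self_iff_false, false_iff, iff_false] at h1 h2
      omega
    subst hqq
    congr 1
    funext ⟨c, hc⟩
    have := congrFun he ⟨c, hs hc⟩
    simp only [ext, hc, dif_pos] at this
    exact Fin.castSucc_injective _ this
  · intro T hT
    simp only [mem_filter, mem_univ, true_and] at hT
    let q : Fin N → ℕ := fun i => ((range (p i.castSucc)).filter
      (fun j => ∃ h : ((i : ℕ), j) ∈ cells p, T ⟨_, h⟩ < Fin.last N)).card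
    have hrow : ∀ (i : Fin N) (j : ℕ), j < q i ↔ ∃ h : ((i : ℕ), j) ∈ cells p, T ⟨_, h⟩ < Fin.last N := by
      intro i j
      set F := (range (p i.castSucc)).filter
        (fun j => ∃ h : ((i : ℕ), j) ∈ cells p, T ⟨_, h⟩ < Fin.last N) with hF
      have hmem : ∀ j, j ∈ F ↔ ∃ h : ((i : ℕ), j) ∈ cells p, T ⟨_, h⟩ < Fin.last N := by
        intro j
        simp only [hF, mem_filter, mem_range, and_iff_right_iff_imp]
        rintro ⟨h, -⟩
        obtain ⟨_, h⟩ := mem_cells.1 h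
        exact h
      have hdown : ∀ j k, j ≤ k → k ∈ F → j ∈ F := by
        intro j k hjk hk
        rw [hmem] at hk ⊢
        obtain ⟨h, hk⟩ := hk
        obtain ⟨d, rfl⟩ := Nat.exists_eq_add_of_le hjk
        have h3 : ((i:ℕ), j) ∈ cells p := by
          rw [mem_cells] at h ⊢
          obtain ⟨h, h'⟩ := h
          exact ⟨h, by omega⟩
        exact ⟨h3, (row_mono hT i j d h3 h).trans_lt hk⟩
      rw [← hmem]
      change j < F.card ↔ _
      constructor
      · intro hj
        by_contra hn
        have : F ⊆ range j := by
          intro k hk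
          rw [mem_range]
          by_contra hc
          exact hn (hdown j k (by omega) hk)
        have := Finset.card_le_card this
        rw [card_range] at this
        omega
      · intro hj
        have : range (j+1) ⊆ F := by
          intro k hk
          rw [mem_range] at hk
          exact hdown k j (by omega) hj
        have := Finset.card_le_card this
        rw [card_range] at this
        omega
    have hcell : ∀ c (h : c ∈ cells p), c ∈ cells q ↔ T ⟨c, h⟩ < Fin.last N := by
      rintro ⟨a, b⟩ h
      rw [mem_cells]
      constructor
      · rintro ⟨ha, hb⟩
        obtain ⟨_, h'⟩ := (hrow ⟨a, ha⟩ b).1 hb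
        exact h'
      · intro hlt
        have h1 := col_ge hp hT a b h
        have h2 : (T ⟨(a, b), h⟩ : ℕ) < N := hlt
        exact ⟨by omega, (hrow ⟨a, by omega⟩ b).2 ⟨h, hlt⟩⟩
    have hq : q ∈ inter p := by
      rw [mem_inter]
      intro j
      constructor
      · by_contra! hc
        have h2 : ((j : ℕ) + 1, q j) ∈ cells p := mem_cells.2 ⟨by omega, hc⟩
        have h1 : ((j : ℕ), q j) ∈ cells p :=
          mem_cells.2 ⟨by omega, hc.trans_le (hp (Fin.castSucc_lt_succ (i := j)).le)⟩
        have := (hrow j (q j)).2 ⟨h1, (hT.2 _ _ h1 h2).trans_le (Fin.le_last _)⟩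
        omega
      · by_contra! hc
        obtain ⟨h, _⟩ := (hrow j _).1 hc
        obtain ⟨_, h⟩ := mem_cells.1 h
        exact absurd h (lt_irrefl _)
    have hs := inter_subset hq
    refine ⟨⟨q, fun c => (T ⟨c.1, hs c.2⟩).castLT ((hcell c.1 (hs c.2)).1 c.2)⟩, ?_, ?_⟩
    · simp only [mem_sigma, mem_filter, mem_univ, true_and]
      refine ⟨hq, ?_, ?_⟩
      · intro i j h1 h2
        exact hT.1 i j (hs h1) (hs h2)
      · intro i j h1 h2
        exact hT.2 i j (hs h1) (hs h2)
    · funext ⟨c, hc⟩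
      simp only [ext]
      split_ifs with h
      · simp
      · rw [hcell c hc] at h
        exact (le_antisymm (Fin.le_last _) (not_lt.1 h)).symm
  · rintro ⟨q, T⟩ hx
    simp only [mem_sigma, mem_filter, mem_univ, true_and] at hx
    have hs := inter_subset hx.1
    let f : ℕ × ℕ → MvPolynomial (Fin (N+1)) ℤ := fun c =>
      X (if h : c ∈ cells q then (T ⟨c, h⟩).castSucc else Fin.last N)
    have e1 : ∏ c : cells p, X (R := ℤ) (ext p ⟨q, T⟩ c) = ∏ c ∈ cells p, f c := by
      rw [← Finset.prod_coe_sort (cells p) f]; rfl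
    have e2 : ∏ c : cells q, X (R := ℤ) (T c).castSucc = ∏ c ∈ cells q, f c := by
      rw [← Finset.prod_coe_sort (cells q) f]
      refine Finset.prod_congr rfl fun c _ => ?_
      simp [f]
    have e3 : ∏ c ∈ cells p \ cells q, f c = X (Fin.last N) ^ (∑ i, p i - ∑ i, q i) := by
      rw [← card_cells, ← card_cells, ← Finset.card_sdiff_of_subset hs]
      apply Finset.prod_eq_pow_card
      intro c hc
      simp only [mem_sdiff] at hc
      simp [f, hc.2]
    change _ * ∏ c : cells q, X (R := ℤ) (T c).castSucc = _
    rw [e1, e2, ← e3, Finset.prod_sdiff hs]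

lemma inter_antitone {N : ℕ} {p : Fin (N+1) → ℕ} {q : Fin N → ℕ} (hq : q ∈ inter p) :
    Antitone q := by
  cases N with
  | zero => exact fun i => i.elim0
  | succ K =>
    rw [Fin.antitone_iff_succ_le]
    intro i
    rw [mem_inter] at hq
    have h1 := (hq i.succ).2
    have h2 := (hq i.castSucc).1
    rw [Fin.succ_castSucc] at h2
    exact h1.trans h2

lemma alt_branch' {N : ℕ} {p : Fin (N+1) → ℕ} (hp : Antitone p) :
    alt (sh p) = (∏ i : Fin N, ((X i.castSucc : MvPolynomial (Fin (N+1)) ℤ) - X (Fin.last N))) *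
      ∑ q ∈ inter p, X (Fin.last N) ^ (∑ i, p i - ∑ i, q i) * rename Fin.castSucc (alt (sh q)) := by
  rw [alt_branch (sh_strictAnti hp)]
  congr 1
  symm
  refine Finset.sum_bij' (fun q _ => sh q) (fun m _ => fun j => m j - (N - 1 - j)) ?_ ?_ ?_ ?_ ?_
  · intro q hq
    rw [mem_inter] at hq
    simp only [Fintype.mem_piFinset, mem_Ico]
    intro j
    have := hq j
    have := j.2
    simp [sh]; omega
  · intro m hm
    rw [mem_inter]
    simp only [Fintype.mem_piFinset, mem_Ico] at hm
    intro j
    have h1 := hm j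
    have := j.2
    simp [sh] at h1 ⊢; omega
  · intro q _; funext j; simp [sh]
  · intro m hm
    simp only [Fintype.mem_piFinset, mem_Ico] at hm
    funext j
    have h1 := hm j
    have := j.2
    simp [sh] at h1 ⊢; omega
  · intro q hq
    rw [mem_inter] at hq
    congr 2
    rw [Fin.sum_univ_castSucc]
    have : ∑ j : Fin N, p j.castSucc = ∑ j : Fin N, (sh p j.castSucc - 1 - sh q j) + ∑ j, q j := by
      rw [← Finset.sum_add_distrib]
      refine Finset.sum_congr rfl fun j _ => ?_
      have := hq j
      have := j.2
      simp [sh]; omega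
    have h2 : sh p (Fin.last N) = p (Fin.last N) := by simp [sh]
    omega

theorem bialt {N : ℕ} {p : Fin N → ℕ} (hp : Antitone p) :
    alt (sh p) = alt (sh (0 : Fin N → ℕ)) * Sc p := by
  classical
  induction N with
  | zero =>
    have : Sc p = 1 := by
      have he : cells p = ∅ := by
        apply Finset.eq_empty_of_forall_notMem
        rintro ⟨a, b⟩ h
        obtain ⟨h, _⟩ := mem_cells.1 h
        omega
      rw [Sc, he, cellSchur]
      rw [Finset.filter_true_of_mem]
      · simp
      · intro T _
        constructor <;> intro i j h1 <;> simp at h1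
    rw [this]
    simp [alt]
  | succ N ih =>
    have h0 : inter (0 : Fin (N+1) → ℕ) = {0} := by
      ext q
      rw [mem_inter, mem_singleton]
      constructor
      · intro h; funext j; have := h j; simp at this; simpa using this
      · rintro rfl; simp
    have e0 := alt_branch' (p := (0 : Fin (N+1) → ℕ)) (fun _ _ _ => le_rfl)
    rw [h0, Finset.sum_singleton] at e0
    simp only [Pi.zero_apply, Finset.sum_const_zero, Nat.sub_self, pow_zero, one_mul] at e0
    rw [alt_branch' hp, schur_branch hp, e0, mul_assoc]
    refine congrArg _ ?_
    rw [Finset.mul_sum]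
    refine Finset.sum_congr rfl fun q hq => ?_
    rw [ih (inter_antitone hq), map_mul]
    ring

def hook {N : ℕ} (p : Fin N → ℕ) (r c : ℕ) : Prop := ∀ h : r < N, p ⟨r, h⟩ ≤ c

noncomputable def G (N R C : ℕ) : Submodule ℤ (MvPolynomial (Fin N) ℤ) :=
  Submodule.span ℤ {f | ∃ p : Fin N → ℕ, Antitone p ∧ hook p R C ∧ f = alt (sh p)}

noncomputable def Mult (N r c : ℕ) : Submodule ℤ (MvPolynomial (Fin N) ℤ) where
  carrier := {f | ∀ R C, ∀ g ∈ G N R C, f * g ∈ G N (R + r) (C + c)}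
  add_mem' := by
    intro a b ha hb R C g hg
    rw [add_mul]
    exact add_mem (ha R C g hg) (hb R C g hg)
  zero_mem' := by
    intro R C g _
    rw [zero_mul]; exact zero_mem _
  smul_mem' := by
    intro z a ha R C g hg
    rw [smul_mul_assoc]
    exact Submodule.smul_mem _ _ (ha R C g hg)

lemma mem_Mult {N r c : ℕ} {f : MvPolynomial (Fin N) ℤ} :
    f ∈ Mult N r c ↔ ∀ R C, ∀ g ∈ G N R C, f * g ∈ G N (R + r) (C + c) := Iff.rfl

lemma mem_Mult_of {N r c : ℕ} {f : MvPolynomial (Fin N) ℤ}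
    (h : ∀ R C (p : Fin N → ℕ), Antitone p → hook p R C → f * alt (sh p) ∈ G N (R + r) (C + c)) :
    f ∈ Mult N r c := by
  intro R C g hg
  induction hg using Submodule.span_induction with
  | mem x hx => obtain ⟨p, hp, hh, rfl⟩ := hx; exact h R C p hp hh
  | zero => rw [mul_zero]; exact zero_mem _
  | add x y _ _ hx hy => rw [mul_add]; exact add_mem hx hy
  | smul a x _ hx => rw [mul_smul_comm]; exact Submodule.smul_mem _ _ hx

lemma Mult_mul {N r c r₂ c₂ : ℕ} {f g : MvPolynomial (Fin N) ℤ} (hf : f ∈ Mult N r c)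
    (hg : g ∈ Mult N r₂ c₂) : f * g ∈ Mult N (r₂ + r) (c₂ + c) := by
  intro R C x hx
  rw [mul_assoc, ← add_assoc, ← add_assoc]
  exact hf _ _ _ (hg _ _ _ hx)

lemma one_Mult {N r c : ℕ} (hr : r = 0) (hc : c = 0) : (1 : MvPolynomial (Fin N) ℤ) ∈ Mult N r c := by
  subst hr hc
  intro R C x hx
  simpa using hx

lemma strip_antitone {K : ℕ} {p q : Fin (K+1) → ℕ} {a : ℕ} (hq : q ∈ strip p a) : Antitone q := by
  rw [mem_strip] at hq
  rw [Fin.antitone_iff_succ_le]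
  intro i
  refine (hq.1.2 i).2.trans ?_
  obtain h | ⟨j, h⟩ := Fin.eq_zero_or_eq_succ i.castSucc
  · rw [h]; exact hq.1.1.1
  · rw [h]; exact (hq.1.2 j).1

lemma strip_hook {K : ℕ} {p q : Fin (K+1) → ℕ} {a R C : ℕ} (hq : q ∈ strip p a) (hp : hook p R C) :
    hook q (R + 1) C := by
  rw [mem_strip] at hq
  intro h
  have h1 := hp (by omega)
  exact ((hq.1.2 ⟨R, by omega⟩).2).trans h1

lemma hP_Mult (K a : ℕ) : hP (K+1) a ∈ Mult (K+1) 1 0 := by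
  apply mem_Mult_of
  intro R C p hp hh
  rw [pieri_h hp]
  refine Submodule.sum_mem _ fun q hq => Submodule.subset_span ⟨q, strip_antitone hq, ?_, rfl⟩
  exact strip_hook hq hh

lemma eP_Mult (N b : ℕ) : eP N b ∈ Mult N 0 1 := by
  classical
  apply mem_Mult_of
  intro R C p hp hh
  rw [pieri_e hp]
  refine Submodule.sum_mem _ fun S hS => Submodule.subset_span ⟨p + ind S, (mem_filter.1 hS).2, ?_, rfl⟩
  intro h
  have := hh h
  simp only [Pi.add_apply, ind]
  simp only [add_zero] at *
  split_ifs <;> omega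

lemma rho_anti {N : ℕ} : Antitone (0 : Fin N → ℕ) := fun _ _ _ => le_rfl

lemma pieri_h' {K : ℕ} {p : Fin (K+1) → ℕ} (hp : Antitone p) (a : ℕ) :
    hP (K+1) a * Sc p = ∑ q ∈ strip p a, Sc q := by
  apply mul_left_cancel₀ (alt_ne_zero (sh_strictAnti (rho_anti (N := K+1))))
  rw [mul_left_comm, ← bialt hp, pieri_h hp, Finset.mul_sum]
  exact Finset.sum_congr rfl fun q hq => bialt (strip_antitone hq)

open scoped Classical in
lemma pieri_e' {N : ℕ} {p : Fin N → ℕ} (hp : Antitone p) (b : ℕ) :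
    eP N b * Sc p = ∑ S ∈ (Finset.powersetCard b (univ : Finset (Fin N))).filter
      (fun S => Antitone (p + ind S)), Sc (p + ind S) := by
  apply mul_left_cancel₀ (alt_ne_zero (sh_strictAnti (rho_anti (N := N))))
  rw [mul_left_comm, ← bialt hp, pieri_e hp, Finset.mul_sum]
  exact Finset.sum_congr rfl fun q hq => bialt (mem_filter.1 hq).2

lemma Sc_zero {N : ℕ} : Sc (0 : Fin N → ℕ) = 1 := by
  have := bialt (rho_anti (N := N))
  apply mul_left_cancel₀ (alt_ne_zero (sh_strictAnti (rho_anti (N := N))))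
  rw [← this, mul_one]

lemma Sc_Mult_col {K : ℕ} (c : ℕ) (p : Fin (K+1) → ℕ) (hp : Antitone p) (h : p 0 ≤ c) :
    Sc p ∈ Mult (K+1) 0 c := by
  classical
  induction c generalizing p with
  | zero =>
    have : p = 0 := by
      funext j
      have := hp (Fin.zero_le j)
      simp; omega
    rw [this, Sc_zero]
    exact one_Mult rfl rfl
  | succ c ih =>
    induction hd : K + 1 - (univ.filter (fun j => 0 < p j)).card using Nat.strong_induction_on
      generalizing p with
    | _ d ih2 =>
      set P := univ.filter (fun j => 0 < p j) with hP
      let t : Fin (K+1) → ℕ := fun j => p j - 1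
      have ht : Antitone t := fun i j hij => Nat.sub_le_sub_right (hp hij) 1
      have h1 := Mult_mul (eP_Mult (K+1) P.card) (ih t ht (by simp only [t]; omega))
      rw [pieri_e' ht] at h1
      have hpt : p = t + ind P := by
        funext j
        simp only [t, ind, hP, Pi.add_apply, mem_filter, mem_univ, true_and]
        split_ifs <;> omega
      have hmem : P ∈ (Finset.powersetCard P.card (univ : Finset (Fin (K+1)))).filter
          (fun S => Antitone (t + ind S)) := by
        simp only [mem_filter, mem_powersetCard, subset_univ, true_and]
        rw [← hpt]; exact hp
      rw [← Finset.add_sum_erase _ _ hmem, ← hpt] at h1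
      refine (Submodule.add_mem_iff_left _ (Submodule.sum_mem _ fun S hS => ?_)).1 h1
      simp only [mem_erase, mem_filter, mem_powersetCard, subset_univ, true_and] at hS
      obtain ⟨hne, hcard, hanti⟩ := hS
      refine ih2 _ ?_ (t + ind S) hanti ?_ rfl
      · have hns : ¬ S ⊆ P := fun hs => hne (Finset.eq_of_subset_of_card_le hs hcard.ge)
        obtain ⟨j, hjS, hjP⟩ := Finset.not_subset.1 hns
        have hj : 0 < (t + ind S) j := by simp [ind, hjS]
        have hpj : p j = 0 := by simpa [hP] using hjP
        have hsub : insert j P ⊆ univ.filter (fun j => 0 < (t + ind S) j) := by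
          intro i hi
          rw [mem_insert] at hi
          simp only [mem_filter, mem_univ, true_and]
          rcases hi with rfl | hi
          · exact hj
          · have hi' : 0 < p i := by simpa [hP] using hi
            have hij : i ≤ j := by
              by_contra hc
              have := hp (not_le.1 hc).le
              omega
            exact hj.trans_le (hanti hij)
        have h3 := Finset.card_le_card hsub
        rw [Finset.card_insert_of_notMem hjP] at h3
        have h4 : (univ.filter (fun j => 0 < (t + ind S) j)).card ≤ K + 1 := by
          simpa using Finset.card_le_univ (univ.filter (fun j => 0 < (t + ind S) j))
        omega
      · simp only [Pi.add_apply, t, ind]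
        split_ifs <;> omega

lemma Sc_Mult {K : ℕ} (r c : ℕ) (p : Fin (K+1) → ℕ) (hp : Antitone p) (h : hook p r c) :
    Sc p ∈ Mult (K+1) r c := by
  induction r generalizing p with
  | zero => exact Sc_Mult_col c p hp (h (by omega))
  | succ r ih =>
    induction hd : ∑ i, p i - p 0 using Nat.strong_induction_on generalizing p with
    | _ d ih2 =>
      let t : Fin (K+1) → ℕ := Fin.snoc (α := fun _ => ℕ) (fun j : Fin K => p j.succ) 0
      have t1 : ∀ j : Fin K, t j.castSucc = p j.succ := by intro j; simp [t]
      have t2 : t (Fin.last K) = 0 := by simp [t]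
      have tle : ∀ j, t j ≤ p j := by
        intro j
        refine Fin.lastCases ?_ (fun j => ?_) j
        · rw [t2]; omega
        · rw [t1]; exact hp (Fin.castSucc_lt_succ (i := j)).le
      have ht : Antitone t := by
        rw [Fin.antitone_iff_succ_le]
        intro i
        rw [t1]
        exact tle _
      have hsum : ∑ i, p i = ∑ i, t i + p 0 := by
        rw [Fin.sum_univ_succ, Fin.sum_univ_castSucc (f := t), t2]
        simp only [t1]; omega
      have hook_t : hook t r c := by
        intro hr
        by_cases hr' : r < K
        · have := t1 ⟨r, hr'⟩
          have h2 := h (by omega)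
          exact this.le.trans h2
        · have : (⟨r, hr⟩ : Fin (K+1)) = Fin.last K := by ext; simp; omega
          rw [this, t2]; omega
      have h1 := Mult_mul (hP_Mult K (p 0)) (ih t ht hook_t)
      rw [pieri_h' ht] at h1
      have hmem : p ∈ strip t (p 0) := by
        rw [mem_strip]
        refine ⟨⟨⟨tle 0, by omega⟩, fun j => ⟨tle _, (t1 j).ge⟩⟩, hsum⟩
      rw [← Finset.add_sum_erase _ _ hmem] at h1
      refine (Submodule.add_mem_iff_left _ (Submodule.sum_mem _ fun q hq => ?_)).1 h1
      rw [mem_erase] at hq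
      obtain ⟨hne, hq⟩ := hq
      have hq' := mem_strip.1 hq
      refine ih2 _ ?_ q (strip_antitone hq) (strip_hook hq hook_t) rfl
      have hs : ∑ i, q i = ∑ i, p i := by rw [hq'.2, hsum]
      have hle : ∀ j : Fin K, q j.succ ≤ p j.succ := fun j => (hq'.1.2 j).2.trans (t1 j).le
      have e1 := Fin.sum_univ_succ q
      have e2 := Fin.sum_univ_succ p
      have hlt : ∑ j : Fin K, q j.succ < ∑ j : Fin K, p j.succ := by
        refine lt_of_le_of_ne (Finset.sum_le_sum fun j _ => hle j) fun he => hne ?_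
        have h3 := (Finset.sum_eq_sum_iff_of_le (fun j _ => hle j)).1 he
        funext j
        refine Fin.cases ?_ (fun j => h3 j (mem_univ _)) j
        omega
      omega

/-- row lengths of a Young diagram -/
def rl (N : ℕ) (m : YoungDiagram) : Fin N → ℕ := fun i => m.rowLen i

lemma rl_anti (N : ℕ) (m : YoungDiagram) : Antitone (rl N m) := fun _ _ h => m.rowLen_anti _ _ h

lemma row_lt {N : ℕ} {m : YoungDiagram} (h : m.colLen 0 ≤ N) {a b : ℕ} (hm : (a, b) ∈ m) : a < N := by
  have h1 : (a, 0) ∈ m := m.up_left_mem le_rfl (Nat.zero_le b) hm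
  rw [YoungDiagram.mem_iff_lt_colLen] at h1
  omega

lemma cells_rl {N : ℕ} {m : YoungDiagram} (h : m.colLen 0 ≤ N) : cells (rl N m) = m.cells := by
  ext ⟨a, b⟩
  rw [mem_cells, YoungDiagram.mem_cells]
  simp only [rl]
  constructor
  · rintro ⟨_, hb⟩; exact YoungDiagram.mem_iff_lt_rowLen.2 hb
  · intro hm
    exact ⟨row_lt h hm, YoungDiagram.mem_iff_lt_rowLen.1 hm⟩

lemma Sc_rl {N : ℕ} {m : YoungDiagram} (h : m.colLen 0 ≤ N) : Sc (rl N m) = schurPoly N m := by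
  rw [Sc, schurPoly, cells_rl h]

lemma rl_inj {N : ℕ} {m m' : YoungDiagram} (h : m.colLen 0 ≤ N) (h' : m'.colLen 0 ≤ N)
    (he : rl N m = rl N m') : m = m' := by
  apply YoungDiagram.ext
  rw [← cells_rl h, ← cells_rl h', he]

lemma prod_Mult {N : ℕ} {ι : Type*} (s : Finset ι) (f : ι → MvPolynomial (Fin N) ℤ)
    (r c : ι → ℕ) (h : ∀ k ∈ s, f k ∈ Mult N (r k) (c k)) :
    ∏ k ∈ s, f k ∈ Mult N (∑ k ∈ s, r k) (∑ k ∈ s, c k) := by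
  classical
  induction s using Finset.induction_on with
  | empty => exact one_Mult rfl rfl
  | insert a s ha ih =>
    rw [Finset.prod_insert ha, Finset.sum_insert ha, Finset.sum_insert ha, mul_comm]
    exact Mult_mul (ih fun k hk => h k (mem_insert_of_mem hk)) (h a (mem_insert_self _ _))

lemma coeff_G {N R C : ℕ} {p : Fin N → ℕ} (hp : Antitone p) (hh : ¬ hook p R C)
    {f : MvPolynomial (Fin N) ℤ} (hf : f ∈ G N R C) :
    coeff (Finsupp.equivFunOnFinite.symm (sh p)) f = 0 := by
  induction hf using Submodule.span_induction with
  | mem x hx =>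
    obtain ⟨q, hq, hh', rfl⟩ := hx
    rw [coeff_alt (sh_strictAnti hp) (sh_strictAnti hq), if_neg]
    intro he
    exact hh (sh_inj he ▸ hh')
  | zero => simp
  | add x y _ _ hx hy => simp [hx, hy]
  | smul a x _ hx => rw [coeff_smul, hx, smul_zero]

lemma colLen_le_card (m : YoungDiagram) : m.colLen 0 ≤ m.cells.card := by
  rw [YoungDiagram.colLen_eq_card]
  exact Finset.card_le_card (Finset.filter_subset _ _)

theorem main {n : ℕ} (lam : YoungDiagram) (mu : Fin n → YoungDiagram)
    (N : ℕ) (hN : ∑ k, (mu k).cells.card ≤ N)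
    (co : YoungDiagram →₀ ℕ)
    (hrows : ∀ l ∈ co.support, l.colLen 0 ≤ N)
    (hexp : ∏ k, schurPoly N (mu k) = ∑ l ∈ co.support, (co l : ℤ) • schurPoly N l)
    (hne : co lam ≠ 0)
    (cr : Fin n → ℕ × ℕ) (hcr : ∀ k, ((cr k).2, (cr k).1) ∉ mu k) :
    (∑ k, (cr k).2, ∑ k, (cr k).1) ∉ lam := by
  intro hmem
  have hlam : lam ∈ co.support := Finsupp.mem_support_iff.2 hne
  have hR := row_lt (hrows lam hlam) hmem
  obtain ⟨K, rfl⟩ : ∃ K, N = K + 1 := ⟨N - 1, by omega⟩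
  have hmu : ∀ k, (mu k).colLen 0 ≤ K + 1 := fun k =>
    (colLen_le_card _).trans ((Finset.single_le_sum (f := fun k => (mu k).cells.card)
      (fun _ _ => Nat.zero_le _) (mem_univ k)).trans hN)
  have h1 : ∏ k, schurPoly (K+1) (mu k) ∈ Mult (K+1) (∑ k, (cr k).2) (∑ k, (cr k).1) := by
    apply prod_Mult
    intro k _
    rw [← Sc_rl (hmu k)]
    apply Sc_Mult _ _ _ (rl_anti _ _)
    intro h
    by_contra hc
    exact hcr k (YoungDiagram.mem_iff_lt_rowLen.2 (not_le.1 hc))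
  have h2 : alt (sh (0 : Fin (K+1) → ℕ)) ∈ G (K+1) 0 0 :=
    Submodule.subset_span ⟨0, rho_anti, fun _ => le_rfl, rfl⟩
  have h3 := h1 0 0 _ h2
  rw [zero_add, zero_add] at h3
  have hnh : ¬ hook (rl (K+1) lam) (∑ k, (cr k).2) (∑ k, (cr k).1) := by
    intro hh
    have h4 := hh hR
    have h5 := YoungDiagram.mem_iff_lt_rowLen.1 hmem
    simp only [rl] at h4
    omega
  have h6 := coeff_G (rl_anti _ _) hnh h3
  rw [hexp, Finset.sum_mul, coeff_sum, Finset.sum_eq_single lam] at h6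
  · rw [smul_mul_assoc, coeff_smul, mul_comm, ← Sc_rl (hrows lam hlam), ← bialt (rl_anti _ _),
      coeff_alt (sh_strictAnti (rl_anti _ _)) (sh_strictAnti (rl_anti _ _)), if_pos rfl] at h6
    simp at h6
    exact hne h6
  · intro l hl hll
    rw [smul_mul_assoc, coeff_smul, mul_comm, ← Sc_rl (hrows l hl), ← bialt (rl_anti _ _),
      coeff_alt (sh_strictAnti (rl_anti _ _)) (sh_strictAnti (rl_anti _ _)), if_neg, smul_zero]
    intro he
    exact hll (rl_inj (hrows l hl) (hrows lam hlam) (sh_inj he))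
  · intro h; exact absurd hlam h

end LRB

/-- **Positivity condition for the multi-Littlewood–Richardson coefficients.**
Let `n ≥ 1` and let `λ, μ⁰, …, μ^{n-1}` be partitions (Young diagrams).  The
multi-LR coefficient `c^λ_{μ⁰,…,μ^{n-1}}` is the coefficient of `s_λ` in the Schur
expansion of `s_{μ⁰} ⋯ s_{μ^{n-1}}` in `N ≥ |μ⁰| + ⋯ + |μ^{n-1}|` variables; here
this expansion is encoded by a finitely supported coefficient family `co`
(supported on diagrams with at most `N` rows, which makes it unique).
If `c^λ_{μ⁰,…,μ^{n-1}} ≠ 0` then for every choice of outer corners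
`(c_k, r_k) ∈ OC(μ^k)`, the point `(c_0 + ⋯ + c_{n-1}, r_0 + ⋯ + r_{n-1})` does not
belong to `[λ]`, i.e. `λ_{r_0+⋯+r_{n-1}+1} ≤ c_0 + ⋯ + c_{n-1}`; that is,
`[λ] ⊆ ⟨Σ_k OC(μ^k)⟩^c`. -/
theorem multiLR_outer_corner_bound {n : ℕ} (hn : 0 < n)
    (lam : YoungDiagram) (mu : Fin n → YoungDiagram)
    (N : ℕ) (hN : ∑ k, (mu k).cells.card ≤ N)
    (co : YoungDiagram →₀ ℕ)
    (hrows : ∀ l ∈ co.support, l.colLen 0 ≤ N)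
    (hexp : ∏ k, schurPoly N (mu k) = ∑ l ∈ co.support, (co l : ℤ) • schurPoly N l)
    (hne : co lam ≠ 0)
    (cr : Fin n → ℕ × ℕ) (hcr : ∀ k, IsOuterCorner (mu k) (cr k).1 (cr k).2) :
    (∑ k, (cr k).2, ∑ k, (cr k).1) ∉ lam ∧
      lam.rowLen (∑ k, (cr k).2) ≤ ∑ k, (cr k).1 := by
  have h := LRB.main lam mu N hN co hrows hexp hne cr (fun k => (hcr k).1)
  refine ⟨h, ?_⟩
  by_contra hc
  exact h (YoungDiagram.mem_iff_lt_rowLen.2 (not_le.1 hc))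
end

section
/- Let λ, μ, ν be partitions. If the Littlewood–Richardson coefficient c^λ_{μ,ν} is nonzero, then for every outer corner (c_1, r_1) of μ and every outer corner (c_2, r_2) of ν, the point (c_1+c_2, r_1+r_2) does not belong to the Young diagram [λ]; that is, λ_{r_1+r_2+1} ≤ c_1+c_2. -/
open MvPolynomial Finset

namespace LRaux

/-- Cells of the diagram with row lengths `lam`. -/
def cellsOf {n : ℕ} (lam : Fin n → ℕ) : Finset (ℕ × ℕ) :=
  (Finset.univ : Finset (Σ i : Fin n, Fin (lam i))).image (fun p => ((p.1 : ℕ), (p.2 : ℕ)))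

lemma mem_cellsOf {n : ℕ} (lam : Fin n → ℕ) (i j : ℕ) :
    (i, j) ∈ cellsOf lam ↔ ∃ h : i < n, j < lam ⟨i, h⟩ := by
  unfold cellsOf
  simp only [Finset.mem_image, Finset.mem_univ, true_and, Prod.mk.injEq, Sigma.exists]
  constructor
  · rintro ⟨a, b, rfl, rfl⟩
    exact ⟨a.2, b.2⟩
  · rintro ⟨h, h'⟩
    exact ⟨⟨i, h⟩, ⟨j, h'⟩, rfl, rfl⟩

lemma prod_cellsOf {n : ℕ} {R : Type*} [CommRing R] (lam : Fin n → ℕ) (f : ℕ × ℕ → R) :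
    ∏ c ∈ cellsOf lam, f c = ∏ i : Fin n, ∏ j ∈ Finset.range (lam i), f (i, j) := by
  unfold cellsOf
  rw [Finset.prod_image]
  · rw [Finset.univ_sigma_univ.symm, Finset.prod_sigma]
    refine Finset.prod_congr rfl fun i _ => ?_
    rw [Finset.prod_range]
  · rintro ⟨a, b⟩ _ ⟨c, d⟩ _ h
    simp only [Prod.mk.injEq] at h
    obtain ⟨h1, h2⟩ := h
    have : a = c := Fin.ext h1
    subst this
    have : b = d := Fin.ext h2
    subst this
    rfl

open scoped Classical in
/-- Evaluated Schur function. -/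
noncomputable def ss {n : ℕ} {R : Type*} [CommRing R] (x : Fin n → R) (s : Finset (ℕ × ℕ)) : R :=
  ∑ T ∈ Finset.univ.filter (fun T : s → Fin n => IsSemistandardOn s T), ∏ c : s, x (T c)

lemma ss_zero {R : Type*} [CommRing R] (x : Fin 0 → R) (lam : Fin 0 → ℕ) :
    ss x (cellsOf lam) = 1 := by
  classical
  have he : cellsOf lam = ∅ := by
    ext ⟨i, j⟩
    rw [mem_cellsOf]
    simp
  rw [he]
  unfold ss
  have : (Finset.univ.filter (fun T : (∅ : Finset (ℕ × ℕ)) → Fin 0 => IsSemistandardOn ∅ T))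
      = Finset.univ := by
    ext T
    simp [IsSemistandardOn]
  rw [this]
  simp

section branch

variable {n : ℕ} {lam : Fin (n+1) → ℕ}

lemma row_mono {N : ℕ} {s : Finset (ℕ × ℕ)} {T : s → Fin N} (hT : IsSemistandardOn s T)
    (hs : ∀ i j, (i, j + 1) ∈ s → (i, j) ∈ s)
    (i j k : ℕ) (h1 : (i, j) ∈ s) (h2 : (i, j + k) ∈ s) : T ⟨(i, j), h1⟩ ≤ T ⟨(i, j + k), h2⟩ := by
  induction k with
  | zero => exact le_rfl
  | succ k ih =>
    have h3 : (i, j + k) ∈ s := hs _ _ h2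
    exact (ih h3).trans (hT.1 i (j+k) h3 h2)

lemma col_ge {N : ℕ} {s : Finset (ℕ × ℕ)} {T : s → Fin N} (hT : IsSemistandardOn s T)
    (hs : ∀ i j, (i + 1, j) ∈ s → (i, j) ∈ s)
    (i j : ℕ) (h1 : (i, j) ∈ s) : i ≤ (T ⟨(i, j), h1⟩ : ℕ) := by
  induction i with
  | zero => exact Nat.zero_le _
  | succ i ih =>
    have h3 : (i, j) ∈ s := hs _ _ h1
    have := hT.2 i j h3 h1
    have h4 := ih h3
    have : (T ⟨(i, j), h3⟩ : ℕ) < T ⟨(i+1, j), h1⟩ := this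
    omega

lemma cellsOf_left {N : ℕ} (l : Fin N → ℕ) (i j : ℕ) (h : (i, j + 1) ∈ cellsOf l) :
    (i, j) ∈ cellsOf l := by
  rw [mem_cellsOf] at *
  obtain ⟨h, h'⟩ := h
  exact ⟨h, by omega⟩

lemma cellsOf_up {N : ℕ} {l : Fin N → ℕ} (hl : Antitone l) (i j : ℕ) (h : (i + 1, j) ∈ cellsOf l) :
    (i, j) ∈ cellsOf l := by
  rw [mem_cellsOf] at *
  obtain ⟨h, h'⟩ := h
  exact ⟨by omega, lt_of_lt_of_le h' (hl (by simp [Fin.le_def]))⟩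

open scoped Classical in
/-- Row lengths of the part with entries different from the last letter. -/
noncomputable def kap (T : cellsOf lam → Fin (n+1)) : Fin n → ℕ := fun i =>
  ((Finset.range (lam i.castSucc)).filter
    (fun j => ∃ h : ((i : ℕ), j) ∈ cellsOf lam, T ⟨((i : ℕ), j), h⟩ ≠ Fin.last n)).card

lemma filter_lower (L : ℕ) (P : ℕ → Prop) [DecidablePred P]
    (hP : ∀ j k, j ≤ k → k < L → P k → P j) :
    (Finset.range L).filter P = Finset.range ((Finset.range L).filter P).card := by
  induction L with
  | zero => simp
  | succ L ih =>
    by_cases h : P L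
    · have : (Finset.range (L+1)).filter P = Finset.range (L+1) := by
        apply Finset.filter_true_of_mem
        intro j hj
        exact hP j L (by simpa [Nat.lt_succ_iff] using hj) (by omega) h
      rw [this]; simp
    · rw [Finset.range_add_one, Finset.filter_insert, if_neg h]
      exact ih (fun j k hjk hk => hP j k hjk (by omega))

lemma kap_spec {T : cellsOf lam → Fin (n+1)} (hT : IsSemistandardOn _ T)
    (i : Fin n) (j : ℕ) (h : ((i : ℕ), j) ∈ cellsOf lam) :
    j < kap T i ↔ T ⟨((i : ℕ), j), h⟩ ≠ Fin.last n := by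
  classical
  have key := filter_lower (lam i.castSucc)
    (fun j => ∃ h : ((i : ℕ), j) ∈ cellsOf lam, T ⟨((i : ℕ), j), h⟩ ≠ Fin.last n) (by
      rintro j k hjk hk ⟨h, hne⟩
      have h1 : ((i : ℕ), j) ∈ cellsOf lam := by
        rw [mem_cellsOf] at *
        obtain ⟨h, h'⟩ := h
        exact ⟨h, by omega⟩
      refine ⟨h1, ?_⟩
      obtain ⟨d, rfl⟩ := Nat.exists_eq_add_of_le hjk
      have := row_mono hT (cellsOf_left lam) i j d h1 h
      intro he
      rw [he] at this
      exact hne (le_antisymm (Fin.le_last _) this))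
  have : j < kap T i ↔ j ∈ Finset.range (kap T i) := by simp
  rw [this]
  unfold kap
  rw [← key]
  simp only [Finset.mem_filter, Finset.mem_range]
  constructor
  · rintro ⟨_, _, h⟩
    exact h
  · intro hne
    refine ⟨?_, h, hne⟩
    rw [mem_cellsOf] at h
    exact h.2

lemma kap_eq {T : cellsOf lam → Fin (n+1)} (κ : Fin n → ℕ) (hκ : ∀ i, κ i ≤ lam i.castSucc)
    (h : ∀ (i : Fin n) (j : ℕ) (h : ((i : ℕ), j) ∈ cellsOf lam),
      j < κ i ↔ T ⟨((i : ℕ), j), h⟩ ≠ Fin.last n) : kap T = κ := by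
  classical
  funext i
  unfold kap
  have : ((Finset.range (lam i.castSucc)).filter
    (fun j => ∃ h : ((i : ℕ), j) ∈ cellsOf lam, T ⟨((i : ℕ), j), h⟩ ≠ Fin.last n))
      = Finset.range (κ i) := by
    ext j
    simp only [Finset.mem_filter, Finset.mem_range]
    constructor
    · rintro ⟨_, h1, h2⟩
      exact (h i j h1).2 h2
    · intro hj
      have h1 : ((i : ℕ), j) ∈ cellsOf lam := by
        rw [mem_cellsOf]
        exact ⟨by omega, lt_of_lt_of_le hj (hκ i)⟩
      exact ⟨lt_of_lt_of_le hj (hκ i), h1, (h i j h1).1 hj⟩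
  rw [this, Finset.card_range]

lemma kap_le (T : cellsOf lam → Fin (n+1)) (i : Fin n) : kap T i ≤ lam i.castSucc := by
  classical
  unfold kap
  exact (Finset.card_filter_le _ _).trans (by simp)

lemma le_kap (hl : Antitone lam) {T : cellsOf lam → Fin (n+1)} (hT : IsSemistandardOn _ T)
    (i : Fin n) : lam i.succ ≤ kap T i := by
  by_contra hlt
  push Not at hlt
  have h1 : ((i : ℕ) + 1, kap T i) ∈ cellsOf lam := by
    rw [mem_cellsOf]
    exact ⟨by omega, hlt⟩
  have h0 := cellsOf_up hl _ _ h1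
  have h2 := hT.2 i _ h0 h1
  have h3 := (kap_spec hT i _ h0).2 (ne_of_lt (lt_of_lt_of_le h2 (Fin.le_last _)))
  exact lt_irrefl _ h3

lemma mem_of_kappa {κ : Fin n → ℕ} (hκ : ∀ i, κ i ≤ lam i.castSucc) (c : ℕ × ℕ)
    (hc : c ∈ cellsOf κ) : c ∈ cellsOf lam := by
  obtain ⟨i, j⟩ := c
  rw [mem_cellsOf] at *
  obtain ⟨h, h'⟩ := hc
  exact ⟨by omega, lt_of_lt_of_le h' (hκ ⟨i, h⟩)⟩

lemma mem_kappa_iff (hl : Antitone lam) {T : cellsOf lam → Fin (n+1)} (hT : IsSemistandardOn _ T)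
    (c : ℕ × ℕ) (hc : c ∈ cellsOf lam) :
    c ∈ cellsOf (kap T) ↔ T ⟨c, hc⟩ ≠ Fin.last n := by
  obtain ⟨i, j⟩ := c
  rw [mem_cellsOf]
  by_cases hi : i < n
  · rw [← kap_spec hT ⟨i, hi⟩ j hc]
    exact ⟨fun h => h.2, fun h => ⟨hi, h⟩⟩
  · have h1 := col_ge hT (fun i j => cellsOf_up hl i j) i j hc
    constructor
    · rintro ⟨h, _⟩; exact absurd h hi
    · intro h
      exfalso
      apply h
      apply Fin.ext
      have := (T ⟨(i,j), hc⟩).2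
      simp only [Fin.val_last]
      omega

/-- weight identity -/
lemma weight_eq {R : Type*} [CommRing R] (κ : Fin n → ℕ) (hκ : ∀ i, κ i ≤ lam i.castSucc)
    (f : ℕ × ℕ → R) (y : R) (hf : ∀ c ∈ cellsOf lam, c ∉ cellsOf κ → f c = y) :
    ∏ c ∈ cellsOf lam, f c = (∏ c ∈ cellsOf κ, f c) *
      (y ^ lam (Fin.last n) * ∏ j : Fin n, y ^ (lam j.castSucc - κ j)) := by
  rw [prod_cellsOf, prod_cellsOf, Fin.prod_univ_castSucc]
  have h1 : ∏ j ∈ Finset.range (lam (Fin.last n)), f (((Fin.last n : Fin (n+1)) : ℕ), j)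
      = y ^ lam (Fin.last n) := by
    rw [Finset.prod_congr rfl (g := fun _ => y)]
    · simp
    · intro j hj
      apply hf
      · rw [mem_cellsOf]
        exact ⟨by simp, Finset.mem_range.1 hj⟩
      · rw [mem_cellsOf]
        rintro ⟨h, _⟩
        simp at h
  have h2 : ∀ i : Fin n, ∏ j ∈ Finset.range (lam i.castSucc), f (((i.castSucc : Fin (n+1)) : ℕ), j)
      = (∏ j ∈ Finset.range (κ i), f ((i : ℕ), j)) * y ^ (lam i.castSucc - κ i) := by
    intro i
    obtain ⟨d, hd⟩ := Nat.exists_eq_add_of_le (hκ i)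
    rw [hd, Finset.prod_range_add]
    congr 1
    rw [Finset.prod_congr rfl (g := fun _ => y)]
    · simp
    · intro j hj
      apply hf
      · rw [mem_cellsOf]
        refine ⟨by simp, ?_⟩
        have hj := Finset.mem_range.1 hj
        change κ i + j < lam i.castSucc
        omega
      · rw [mem_cellsOf]
        rintro ⟨h, h'⟩
        have h' : κ i + j < κ i := h'
        omega
  rw [h1, Finset.prod_congr rfl (fun i _ => h2 i), Finset.prod_mul_distrib]
  ring

lemma branch {R : Type*} [CommRing R] (hl : Antitone lam) (x : Fin (n+1) → R) :
    ss x (cellsOf lam) =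
      ∑ κ ∈ Fintype.piFinset (fun i : Fin n => Finset.Icc (lam i.succ) (lam i.castSucc)),
        ss (fun i : Fin n => x i.castSucc) (cellsOf κ) *
          (x (Fin.last n) ^ lam (Fin.last n) *
            ∏ j : Fin n, x (Fin.last n) ^ (lam j.castSucc - κ j)) := by
  classical
  conv_lhs => unfold ss
  rw [← Finset.sum_fiberwise_of_maps_to (g := fun T => kap T)
    (t := Fintype.piFinset (fun i : Fin n => Finset.Icc (lam i.succ) (lam i.castSucc)))]
  swap
  · intro T hT
    have hT := (Finset.mem_filter.1 hT).2
    rw [Fintype.mem_piFinset]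
    intro i
    rw [Finset.mem_Icc]
    exact ⟨le_kap hl hT i, kap_le T i⟩
  refine Finset.sum_congr rfl fun κ hκ => ?_
  rw [Fintype.mem_piFinset] at hκ
  have hκ1 : ∀ i, κ i ≤ lam i.castSucc := fun i => (Finset.mem_Icc.1 (hκ i)).2
  have hκ2 : ∀ i, lam i.succ ≤ κ i := fun i => (Finset.mem_Icc.1 (hκ i)).1
  unfold ss
  rw [Finset.sum_mul]
  have hmem : ∀ (T : cellsOf lam → Fin (n+1)), 
      T ∈ (Finset.univ.filter (fun T : cellsOf lam → Fin (n+1) =>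
        IsSemistandardOn (cellsOf lam) T)).filter (fun T => kap T = κ) ↔
      IsSemistandardOn (cellsOf lam) T ∧ kap T = κ := by
    intro T; simp
  have hne : ∀ (T : cellsOf lam → Fin (n+1)), IsSemistandardOn (cellsOf lam) T → kap T = κ →
      ∀ (c : cellsOf κ), T ⟨c.1, mem_of_kappa hκ1 _ c.2⟩ ≠ Fin.last n := by
    intro T h1 h2 c
    rw [← mem_kappa_iff hl h1, h2]
    exact c.2
  refine Finset.sum_bij'
    (i := fun T hT => fun c : cellsOf κ =>
      (T ⟨c.1, mem_of_kappa hκ1 _ c.2⟩).castPred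
        (hne T ((hmem T).1 hT).1 ((hmem T).1 hT).2 c))
    (j := fun T' _ => fun c : cellsOf lam =>
      if h : c.1 ∈ cellsOf κ then (T' ⟨c.1, h⟩).castSucc else Fin.last n) ?_ ?_ ?_ ?_ ?_
  · intro T hT
    obtain ⟨h1, h2⟩ := (hmem T).1 hT
    rw [Finset.mem_filter]
    refine ⟨Finset.mem_univ _, ?_, ?_⟩
    · intro i j a b
      rw [Fin.castPred_le_castPred_iff]
      exact h1.1 _ _ _ _
    · intro i j a b
      rw [Fin.castPred_lt_castPred_iff]
      exact h1.2 _ _ _ _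
  · intro T' hT'
    have hT' := (Finset.mem_filter.1 hT').2
    rw [hmem]
    constructor
    · constructor
      · intro i j a b
        by_cases hb : (i, j+1) ∈ cellsOf κ
        · have ha := cellsOf_left _ _ _ hb
          simp only [ha, hb, dif_pos, Fin.castSucc_le_castSucc_iff]
          exact hT'.1 _ _ _ _
        · simp only [hb, dif_neg, not_false_eq_true]
          exact Fin.le_last _
      · intro i j a b
        have ha : (i, j) ∈ cellsOf κ := by
          rw [mem_cellsOf] at b ⊢
          obtain ⟨h, h'⟩ := b
          exact ⟨by omega, lt_of_lt_of_le h' (hκ2 ⟨i, by omega⟩)⟩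
        by_cases hb : (i + 1, j) ∈ cellsOf κ
        · simp only [ha, hb, dif_pos, Fin.castSucc_lt_castSucc_iff]
          exact hT'.2 _ _ _ _
        · simp only [ha, hb, dif_pos, dif_neg, not_false_eq_true]
          exact Fin.castSucc_lt_last _
    · apply kap_eq κ hκ1
      intro i j h
      by_cases hb : ((i : ℕ), j) ∈ cellsOf κ
      · simp only [hb, dif_pos]
        rw [mem_cellsOf] at hb
        exact ⟨fun _ => (Fin.castSucc_lt_last _).ne, fun _ => hb.2⟩
      · simp only [hb, dif_neg, not_false_eq_true]
        rw [mem_cellsOf] at hb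
        constructor
        · intro hj
          exact absurd ⟨i.2, hj⟩ hb
        · intro hj
          exact absurd rfl hj
  · intro T hT
    obtain ⟨h1, h2⟩ := (hmem T).1 hT
    funext c
    by_cases hb : c.1 ∈ cellsOf κ
    · simp only [hb, dif_pos, Fin.castSucc_castPred]
    · simp only [hb, dif_neg, not_false_eq_true]
      have := mem_kappa_iff hl h1 c.1 c.2
      rw [h2] at this
      have h3 := not_not.1 (fun h => hb (this.2 h))
      exact h3.symm
  · intro T' hT'
    funext c
    simp
  · intro T hT
    obtain ⟨h1, h2⟩ := (hmem T).1 hT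
    have hw := weight_eq κ hκ1
      (fun c => if h : c ∈ cellsOf lam then x (T ⟨c, h⟩) else 0) (x (Fin.last n)) (by
        intro c hc hn
        simp only [hc, dif_pos]
        have := mem_kappa_iff hl h1 c hc
        rw [h2] at this
        have h3 := not_not.1 (fun h => hn (this.2 h))
        rw [h3])
    rw [← Finset.prod_coe_sort (cellsOf lam), ← Finset.prod_coe_sort (cellsOf κ)] at hw
    have e1 : ∏ c : cellsOf lam, x (T c) = ∏ i : cellsOf lam,
        (if h : (i : ℕ × ℕ) ∈ cellsOf lam then x (T ⟨i, h⟩) else 0) := by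
      refine Finset.prod_congr rfl fun c _ => ?_
      simp
    rw [e1, hw]
    congr 1
    refine Finset.prod_congr rfl fun c _ => ?_
    have := mem_of_kappa hκ1 _ c.2
    simp only [this, dif_pos, Fin.castSucc_castPred]

end branch

/-- The staircase exponent. -/
def dl (n : ℕ) : Fin n → ℕ := fun i => n - 1 - i

/-- The alternant. -/
noncomputable def alt {n : ℕ} {R : Type*} [CommRing R] (x : Fin n → R) (l : Fin n → ℕ) : R :=
  Matrix.det (Matrix.of fun i j : Fin n => x i ^ l j)

lemma det_col_succ {R : Type*} [CommRing R] {n : ℕ} {A B : Matrix (Fin (n + 1)) (Fin (n + 1)) R}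
    (c : Fin n → R) (h0 : ∀ i, A i (Fin.last n) = B i (Fin.last n))
    (h1 : ∀ (i) (j : Fin n), A i j.castSucc = B i j.castSucc + c j * A i j.succ) :
    A.det = B.det := by
  rw [← Matrix.det_submatrix_equiv_self Fin.revPerm A,
    ← Matrix.det_submatrix_equiv_self Fin.revPerm B]
  apply Matrix.det_eq_of_forall_col_eq_smul_add_pred (fun j => c j.rev)
  · intro i
    simp [h0]
  · intro i j
    simp only [Matrix.submatrix_apply, Fin.revPerm_apply, Fin.rev_succ, Fin.rev_castSucc]
    exact h1 _ _

lemma alt_rec {R : Type*} [CommRing R] {n : ℕ} {lam : Fin (n+1) → ℕ} (hl : Antitone lam)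
    (x : Fin (n+1) → R) :
    alt x (lam + dl (n+1)) = (∏ i : Fin n, (x i.castSucc - x (Fin.last n))) *
      ∑ κ ∈ Fintype.piFinset (fun i : Fin n => Finset.Icc (lam i.succ) (lam i.castSucc)),
        alt (fun i : Fin n => x i.castSucc) (κ + dl n) *
          (x (Fin.last n) ^ lam (Fin.last n) *
            ∏ j : Fin n, x (Fin.last n) ^ (lam j.castSucc - κ j)) := by
  set y := x (Fin.last n) with hy
  have geo : ∀ (a : R) (j : Fin n), a ^ (lam j.castSucc + dl (n+1) j.castSucc) =
      (a - y) * (∑ k ∈ Finset.Icc (lam j.succ) (lam j.castSucc),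
        y ^ (lam j.castSucc - k) * a ^ (k + dl n j))
      + y ^ (lam j.castSucc + 1 - lam j.succ) * a ^ (lam j.succ + dl (n+1) j.succ) := by
    intro a j
    have hle : lam j.succ ≤ lam j.castSucc := hl (Fin.castSucc_lt_succ).le
    have g := (Commute.all a y).mul_geom_sum₂_Ico (m := lam j.succ) (n := lam j.castSucc + 1)
      (by omega)
    have e1 : dl (n+1) j.castSucc = dl n j + 1 := by
      simp only [dl, Fin.val_castSucc]; omega
    have e2 : dl (n+1) j.succ = dl n j := by
      simp only [dl, Fin.val_succ]; omega
    have e3 : ∑ k ∈ Finset.Icc (lam j.succ) (lam j.castSucc),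
        y ^ (lam j.castSucc - k) * a ^ (k + dl n j) = a ^ dl n j * 
        ∑ k ∈ Finset.Ico (lam j.succ) (lam j.castSucc + 1), a ^ k * y ^ (lam j.castSucc + 1 - 1 - k) := by
      rw [Finset.mul_sum]
      refine Finset.sum_congr (by ext; simp) fun k _ => ?_
      rw [Nat.add_sub_cancel]
      ring
    rw [e1, e2, e3, mul_left_comm, g]
    ring
  let B : Matrix (Fin (n+1)) (Fin (n+1)) R := Matrix.of fun i j =>
    Fin.lastCases (motive := fun _ => R) (x i ^ lam (Fin.last n)) (fun j : Fin n => (x i - y) *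
      (∑ k ∈ Finset.Icc (lam j.succ) (lam j.castSucc),
        y ^ (lam j.castSucc - k) * x i ^ (k + dl n j))) j
  have hB1 : ∀ i, B i (Fin.last n) = x i ^ lam (Fin.last n) := by intro i; simp [B]
  have hB2 : ∀ i (j : Fin n), B i j.castSucc = (x i - y) *
      (∑ k ∈ Finset.Icc (lam j.succ) (lam j.castSucc),
        y ^ (lam j.castSucc - k) * x i ^ (k + dl n j)) := by intro i j; simp [B]
  have hdet : alt x (lam + dl (n+1)) = B.det := by
    unfold alt
    apply det_col_succ (fun j => y ^ (lam j.castSucc + 1 - lam j.succ))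
    · intro i
      rw [hB1]
      simp [dl]
    · intro i j
      rw [hB2]
      simp only [Matrix.of_apply, Pi.add_apply]
      exact geo _ _
  rw [hdet, Matrix.det_succ_row B (Fin.last n), Fin.sum_univ_castSucc]
  have hz : ∀ j : Fin n, B (Fin.last n) j.castSucc = 0 := by
    intro j
    rw [hB2, ← hy]; simp
  simp only [hz, mul_zero, zero_mul, Finset.sum_const_zero, zero_add, hB1, Fin.succAbove_last]
  have hsgn : (-1 : R) ^ (((Fin.last n : Fin (n+1)) : ℕ) + ((Fin.last n : Fin (n+1)) : ℕ)) = 1 := by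
    rw [← two_mul, pow_mul]; simp
  rw [hsgn, one_mul]
  have hsub : B.submatrix Fin.castSucc Fin.castSucc = Matrix.of fun i j : Fin n =>
      (x i.castSucc - y) * (Matrix.of fun (i j : Fin n) => 
        ∑ k ∈ Finset.Icc (lam j.succ) (lam j.castSucc),
        y ^ (lam j.castSucc - k) * x i.castSucc ^ (k + dl n j)) i j := by
    ext i j
    simp [hB2]
  rw [hsub, Matrix.det_mul_column]
  have hsum : (Matrix.of fun (i j : Fin n) => 
        ∑ k ∈ Finset.Icc (lam j.succ) (lam j.castSucc),
        y ^ (lam j.castSucc - k) * x i.castSucc ^ (k + dl n j)).det =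
      ∑ κ ∈ Fintype.piFinset (fun i : Fin n => Finset.Icc (lam i.succ) (lam i.castSucc)),
        (∏ j : Fin n, y ^ (lam j.castSucc - κ j)) * 
        alt (fun i : Fin n => x i.castSucc) (κ + dl n) := by
    rw [← Matrix.det_transpose]
    have := (Matrix.detRowAlternating (n := Fin n) (R := R)).toMultilinearMap.map_sum_finset
      (fun (j : Fin n) (k : ℕ) => fun i : Fin n => y ^ (lam j.castSucc - k) * x i.castSucc ^ (k + dl n j))
      (fun j => Finset.Icc (lam j.succ) (lam j.castSucc))
    refine Eq.trans ?_ (this.trans ?_)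
    · change _ = Matrix.det _
      congr 1
      ext i j
      simp [Finset.sum_apply]
    · refine Finset.sum_congr rfl fun κ _ => ?_
      change Matrix.det _ = _
      unfold alt
      rw [← Matrix.det_mul_row, ← Matrix.det_transpose]
      congr 1
  rw [hsum, mul_left_comm, Finset.mul_sum]
  congr 1
  refine Finset.sum_congr rfl fun κ _ => ?_
  ring

lemma interlace_antitone {n : ℕ} {lam : Fin (n+1) → ℕ} (hl : Antitone lam) {κ : Fin n → ℕ}
    (hκ : κ ∈ Fintype.piFinset (fun i : Fin n => Finset.Icc (lam i.succ) (lam i.castSucc))) :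
    Antitone κ := by
  rw [Fintype.mem_piFinset] at hκ
  intro i j hij
  rcases hij.eq_or_lt with rfl | hlt
  · exact le_rfl
  · have h1 := (Finset.mem_Icc.1 (hκ i)).1
    have h2 := (Finset.mem_Icc.1 (hκ j)).2
    have h3 : lam j.castSucc ≤ lam i.succ := by
      apply hl
      rw [Fin.le_def]
      simp only [Fin.val_succ, Fin.val_castSucc]
      exact hlt
    omega

lemma bialternant {R : Type*} [CommRing R] : ∀ {n : ℕ} {lam : Fin n → ℕ} (_ : Antitone lam)
    (x : Fin n → R), alt x (lam + dl n) = alt x (dl n) * ss x (cellsOf lam) := by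
  intro n
  induction n with
  | zero =>
    intro lam _ x
    rw [ss_zero]
    simp [alt]
  | succ n ih =>
    intro lam hl x
    have h0 : alt x (dl (n+1)) = (∏ i : Fin n, (x i.castSucc - x (Fin.last n))) *
        alt (fun i : Fin n => x i.castSucc) (dl n) := by
      have := alt_rec (lam := (0 : Fin (n+1) → ℕ)) (fun _ _ _ => le_rfl) x
      rw [zero_add] at this
      rw [this]
      congr 1
      have e : Fintype.piFinset (fun i : Fin n => Finset.Icc ((0 : Fin (n+1) → ℕ) i.succ)
          ((0 : Fin (n+1) → ℕ) i.castSucc)) = {0} := by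
        ext κ
        simp [funext_iff]
      rw [e]
      simp
    rw [alt_rec hl, branch hl, h0, mul_assoc]
    congr 1
    rw [Finset.mul_sum]
    refine Finset.sum_congr rfl fun κ hκ => ?_
    rw [ih (interlace_antitone hl hκ)]
    ring

section poly

open Equiv

variable {N : ℕ}

/-- Coefficient at an exponent vector given as a function. -/
noncomputable def cf (p : MvPolynomial (Fin N) ℤ) (l : Fin N → ℕ) : ℤ :=
  coeff (Finsupp.equivFunOnFinite.symm l) p

/-- Alternating polynomials. -/
def IsAlt (p : MvPolynomial (Fin N) ℤ) : Prop :=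
  ∀ σ : Perm (Fin N), rename σ p = (Perm.sign σ : ℤ) • p

lemma IsAlt.cf_comp {p : MvPolynomial (Fin N) ℤ} (hp : IsAlt p) (σ : Perm (Fin N))
    (l : Fin N → ℕ) : cf p (l ∘ σ) = (Perm.sign σ : ℤ) * cf p l := by
  have h := coeff_rename_mapDomain σ σ.injective p (Finsupp.equivFunOnFinite.symm (l ∘ σ))
  have e : (Finsupp.equivFunOnFinite.symm (l ∘ σ)).mapDomain σ
      = Finsupp.equivFunOnFinite.symm l := by
    ext i
    rw [Finsupp.mapDomain_equiv_apply]
    simp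
  rw [e, hp σ, coeff_smul] at h
  unfold cf
  rw [← h]
  simp

lemma IsAlt.mul_symm {p f : MvPolynomial (Fin N) ℤ} (hp : IsAlt p)
    (hf : ∀ σ : Perm (Fin N), rename σ f = f) : IsAlt (p * f) := by
  intro σ
  rw [map_mul, hp, hf, smul_mul_assoc]

lemma IsAlt.sub {p q : MvPolynomial (Fin N) ℤ} (hp : IsAlt p) (hq : IsAlt q) : IsAlt (p - q) := by
  intro σ
  rw [map_sub, hp, hq, smul_sub]

lemma IsAlt.sum {ι : Type*} (s : Finset ι) (p : ι → MvPolynomial (Fin N) ℤ) (c : ι → ℤ)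
    (hp : ∀ i ∈ s, IsAlt (p i)) : IsAlt (∑ i ∈ s, c i • p i) := by
  intro σ
  rw [map_sum, Finset.smul_sum]
  refine Finset.sum_congr rfl fun i hi => ?_
  rw [map_zsmul, hp i hi, smul_comm]

lemma alt_isAlt (l : Fin N → ℕ) : IsAlt (alt (X : Fin N → MvPolynomial (Fin N) ℤ) l) := by
  intro σ
  unfold alt
  rw [AlgHom.map_det]
  have := Matrix.det_permute σ
    (Matrix.of fun i j : Fin N => (X i : MvPolynomial (Fin N) ℤ) ^ l j)
  rw [zsmul_eq_mul, ← this]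
  congr 1
  ext1 i j
  simp

lemma prod_X_pow (m : Fin N → ℕ) :
    ∏ i, (X i : MvPolynomial (Fin N) ℤ) ^ m i = monomial (Finsupp.equivFunOnFinite.symm m) 1 := by
  rw [monomial_eq, Finsupp.prod_fintype]
  · simp
  · simp

lemma cf_alt (l m : Fin N → ℕ) : cf (alt (X : Fin N → MvPolynomial (Fin N) ℤ) l) m =
    ∑ σ : Perm (Fin N), (Perm.sign σ : ℤ) * if l ∘ σ = m then 1 else 0 := by
  classical
  unfold cf alt
  rw [← Matrix.det_transpose, Matrix.det_apply, coeff_sum]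
  refine Finset.sum_congr rfl fun σ _ => ?_
  have : ∏ i, (Matrix.of fun i j : Fin N => (X i : MvPolynomial (Fin N) ℤ) ^ l j).transpose (σ i) i
      = monomial (Finsupp.equivFunOnFinite.symm (l ∘ σ)) 1 := by
    rw [← prod_X_pow]
    simp [Matrix.transpose_apply]
  rw [this, Units.smul_def, coeff_smul, coeff_monomial]
  simp

lemma cf_alt_ne {l m : Fin N → ℕ} (h : cf (alt (X : Fin N → MvPolynomial (Fin N) ℤ) l) m ≠ 0) :
    ∃ σ : Perm (Fin N), l ∘ σ = m := by
  rw [cf_alt] at h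
  obtain ⟨σ, _, hσ⟩ := Finset.exists_ne_zero_of_sum_ne_zero h
  refine ⟨σ, ?_⟩
  by_contra hne
  simp [hne] at hσ

lemma perm_eq_one {l : Fin N → ℕ} (hl : StrictAnti l) (σ : Perm (Fin N))
    (h : StrictAnti (l ∘ σ)) : σ = 1 := by
  have hs : StrictMono σ := by
    intro i j hij
    have := h hij
    exact hl.lt_iff_gt.1 this
  have := (StrictMono.range_inj hs (strictMono_id)).1 (by simp [σ.surjective.range_eq])
  ext i
  rw [this]
  rfl

lemma cf_alt_strict {l m : Fin N → ℕ} (hl : StrictAnti l) (hm : StrictAnti m) :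
    cf (alt (X : Fin N → MvPolynomial (Fin N) ℤ) l) m = if l = m then 1 else 0 := by
  rw [cf_alt, Finset.sum_eq_single 1]
  · simp
  · intro σ _ hσ
    have : l ∘ σ ≠ m := by
      intro he
      apply hσ
      exact perm_eq_one hl σ (by rw [he]; exact hm)
    simp [this]
  · simp

lemma IsAlt.swap {p : MvPolynomial (Fin N) ℤ} (hp : IsAlt p) (d : Fin N → ℕ) {i j : Fin N}
    (hij : i ≠ j) : cf p (d ∘ Equiv.swap i j) = - cf p d := by
  rw [hp.cf_comp, Perm.sign_swap hij]
  simp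

lemma IsAlt.injective {p : MvPolynomial (Fin N) ℤ} (hp : IsAlt p) {d : Fin N → ℕ}
    (h : cf p d ≠ 0) : Function.Injective d := by
  intro i j he
  by_contra hij
  have h1 := hp.swap d hij
  have h2 : d ∘ Equiv.swap i j = d := by
    funext k
    simp only [Function.comp_apply, Equiv.swap_apply_def]
    split_ifs with h1 h2
    · rw [h1, he]
    · rw [h2, he]
    · rfl
  rw [h2] at h1
  omega

lemma IsAlt.eq_zero {p : MvPolynomial (Fin N) ℤ} (hp : IsAlt p)
    (h : ∀ l, StrictAnti l → cf p l = 0) : p = 0 := by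
  ext d
  rw [coeff_zero]
  by_contra hne
  have hd : cf p d ≠ 0 := by
    unfold cf
    rwa [show Finsupp.equivFunOnFinite.symm (d : Fin N → ℕ) = d by ext; simp]
  have hinj := hp.injective hd
  have hs : StrictMono (d ∘ Tuple.sort d) :=
    (Tuple.monotone_sort d).strictMono_of_injective (hinj.comp (Tuple.sort d).injective)
  have h2 : StrictAnti (d ∘ (Fin.revPerm.trans (Tuple.sort d) : Perm (Fin N))) := by
    intro i j hij
    exact hs (Fin.rev_lt_rev.2 hij)
  have h3 := h _ h2
  rw [hp.cf_comp] at h3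
  rcases mul_eq_zero.1 h3 with h4 | h4
  · simp at h4
  · exact hd h4

open scoped Classical in
lemma IsAlt.expand {p : MvPolynomial (Fin N) ℤ} (hp : IsAlt p) :
    p = ∑ m ∈ p.support.filter (fun m : Fin N →₀ ℕ => StrictAnti (m : Fin N → ℕ)),
      (cf p m) • alt (X : Fin N → MvPolynomial (Fin N) ℤ) m := by
  rw [← sub_eq_zero]
  apply (hp.sub (IsAlt.sum _ _ _ (fun i _ => alt_isAlt _))).eq_zero
  intro l hl
  have e : ∀ q r : MvPolynomial (Fin N) ℤ, cf (q - r) l = cf q l - cf r l := by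
    intro q r; simp [cf]
  have e2 : cf (∑ m ∈ p.support.filter (fun m : Fin N →₀ ℕ => StrictAnti (m : Fin N → ℕ)),
      (cf p m) • alt (X : Fin N → MvPolynomial (Fin N) ℤ) m) l = 
      ∑ m ∈ p.support.filter (fun m : Fin N →₀ ℕ => StrictAnti (m : Fin N → ℕ)),
        if m = Finsupp.equivFunOnFinite.symm l then cf p l else 0 := by
    conv_lhs => unfold cf
    rw [coeff_sum]
    refine Finset.sum_congr rfl fun m hm => ?_
    rw [coeff_smul]
    have := cf_alt_strict (Finset.mem_filter.1 hm).2 hl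
    unfold cf at this
    rw [this]
    by_cases h : (m : Fin N → ℕ) = l
    · have h' : m = Finsupp.equivFunOnFinite.symm l := by rw [← h]; ext; simp
      rw [if_pos h, if_pos h', ← h]
      simp [cf]
    · have h' : m ≠ Finsupp.equivFunOnFinite.symm l := by
        rintro rfl; apply h; ext; simp
      rw [if_neg h, if_neg h']
      simp
  rw [e, e2, Finset.sum_ite_eq']
  split_ifs with h
  · simp
  · rw [sub_zero]
    by_contra hne
    apply h
    rw [Finset.mem_filter, mem_support_iff]
    refine ⟨hne, ?_⟩
    simpa using hl

/-- Complete homogeneous polynomial. -/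
noncomputable def HH (N n : ℕ) : MvPolynomial (Fin N) ℤ :=
  ∑ d ∈ Finset.finsuppAntidiag (Finset.univ : Finset (Fin N)) n, monomial d 1

lemma coeff_HH (n : ℕ) (d : Fin N →₀ ℕ) : coeff d (HH N n) = if ∑ i, d i = n then 1 else 0 := by
  classical
  unfold HH
  rw [coeff_sum]
  simp only [coeff_monomial, Finset.sum_ite_eq']
  simp [Finset.mem_finsuppAntidiag]

lemma HH_symm (n : ℕ) (σ : Perm (Fin N)) : rename σ (HH N n) = HH N n := by
  ext d
  have h := coeff_rename_mapDomain σ σ.injective (HH N n) (d.mapDomain σ.symm)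
  have e : (d.mapDomain σ.symm).mapDomain σ = d := by
    ext i
    rw [Finsupp.mapDomain_equiv_apply, Finsupp.mapDomain_equiv_apply]
    simp
  rw [e] at h
  rw [h, coeff_HH, coeff_HH]
  have : ∑ i, (d.mapDomain σ.symm) i = ∑ i, d i := by
    simp only [Finsupp.mapDomain_equiv_apply, Equiv.symm_symm]
    exact Equiv.sum_comp σ d
  rw [this]

lemma cf_mul_HH (p : MvPolynomial (Fin N) ℤ) (n : ℕ) (l : Fin N → ℕ) :
    cf (p * HH N n) l = ∑ d ∈ (Fintype.piFinset (fun i => Finset.range (l i + 1))).filter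
      (fun d => ∑ i, d i + n = ∑ i, l i), cf p d := by
  classical
  conv_lhs => unfold cf
  rw [coeff_mul]
  simp only [coeff_HH, mul_ite, mul_one, mul_zero]
  rw [← Finset.sum_filter]
  refine Finset.sum_bij' (i := fun x _ => (x.1 : Fin N → ℕ))
    (j := fun d _ => (Finsupp.equivFunOnFinite.symm d, Finsupp.equivFunOnFinite.symm (l - d)))
    ?_ ?_ ?_ ?_ ?_
  · rintro ⟨a, b⟩ hx
    simp only [Finset.mem_filter] at hx
    obtain ⟨h1, h2⟩ := hx
    have h1 := Finset.HasAntidiagonal.mem_antidiagonal.1 h1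
    have h3 : ∀ i, a i + b i = l i := by
      intro i
      have := DFunLike.congr_fun h1 i
      simpa using this
    simp only [Finset.mem_filter, Fintype.mem_piFinset, Finset.mem_range]
    refine ⟨fun i => by have := h3 i; omega, ?_⟩
    rw [← h2, ← Finset.sum_add_distrib]
    exact Finset.sum_congr rfl fun i _ => h3 i
  · intro d hd
    simp only [Finset.mem_filter, Fintype.mem_piFinset, Finset.mem_range] at hd
    simp only [Finset.mem_filter]
    have h3 : ∀ i, d i + (l i - d i) = l i := fun i => by have := hd.1 i; omega
    constructor
    · apply Finset.HasAntidiagonal.mem_antidiagonal.2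
      ext i
      simp [h3]
    · have : ∑ i, d i + ∑ i, (l i - d i) = ∑ i, l i := by
        rw [← Finset.sum_add_distrib]
        exact Finset.sum_congr rfl fun i _ => h3 i
      simp only [Finsupp.equivFunOnFinite_symm_apply_apply, Pi.sub_apply]
      have := hd.2
      omega
  · rintro ⟨a, b⟩ hx
    simp only [Finset.mem_filter] at hx
    obtain ⟨h1, h2⟩ := hx
    have h1 := Finset.HasAntidiagonal.mem_antidiagonal.1 h1
    have h3 : ∀ i, a i + b i = l i := by
      intro i
      have := DFunLike.congr_fun h1 i
      simpa using this
    ext i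
    · simp
    · simp [← h3 i]
  · intro d hd
    ext; simp
  · rintro ⟨a, b⟩ hx
    unfold cf
    congr 1
    ext; simp

end poly

section pieri

variable {M : ℕ}

lemma pieri_aux {p : MvPolynomial (Fin (M+1)) ℤ} (hp : IsAlt p) (n : ℕ) {l : Fin (M+1) → ℕ}
    (hl : Antitone l) (k : ℕ) :
    cf (p * HH (M+1) n) l = ∑ d ∈ (Fintype.piFinset (fun i => Finset.range (l i + 1))).filter
      (fun d => ∑ i, d i + n = ∑ i, l i ∧ ∀ i : Fin M, (i : ℕ) < k → l i.succ < d i.castSucc),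
        cf p d := by
  classical
  induction k with
  | zero =>
    rw [cf_mul_HH]
    simp
  | succ k ih =>
    rw [ih]
    by_cases hk : k < M
    swap
    · refine Finset.sum_congr ?_ fun _ _ => rfl
      apply Finset.filter_congr
      intro d _
      refine and_congr Iff.rfl (forall_congr' fun i => ?_)
      have := i.2
      constructor
      · intro h _; exact h (by omega)
      · intro h _; exact h (by omega)
    rw [← Finset.sum_filter_add_sum_filter_not _
      (fun d : Fin (M+1) → ℕ => l (Fin.succ ⟨k, hk⟩) < d (Fin.castSucc ⟨k, hk⟩))]
    have hz : ∑ d ∈ ((Fintype.piFinset (fun i => Finset.range (l i + 1))).filter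
      (fun d => ∑ i, d i + n = ∑ i, l i ∧ ∀ i : Fin M, (i : ℕ) < k → l i.succ < d i.castSucc)).filter
        (fun d => ¬ l (Fin.succ ⟨k, hk⟩) < d (Fin.castSucc ⟨k, hk⟩)), cf p d = 0 := by
      set a : Fin (M+1) := Fin.castSucc ⟨k, hk⟩ with ha
      set b : Fin (M+1) := Fin.succ ⟨k, hk⟩ with hb
      have hab : a ≠ b := by
        intro h
        have := congrArg Fin.val h
        simp [ha, hb] at this
      have hlab : l b ≤ l a := hl (by rw [Fin.le_def]; simp [ha, hb])
      refine Finset.sum_involution (fun d _ => d ∘ Equiv.swap a b) ?_ ?_ ?_ ?_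
      · intro d _
        rw [hp.swap d hab]; ring
      · intro d _ hne he
        have := hp.swap d hab
        rw [he] at this
        omega
      · intro d hd
        simp only [Finset.mem_filter, Fintype.mem_piFinset, Finset.mem_range, not_lt] at hd ⊢
        obtain ⟨⟨h1, h2, h3⟩, h4⟩ := hd
        refine ⟨⟨?_, ?_, ?_⟩, ?_⟩
        · intro i
          simp only [Function.comp_apply, Equiv.swap_apply_def]
          have hb' := h1 b
          split_ifs with e1 e2
          · subst e1; omega
          · subst e2; omega
          · exact h1 i
        · rw [← h2]
          congr 1
          exact Equiv.sum_comp (Equiv.swap a b) d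
        · intro i hi
          have e : Equiv.swap a b i.castSucc = i.castSucc := by
            apply Equiv.swap_apply_of_ne_of_ne
            · intro h
              have := congrArg Fin.val h
              simp [ha] at this
              omega
            · intro h
              have := congrArg Fin.val h
              simp [hb] at this
              omega
          rw [Function.comp_apply, e]
          exact h3 i hi
        · simp only [Function.comp_apply, Equiv.swap_apply_left]
          have := h1 b
          omega
      · intro d _
        funext i
        simp
    rw [hz, add_zero, Finset.filter_filter]
    refine Finset.sum_congr ?_ fun _ _ => rfl
    apply Finset.filter_congr
    intro d _
    constructor
    · rintro ⟨⟨h1, h2⟩, h3⟩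
      refine ⟨h1, fun i hi => ?_⟩
      rcases Nat.lt_succ_iff_lt_or_eq.1 hi with h | h
      · exact h2 i h
      · have : i = ⟨k, hk⟩ := Fin.ext h
        rw [this]; exact h3
    · rintro ⟨h1, h2⟩
      exact ⟨⟨h1, fun i hi => h2 i (by omega)⟩, h2 _ (by simp)⟩

lemma pieri {p : MvPolynomial (Fin (M+1)) ℤ} (hp : IsAlt p) (n : ℕ) {l : Fin (M+1) → ℕ}
    (hl : Antitone l) :
    cf (p * HH (M+1) n) l = ∑ d ∈ (Fintype.piFinset (fun i => Finset.range (l i + 1))).filter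
      (fun d => ∑ i, d i + n = ∑ i, l i ∧ ∀ i : Fin M, l i.succ < d i.castSucc), cf p d := by
  rw [pieri_aux hp n hl M]
  refine Finset.sum_congr ?_ fun _ _ => rfl
  apply Finset.filter_congr
  intro d _
  refine and_congr Iff.rfl (forall_congr' fun i => ?_)
  simp

lemma pieri_ne {p : MvPolynomial (Fin (M+1)) ℤ} (hp : IsAlt p) (n : ℕ) {l : Fin (M+1) → ℕ}
    (hl : Antitone l) (h : cf (p * HH (M+1) n) l ≠ 0) :
    ∃ d, cf p d ≠ 0 ∧ StrictAnti d ∧ ∑ i, d i + n = ∑ i, l i ∧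
      ∀ i : Fin M, l i.succ < d i.castSucc := by
  rw [pieri hp n hl] at h
  obtain ⟨d, hd, hne⟩ := Finset.exists_ne_zero_of_sum_ne_zero h
  simp only [Finset.mem_filter, Fintype.mem_piFinset, Finset.mem_range] at hd
  obtain ⟨h1, h2, h3⟩ := hd
  refine ⟨d, hne, ?_, h2, h3⟩
  rw [Fin.strictAnti_iff_succ_lt]
  intro i
  have := h1 i.succ
  have := h3 i
  omega

lemma pieri_one {k : Fin (M+1) → ℕ} (hk : StrictAnti k) (n : ℕ) {l : Fin (M+1) → ℕ}
    (hl : Antitone l) (h1 : ∀ i, k i ≤ l i) (h2 : ∑ i, k i + n = ∑ i, l i)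
    (h3 : ∀ i : Fin M, l i.succ < k i.castSucc) :
    cf (alt (X : Fin (M+1) → MvPolynomial (Fin (M+1)) ℤ) k * HH (M+1) n) l = 1 := by
  rw [pieri (alt_isAlt k) n hl, Finset.sum_eq_single k]
  · rw [cf_alt_strict hk hk, if_pos rfl]
  · intro d hd hne
    simp only [Finset.mem_filter, Fintype.mem_piFinset, Finset.mem_range] at hd
    obtain ⟨g1, g2, g3⟩ := hd
    rw [cf_alt_strict hk, if_neg (Ne.symm hne)]
    rw [Fin.strictAnti_iff_succ_lt]
    intro i
    have := g1 i.succ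
    have := g3 i
    omega
  · intro h
    exfalso
    apply h
    simp only [Finset.mem_filter, Fintype.mem_piFinset, Finset.mem_range]
    exact ⟨fun i => by have := h1 i; omega, h2, h3⟩

end pieri

section main

open Equiv

variable {N : ℕ}

/-- Schur polynomial of a vector of row lengths. -/
noncomputable def SP (lam : Fin N → ℕ) : MvPolynomial (Fin N) ℤ :=
  ss (X : Fin N → MvPolynomial (Fin N) ℤ) (cellsOf lam)

/-- Alternant polynomial. -/
noncomputable def AP (l : Fin N → ℕ) : MvPolynomial (Fin N) ℤ :=
  alt (X : Fin N → MvPolynomial (Fin N) ℤ) l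

lemma col_lt {s : Finset (ℕ × ℕ)} {T : s → Fin N} (hT : IsSemistandardOn s T)
    (hs : ∀ i j, (i + 1, j) ∈ s → (i, j) ∈ s)
    (i j k : ℕ) (h1 : (i, j) ∈ s) (h2 : (i + k + 1, j) ∈ s) :
    T ⟨(i, j), h1⟩ < T ⟨(i + k + 1, j), h2⟩ := by
  induction k with
  | zero => exact hT.2 i j h1 h2
  | succ k ih =>
    have h3 : (i + k + 1, j) ∈ s := hs _ _ h2
    exact (ih h3).trans (hT.2 _ _ h3 h2)

lemma SP_exp_le {nu : Fin N → ℕ} (hnu : Antitone nu) {c : ℕ} (hc : ∀ i, nu i ≤ c)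
    (b : Fin N →₀ ℕ) (hb : coeff b (SP nu) ≠ 0) (i : Fin N) : b i ≤ c := by
  classical
  unfold SP ss at hb
  rw [coeff_sum] at hb
  obtain ⟨T, hT, hne⟩ := Finset.exists_ne_zero_of_sum_ne_zero hb
  have hT := (Finset.mem_filter.1 hT).2
  have e : ∏ c : cellsOf nu, (X (T c) : MvPolynomial (Fin N) ℤ)
      = monomial (∑ c : cellsOf nu, Finsupp.single (T c) 1) 1 := by
    rw [monomial_sum_one]
    rfl
  rw [e, coeff_monomial] at hne
  have hb : ∑ c : cellsOf nu, Finsupp.single (T c) 1 = b := by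
    by_contra h
    rw [if_neg h] at hne
    exact hne rfl
  rw [← hb, Finsupp.finsetSum_apply]
  simp only [Finsupp.single_apply]
  rw [Finset.sum_boole]
  simp only [Nat.cast_id]
  rw [← Finset.card_range c]
  apply Finset.card_le_card_of_injOn (fun c => c.1.2)
  · rintro ⟨⟨a, d⟩, h⟩ _
    rw [mem_cellsOf] at h
    obtain ⟨h1, h2⟩ := h
    simp only [Finset.coe_range, Set.mem_Iio]
    exact lt_of_lt_of_le h2 (hc _)
  · rintro ⟨⟨a, d⟩, h⟩ h1 ⟨⟨a', d'⟩, h'⟩ h2 hd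
    simp only [Finset.coe_filter, Finset.mem_univ, true_and, Set.mem_ofPred_eq] at h1 h2
    simp only at hd
    subst hd
    have hup := fun i j => cellsOf_up hnu i j
    rcases lt_trichotomy a a' with hlt | heq | hlt
    · obtain ⟨k, rfl⟩ := Nat.exists_eq_add_of_lt hlt
      have := col_lt hT hup _ _ k h h'
      rw [h1, h2] at this
      exact absurd this (lt_irrefl _)
    · subst heq; rfl
    · obtain ⟨k, rfl⟩ := Nat.exists_eq_add_of_lt hlt
      have := col_lt hT hup _ _ k h' h
      rw [h1, h2] at this
      exact absurd this (lt_irrefl _)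

lemma base_case {nu : Fin N → ℕ} (hnu : Antitone nu) {c : ℕ} (hc : ∀ i, nu i ≤ c)
    {m l : Fin N → ℕ} (hm : StrictAnti m) (hl : StrictAnti l)
    (h : cf (AP m * SP nu) l ≠ 0) (i : Fin N) : l i ≤ m i + c := by
  classical
  unfold cf at h
  rw [coeff_mul] at h
  obtain ⟨⟨a, b⟩, hab, hne⟩ := Finset.exists_ne_zero_of_sum_ne_zero h
  have hab := Finset.HasAntidiagonal.mem_antidiagonal.1 hab
  have ha := left_ne_zero_of_mul hne
  have hb := SP_exp_le hnu hc b (right_ne_zero_of_mul hne)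
  obtain ⟨σ, hσ⟩ : ∃ σ : Perm (Fin N), m ∘ σ = a := by
    apply cf_alt_ne
    unfold cf
    rwa [show Finsupp.equivFunOnFinite.symm (a : Fin N → ℕ) = a by ext; simp]
  have hsum : ∀ j, l j ≤ m (σ j) + c := by
    intro j
    have h1 := DFunLike.congr_fun hab j
    have h2 := congrFun hσ j
    have h3 := hb j
    simp only [Finsupp.add_apply, Finsupp.equivFunOnFinite_symm_apply_apply,
      Function.comp_apply] at h1 h2
    omega
  obtain ⟨j, hj, hij⟩ : ∃ j, j ≤ i ∧ i ≤ σ j := by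
    by_contra hcon
    push Not at hcon
    have := Finset.card_le_card_of_injOn (s := Finset.Iic i) (t := Finset.Iio i) σ
      (by intro j hj; simpa using hcon j (by simpa using hj)) σ.injective.injOn
    simp at this
  have h1 := hl.antitone hj
  have h2 := hm.antitone hij
  have h3 := hsum j
  omega

lemma strictAnti_add_dl {lam : Fin N → ℕ} (h : Antitone lam) : StrictAnti (lam + dl N) := by
  intro i j hij
  have h1 := h hij.le
  have h2 : (i : ℕ) < j := hij
  have := j.2
  simp only [Pi.add_apply, dl]
  omega

lemma dl_strictAnti : StrictAnti (dl N) := by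
  intro i j hij
  have h2 : (i : ℕ) < j := hij
  have := j.2
  simp only [dl]
  omega

lemma dl_le {l : Fin N → ℕ} (hl : StrictAnti l) (i : Fin N) : dl N i ≤ l i := by
  have : ∀ k : ℕ, ∀ i : Fin N, N - 1 - i = k → k ≤ l i := by
    intro k
    induction k with
    | zero => intro i _; exact Nat.zero_le _
    | succ k ih =>
      intro i hi
      have hlt : (i : ℕ) + 1 < N := by omega
      have h1 := ih ⟨i + 1, hlt⟩ (by simp only; omega)
      have h2 : l ⟨i + 1, hlt⟩ < l i := hl (by rw [Fin.lt_def]; simp)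
      omega
  exact this _ i rfl

lemma sub_dl_add {l : Fin N → ℕ} (hl : StrictAnti l) : (l - dl N) + dl N = l := by
  funext i
  have := dl_le hl i
  simp only [Pi.add_apply, Pi.sub_apply]
  omega

lemma sub_dl_antitone {l : Fin N → ℕ} (hl : StrictAnti l) : Antitone (l - dl N) := by
  have key : ∀ k : ℕ, ∀ i j : Fin N, (j : ℕ) = i + k → l j + k ≤ l i := by
    intro k
    induction k with
    | zero =>
      intro i j h
      have : j = i := Fin.ext h
      subst this; simp
    | succ k ih =>
      intro i j h
      have := j.2
      have h1 := ih i ⟨i + k, by omega⟩ rfl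
      have h2 : l j < l ⟨i + k, by omega⟩ := hl (by rw [Fin.lt_def]; simp only; omega)
      omega
  intro i j hij
  have h1 : (i : ℕ) ≤ j := hij
  have := key (j - i) i j (by omega)
  have := j.2
  simp only [Pi.sub_apply, dl]
  omega

lemma AP_eq {lam : Fin N → ℕ} (h : Antitone lam) : AP (lam + dl N) = AP (dl N) * SP lam :=
  bialternant h _

lemma AP_ne : AP (dl N) ≠ 0 := by
  intro h
  have := cf_alt_strict (dl_strictAnti (N := N)) dl_strictAnti
  change cf (AP (dl N)) _ = _ at this
  rw [h, if_pos rfl] at this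
  simp [cf] at this

lemma SP_symm {lam : Fin N → ℕ} (h : Antitone lam) (σ : Perm (Fin N)) :
    rename σ (SP lam) = SP lam := by
  have h1 := AP_eq h
  have h2 := congrArg (rename σ) h1
  rw [map_mul, show rename σ (AP (lam + dl N)) = _ from alt_isAlt _ σ,
    show rename σ (AP (dl N)) = _ from alt_isAlt _ σ] at h2
  change (Perm.sign σ : ℤ) • AP (lam + dl N) = ((Perm.sign σ : ℤ) • AP (dl N)) * _ at h2
  rw [h1, smul_mul_assoc] at h2
  have h3 : (Perm.sign σ : ℤ) ≠ 0 := by simp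
  have h4 := smul_right_injective _ h3 h2
  exact (mul_left_cancel₀ AP_ne h4).symm

lemma main_bound {M : ℕ} (r c : ℕ) : ∀ (nu : Fin (M+1) → ℕ), Antitone nu →
    (∀ i : Fin (M+1), r ≤ (i : ℕ) → nu i ≤ c) →
    ∀ m l : Fin (M+1) → ℕ, StrictAnti m → StrictAnti l → cf (AP m * SP nu) l ≠ 0 →
    ∀ i j : Fin (M+1), (j : ℕ) = i + r → l j + r ≤ m i + c := by
  classical
  induction r with
  | zero =>
    intro nu hnu hc m l hm hl h i j hij
    have : j = i := Fin.ext hij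
    subst this
    exact base_case hnu (fun i => hc i (Nat.zero_le _)) hm hl h j
  | succ r ihr =>
    suffices H : ∀ w : ℕ, ∀ (nu : Fin (M+1) → ℕ), ∑ i : Fin M, nu i.succ = w → Antitone nu →
      (∀ i : Fin (M+1), r + 1 ≤ (i : ℕ) → nu i ≤ c) →
      ∀ m l : Fin (M+1) → ℕ, StrictAnti m → StrictAnti l → cf (AP m * SP nu) l ≠ 0 →
      ∀ i j : Fin (M+1), (j : ℕ) = i + (r + 1) → l j + (r + 1) ≤ m i + c by
      intro nu; exact H _ nu rfl
    intro w
    induction w using Nat.strong_induction_on with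
    | _ w ihw =>
    intro nu hw hnu hc m l hm hl hne i j hij
    by_contra hviol
    apply hne
    -- the peeled partition
    let ka : Fin (M+1) → ℕ := Fin.snoc (α := fun _ => ℕ) (fun i : Fin M => nu i.succ) 0
    have ka1 : ∀ i : Fin M, ka i.castSucc = nu i.succ := fun i => by simp [ka]
    have ka2 : ka (Fin.last M) = 0 := by simp [ka]
    have hka : Antitone ka := by
      rw [Fin.antitone_iff_succ_le]
      intro i
      rw [ka1]
      rcases Fin.eq_castSucc_or_eq_last i.succ with ⟨i', h⟩ | h
      · rw [h, ka1]
        apply hnu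
        rw [Fin.le_def]
        have := congrArg Fin.val h
        simp only [Fin.val_succ, Fin.val_castSucc] at this ⊢
        omega
      · rw [h, ka2]; exact Nat.zero_le _
    have hkale : ∀ i, ka i ≤ nu i := by
      intro i
      rcases Fin.eq_castSucc_or_eq_last i with ⟨i', h⟩ | h
      · rw [h, ka1]
        exact hnu (Fin.castSucc_lt_succ).le
      · rw [h, ka2]; exact Nat.zero_le _
    have hkac : ∀ i : Fin (M+1), r ≤ (i : ℕ) → ka i ≤ c := by
      intro i hi
      rcases Fin.eq_castSucc_or_eq_last i with ⟨i', h⟩ | h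
      · rw [h, ka1]
        apply hc
        have := congrArg Fin.val h
        simp only [Fin.val_succ, Fin.val_castSucc] at this ⊢
        omega
      · rw [h, ka2]; exact Nat.zero_le _
    have hkasum : ∑ i, ka i = w := by
      rw [Fin.sum_univ_castSucc, ka2, add_zero, ← hw]
      exact Finset.sum_congr rfl fun i _ => ka1 i
    have hnusum : ∑ i, nu i = nu 0 + w := by
      rw [Fin.sum_univ_succ, hw]
    have hdl : ∀ i : Fin M, dl (M+1) i.castSucc = dl (M+1) i.succ + 1 := by
      intro i
      simp only [dl, Fin.val_castSucc, Fin.val_succ]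
      omega
    set q := AP (ka + dl (M+1)) * HH (M+1) (nu 0) with hq
    have hqalt : IsAlt q := IsAlt.mul_symm (alt_isAlt _) (HH_symm _)
    have hexp := hqalt.expand
    -- cancel
    have hS : SP ka * HH (M+1) (nu 0) =
        ∑ e ∈ q.support.filter (fun e : Fin (M+1) →₀ ℕ => StrictAnti (e : Fin (M+1) → ℕ)),
          cf q e • SP ((e : Fin (M+1) → ℕ) - dl (M+1)) := by
      apply mul_left_cancel₀ (AP_ne (N := M+1))
      rw [← mul_assoc, ← AP_eq hka, ← hq, Finset.mul_sum]
      conv_lhs => rw [hexp]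
      refine Finset.sum_congr rfl fun e he => ?_
      have he := (Finset.mem_filter.1 he).2
      rw [mul_smul_comm, ← AP_eq (sub_dl_antitone he), sub_dl_add he]
      rfl
    have hL : cf (AP m * SP ka * HH (M+1) (nu 0)) l = 0 := by
      by_contra h0
      have halt : IsAlt (AP m * SP ka) := IsAlt.mul_symm (alt_isAlt _) (SP_symm hka)
      obtain ⟨d, hd1, hd2, _, hd3⟩ := pieri_ne halt _ hl.antitone h0
      have hj : (j : ℕ) < M + 1 := j.2
      have h1 := ihr ka hka hkac m d hm hd2 hd1 i ⟨i + r, by omega⟩ rfl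
      have h2 := hd3 ⟨i + r, by omega⟩
      have e1 : (Fin.succ ⟨i + r, by omega⟩ : Fin (M+1)) = j := by
        apply Fin.ext; simp; omega
      have e2 : (Fin.castSucc ⟨i + r, by omega⟩ : Fin (M+1)) = ⟨i + r, by omega⟩ := rfl
      rw [e1, e2] at h2
      omega
    rw [mul_assoc, hS, Finset.mul_sum] at hL
    have hterm : ∀ e ∈ q.support.filter (fun e : Fin (M+1) →₀ ℕ => StrictAnti (e : Fin (M+1) → ℕ)),
        e ≠ Finsupp.equivFunOnFinite.symm (nu + dl (M+1)) →
        coeff (Finsupp.equivFunOnFinite.symm l)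
          (AP m * cf q e • SP ((e : Fin (M+1) → ℕ) - dl (M+1))) = 0 := by
      intro e he hene
      obtain ⟨he1, he2⟩ := Finset.mem_filter.1 he
      have hqe : cf q e ≠ 0 := by
        unfold cf
        rw [show Finsupp.equivFunOnFinite.symm (e : Fin (M+1) → ℕ) = e by ext; simp]
        exact mem_support_iff.1 he1
      obtain ⟨d, hd1, hd2, hd3, hd4⟩ := pieri_ne (alt_isAlt _) _ he2.antitone hqe
      have hd : d = ka + dl (M+1) := by
        have := cf_alt_strict (strictAnti_add_dl hka) hd2
        by_contra hcon
        rw [if_neg (Ne.symm hcon)] at this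
        exact hd1 this
      subst hd
      rw [mul_smul_comm, coeff_smul]
      by_contra hcon
      have hcon := right_ne_zero_of_mul (a := cf q e) hcon
      set la := (e : Fin (M+1) → ℕ) - dl (M+1) with hla
      have hlae : ∀ i, e i = la i + dl (M+1) i := by
        intro i
        have := congrFun (sub_dl_add he2) i
        rw [← this]; rfl
      have hla1 : ∀ i : Fin M, la i.succ ≤ nu i.succ := by
        intro i
        have h1 := hd4 i
        rw [hlae, Pi.add_apply, ka1, hdl] at h1
        omega
      have hlasum : ∑ i, la i = ∑ i, nu i := by
        have h1 : ∑ i, e i = ∑ i, la i + ∑ i, dl (M+1) i := by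
          rw [← Finset.sum_add_distrib]
          exact Finset.sum_congr rfl fun i _ => hlae i
        simp only [Pi.add_apply, Finset.sum_add_distrib] at hd3
        omega
      have hlt : ∑ i : Fin M, la i.succ < w := by
        rw [← hw]
        refine lt_of_le_of_ne (Finset.sum_le_sum fun i _ => hla1 i) ?_
        intro heq
        have h1 := (Finset.sum_eq_sum_iff_of_le (fun i _ => hla1 i)).1 heq
        apply hene
        have h2 : la = nu := by
          funext i
          refine Fin.cases ?_ (fun i => h1 i (Finset.mem_univ _)) i
          rw [Fin.sum_univ_succ, Fin.sum_univ_succ (f := nu)] at hlasum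
          omega
        ext i
        rw [hlae, h2]
        simp
      refine hviol (ihw _ hlt la rfl (sub_dl_antitone he2) ?_ m l hm hl hcon i j hij)
      intro i hi
      refine Fin.cases ?_ (fun i hi => ?_) i hi
      · intro h; simp at h
      · exact (hla1 i).trans (hc _ hi)
    have hone : cf q (nu + dl (M+1)) = 1 := by
      apply pieri_one (strictAnti_add_dl hka) _ (strictAnti_add_dl hnu).antitone
      · intro i
        simp only [Pi.add_apply]
        have := hkale i
        omega
      · simp only [Pi.add_apply, Finset.sum_add_distrib]
        omega
      · intro i
        simp only [Pi.add_apply]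
        rw [ka1, hdl]
        omega
    unfold cf at hL
    rw [coeff_sum, Finset.sum_eq_single (Finsupp.equivFunOnFinite.symm (nu + dl (M+1)))] at hL
    · have e1 : ((Finsupp.equivFunOnFinite.symm (nu + dl (M+1)) : Fin (M+1) →₀ ℕ) :
          Fin (M+1) → ℕ) = nu + dl (M+1) := by
        ext; simp
      rw [e1] at hL
      change coeff _ (AP m * cf q (nu + dl (M+1)) • _) = 0 at hL
      rw [hone, one_smul] at hL
      have e2 : (nu + dl (M+1)) - dl (M+1) = nu := by
        funext i; simp
      rw [e2] at hL
      exact hL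
    · exact hterm
    · intro hnot
      exfalso
      apply hnot
      rw [Finset.mem_filter, mem_support_iff]
      constructor
      · change cf q (nu + dl (M+1)) ≠ 0
        rw [hone]; exact one_ne_zero
      · have := strictAnti_add_dl hnu
        simpa using this

/-- Row length vector of a Young diagram. -/
def rv (N : ℕ) (μ : YoungDiagram) : Fin N → ℕ := fun i => μ.rowLen i

lemma rv_antitone (μ : YoungDiagram) : Antitone (rv N μ) := by
  intro i j hij
  exact μ.rowLen_anti _ _ hij

lemma cells_eq (μ : YoungDiagram) (h : μ.colLen 0 ≤ N) : μ.cells = cellsOf (rv N μ) := by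
  ext ⟨i, j⟩
  rw [mem_cellsOf, YoungDiagram.mem_cells]
  constructor
  · intro hm
    have h0 : (i, 0) ∈ μ := μ.up_left_mem le_rfl (Nat.zero_le _) hm
    exact ⟨lt_of_lt_of_le (YoungDiagram.mem_iff_lt_colLen.1 h0) h,
      YoungDiagram.mem_iff_lt_rowLen.1 hm⟩
  · rintro ⟨_, hj⟩
    exact YoungDiagram.mem_iff_lt_rowLen.2 hj

lemma schur_eq (μ : YoungDiagram) (h : μ.colLen 0 ≤ N) : schurPoly N μ = SP (rv N μ) := by
  unfold SP
  rw [← cells_eq μ h]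
  rfl

lemma colLen_le_card (μ : YoungDiagram) : μ.colLen 0 ≤ μ.cells.card := by
  rw [YoungDiagram.colLen_eq_card]
  apply Finset.card_le_card
  intro c hc
  exact (YoungDiagram.mem_col_iff.1 hc).1

lemma rv_inj (μ ν : YoungDiagram) (h : μ.colLen 0 ≤ N) (h' : ν.colLen 0 ≤ N)
    (he : rv N μ = rv N ν) : μ = ν := by
  apply YoungDiagram.ext
  rw [cells_eq μ h, cells_eq ν h', he]

end main

end LRaux

/-- **Positivity condition for the Littlewood–Richardson coefficients.**
The LR coefficient `c^λ_{μ,ν}` is the coefficient of `s_λ` in the Schur expansion of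
`s_μ · s_ν` in `N ≥ |μ| + |ν|` variables; here this expansion is encoded by a
finitely supported coefficient family `co` (supported on diagrams with at most `N`
rows, which makes it unique).  If `c^λ_{μ,ν} ≠ 0`, then for every outer corner
`(c₁, r₁)` of `μ` and every outer corner `(c₂, r₂)` of `ν`, the point
`(c₁ + c₂, r₁ + r₂)` does not belong to the Young diagram `[λ]`; that is,
`λ_{r₁+r₂+1} ≤ c₁ + c₂`. -/
theorem LR_outer_corner_bound (lam mu nu : YoungDiagram)
    (N : ℕ) (hN : mu.cells.card + nu.cells.card ≤ N)
    (co : YoungDiagram →₀ ℕ)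
    (hrows : ∀ l ∈ co.support, l.colLen 0 ≤ N)
    (hexp : schurPoly N mu * schurPoly N nu = ∑ l ∈ co.support, (co l : ℤ) • schurPoly N l)
    (hne : co lam ≠ 0)
    (c₁ r₁ c₂ r₂ : ℕ) (h₁ : IsOuterCorner mu c₁ r₁) (h₂ : IsOuterCorner nu c₂ r₂) :
    (r₁ + r₂, c₁ + c₂) ∉ lam ∧ lam.rowLen (r₁ + r₂) ≤ c₁ + c₂ := by
  classical
  have hmu : mu.colLen 0 ≤ N := (LRaux.colLen_le_card mu).trans (by omega)
  have hnu : nu.colLen 0 ≤ N := (LRaux.colLen_le_card nu).trans (by omega)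
  have hlam : lam.colLen 0 ≤ N := hrows lam (Finsupp.mem_support_iff.2 hne)
  have hmain : lam.rowLen (r₁ + r₂) ≤ c₁ + c₂ := by
    by_cases hr : r₁ + r₂ < N
    swap
    · by_contra hcon
      have h1 : (r₁ + r₂, 0) ∈ lam := YoungDiagram.mem_iff_lt_rowLen.2 (by omega)
      have := YoungDiagram.mem_iff_lt_colLen.1 h1
      omega
    have m1 : mu.rowLen r₁ ≤ c₁ := by
      by_contra hcon
      exact h₁.1 (YoungDiagram.mem_iff_lt_rowLen.2 (by omega))
    have m2 : nu.rowLen r₂ ≤ c₂ := by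
      by_contra hcon
      exact h₂.1 (YoungDiagram.mem_iff_lt_rowLen.2 (by omega))
    have hco : LRaux.cf (LRaux.AP (LRaux.rv N mu + LRaux.dl N) * LRaux.SP (LRaux.rv N nu))
        (LRaux.rv N lam + LRaux.dl N) = co lam := by
      rw [LRaux.AP_eq (LRaux.rv_antitone mu), mul_assoc, ← LRaux.schur_eq mu hmu,
        ← LRaux.schur_eq nu hnu, hexp, Finset.mul_sum]
      unfold LRaux.cf
      rw [coeff_sum, Finset.sum_eq_single lam]
      · rw [mul_smul_comm, LRaux.schur_eq lam hlam, ← LRaux.AP_eq (LRaux.rv_antitone lam),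
          coeff_smul]
        have := LRaux.cf_alt_strict (LRaux.strictAnti_add_dl (LRaux.rv_antitone (N := N) lam))
          (LRaux.strictAnti_add_dl (LRaux.rv_antitone lam))
        rw [if_pos rfl] at this
        unfold LRaux.cf at this
        unfold LRaux.AP
        rw [this]; simp
      · intro l hl hll
        have hl0 := hrows l hl
        rw [mul_smul_comm, LRaux.schur_eq l hl0, ← LRaux.AP_eq (LRaux.rv_antitone l),
          coeff_smul]
        have := LRaux.cf_alt_strict (LRaux.strictAnti_add_dl (LRaux.rv_antitone (N := N) l))
          (LRaux.strictAnti_add_dl (LRaux.rv_antitone lam))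
        rw [if_neg (fun h => hll (LRaux.rv_inj l lam hl0 hlam (add_right_cancel h)))] at this
        unfold LRaux.cf at this
        unfold LRaux.AP
        rw [this]; simp
      · intro h
        exact absurd (Finsupp.mem_support_iff.2 hne) h
    have hcne : LRaux.cf (LRaux.AP (LRaux.rv N mu + LRaux.dl N) * LRaux.SP (LRaux.rv N nu))
        (LRaux.rv N lam + LRaux.dl N) ≠ 0 := by
      rw [hco]; exact_mod_cast hne
    obtain ⟨M, rfl⟩ : ∃ M, N = M + 1 := ⟨N - 1, by omega⟩
    have key := LRaux.main_bound r₂ c₂ (LRaux.rv (M+1) nu) (LRaux.rv_antitone nu)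
      (fun i hi => (nu.rowLen_anti _ _ hi).trans m2) _ _
      (LRaux.strictAnti_add_dl (LRaux.rv_antitone mu))
      (LRaux.strictAnti_add_dl (LRaux.rv_antitone lam)) hcne ⟨r₁, by omega⟩ ⟨r₁ + r₂, hr⟩ rfl
    simp only [Pi.add_apply, LRaux.rv, LRaux.dl] at key
    omega
  refine ⟨fun h => ?_, hmain⟩
  have := YoungDiagram.mem_iff_lt_rowLen.1 h
  omega
end

section
/- Let n ≥ 1 and let λ, μ be partitions. If the SXP coefficient ⟨s_μ, p_n ∘ s_λ⟩ is nonzero, then [λ] ⊆ [μ], i.e. λ_i ≤ μ_i for all i. -/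
open MvPolynomial Finset

namespace SXPaux

abbrev YD := YoungDiagram
abbrev FM := YoungDiagram →₀ ℤ

theorem finite_below (l : YD) : {ν : YD | ν ≤ l}.Finite := by
  have h := (l.cells.powerset.finite_toSet).preimage
    (f := YoungDiagram.cells) (fun a _ b _ h => YoungDiagram.ext h)
  refine h.subset ?_
  intro ν hν
  simp only [Set.mem_preimage, Finset.mem_coe, Finset.mem_powerset]
  exact hν

noncomputable def below (l : YD) : Finset YD := (finite_below l).toFinset

theorem mem_below {l ν : YD} : ν ∈ below l ↔ ν ≤ l := by simp [below]

open scoped Classical in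
noncomputable def Op (R : YD → YD → Prop) (m : ℕ) : FM →ₗ[ℤ] FM :=
  Finsupp.linearCombination ℤ (fun l =>
    ∑ ν ∈ (below l).filter (fun ν => R l ν ∧ ν.cells.card + m = l.cells.card),
      Finsupp.single ν (1 : ℤ))

/-- horizontal strips -/
def Hs (l ν : YD) : Prop := ν ≤ l ∧ ∀ i j, (i + 1, j) ∈ l → (i, j) ∈ ν
/-- vertical strips -/
def Vs (l ν : YD) : Prop := ν ≤ l ∧ ∀ i j, (i, j + 1) ∈ l → (i, j) ∈ ν

noncomputable abbrev D (m : ℕ) : FM →ₗ[ℤ] FM := Op Hs m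
noncomputable abbrev V (m : ℕ) : FM →ₗ[ℤ] FM := Op Vs m

open scoped Classical in
theorem Op_single_apply {R : YD → YD → Prop} (hR : ∀ l ν, R l ν → ν ≤ l) (m : ℕ) (l ν : YD) :
    Op R m (Finsupp.single l 1) ν
      = if R l ν ∧ ν.cells.card + m = l.cells.card then 1 else 0 := by
  simp only [Op, Finsupp.linearCombination_single, one_smul, Finsupp.finsetSum_apply,
    Finsupp.single_apply]
  rw [Finset.sum_ite_eq']
  congr 1
  simp only [Finset.mem_filter, mem_below, eq_iff_iff]
  constructor
  · exact fun h => h.2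
  · exact fun h => ⟨hR _ _ h.1, h⟩

open scoped Classical in
theorem Op_apply {R : YD → YD → Prop} (hR : ∀ l ν, R l ν → ν ≤ l) (m : ℕ) (u : FM) (ν : YD) :
    Op R m u ν = ∑ l ∈ u.support, u l *
      (if R l ν ∧ ν.cells.card + m = l.cells.card then 1 else 0) := by
  conv_lhs => rw [← Finsupp.sum_single u]
  rw [Finsupp.sum, map_sum, Finsupp.finsetSum_apply]
  refine Finset.sum_congr rfl fun l _ => ?_
  rw [← Op_single_apply hR]
  have : Finsupp.single l (u l) = u l • Finsupp.single l (1 : ℤ) := by simp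
  rw [this, map_smul]
  rfl

theorem Op_ne_zero {R : YD → YD → Prop} (hR : ∀ l ν, R l ν → ν ≤ l) {m : ℕ} {u : FM} {ν : YD}
    (h : Op R m u ν ≠ 0) : ∃ l, u l ≠ 0 ∧ R l ν ∧ ν.cells.card + m = l.cells.card := by
  classical
  rw [Op_apply hR] at h
  obtain ⟨l, hl, h2⟩ := Finset.exists_ne_zero_of_sum_ne_zero h
  refine ⟨l, by simpa using hl, ?_⟩
  by_contra hc
  simp [hc] at h2

theorem Hs_le : ∀ l ν, Hs l ν → ν ≤ l := fun _ _ h => h.1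
theorem Vs_le : ∀ l ν, Vs l ν → ν ≤ l := fun _ _ h => h.1

/-- the abstract triangularity step -/
theorem core {R : YD → YD → Prop} (hR : ∀ l ν, R l ν → ν ≤ l) (t : YD → YD)
    (ht : ∀ l, R l (t l)) (hmin : ∀ l ν, R l ν → t l ≤ ν)
    (hinj : ∀ l l', t l = t l' → l.cells.card = l'.cells.card → l = l')
    (c c' : ℕ × ℕ) (hc : ∀ l, c ∈ l ↔ c' ∈ t l) (u : FM)
    (h : ∀ m ν, c' ∉ ν → Op R m u ν = 0) : ∀ l, c ∉ l → u l = 0 := by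
  classical
  by_contra! hcon
  obtain ⟨l0, hl0, hul0⟩ := hcon
  let g : YD → ℕ := fun l => l.cells.card - (t l).cells.card
  have hcard : ∀ {a b : YD}, a ≤ b → a.cells.card ≤ b.cells.card :=
    fun h => Finset.card_le_card h
  obtain ⟨l, hl, hmax⟩ := Finset.exists_max_image (u.support.filter (fun l => c ∉ l)) g
    ⟨l0, by simp [hl0, hul0]⟩
  simp only [Finset.mem_filter, Finsupp.mem_support_iff] at hl hmax
  have h1 := h (g l) (t l) (by rw [← hc]; exact hl.2)
  rw [Op_apply hR, Finset.sum_eq_single l] at h1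
  · rw [if_pos] at h1
    · simp at h1; exact hl.1 h1
    · refine ⟨ht l, ?_⟩
      have := hcard (hR _ _ (ht l))
      simp only [g]; omega
  · intro l' hl' hne
    rw [if_neg, mul_zero]
    rintro ⟨h2, h3⟩
    apply hne
    have h4 := hmin _ _ h2
    have h5 : c ∉ l' := by
      rw [hc]; intro hh
      exact hl.2 ((hc l).2 (h4 hh))
    have h6 := hmax l' ⟨by simpa using hl', h5⟩
    have h7 := hcard h4
    have h8 := hcard (hR _ _ (ht l))
    have h9 := hcard (hR _ _ (ht l'))
    simp only [g] at h6 h3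
    have h10 : t l' = t l := YoungDiagram.ext (Finset.eq_of_subset_of_card_le h4 (by omega))
    exact hinj _ _ h10 (by rw [h10] at h6 h9; omega)
  · intro hh
    simp at hh
    exact absurd hh hl.1

/-- remove first row -/
noncomputable def tH (l : YD) : YD where
  cells := l.cells.preimage (fun p => (p.1 + 1, p.2)) (by
    intro a _ b _ h; simp only [Prod.mk.injEq, add_left_inj] at h; exact Prod.ext h.1 h.2)
  isLowerSet := by
    intro a b hba ha
    replace ha := Finset.mem_preimage.1 ha
    refine Finset.mem_preimage.2 ?_
    exact l.isLowerSet (show (b.1 + 1, b.2) ≤ (a.1 + 1, a.2) from ⟨Nat.succ_le_succ hba.1, hba.2⟩) ha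

/-- remove first column -/
noncomputable def tV (l : YD) : YD where
  cells := l.cells.preimage (fun p => (p.1, p.2 + 1)) (by
    intro a _ b _ h; simp only [Prod.mk.injEq, add_left_inj] at h; exact Prod.ext h.1 h.2)
  isLowerSet := by
    intro a b hba ha
    replace ha := Finset.mem_preimage.1 ha
    refine Finset.mem_preimage.2 ?_
    exact l.isLowerSet (show (b.1, b.2 + 1) ≤ (a.1, a.2 + 1) from ⟨hba.1, Nat.succ_le_succ hba.2⟩) ha

theorem mem_tH (l : YD) (i j : ℕ) : (i, j) ∈ tH l ↔ (i + 1, j) ∈ l := by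
  exact Finset.mem_preimage (hf := by
    intro a _ b _ h; simp only [Prod.mk.injEq, add_left_inj] at h; exact Prod.ext h.1 h.2)
theorem mem_tV (l : YD) (i j : ℕ) : (i, j) ∈ tV l ↔ (i, j + 1) ∈ l := by
  exact Finset.mem_preimage (hf := by
    intro a _ b _ h; simp only [Prod.mk.injEq, add_left_inj] at h; exact Prod.ext h.1 h.2)

theorem le_iff' {a b : YD} : a ≤ b ↔ ∀ i j, (i, j) ∈ a → (i, j) ∈ b :=
  ⟨fun h _ _ hh => h hh, fun h => fun c hh => h c.1 c.2 hh⟩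

theorem eq_of_le {a b : YD} (h : a ≤ b) (hc : a.cells.card = b.cells.card) : a = b :=
  YoungDiagram.ext (Finset.eq_of_subset_of_card_le h hc.ge)

theorem tH_inj (l l' : YD) (h : tH l = tH l') (hc : l.cells.card = l'.cells.card) : l = l' := by
  have key : ∀ l l' : YD, tH l = tH l' → l.rowLen 0 ≤ l'.rowLen 0 → l ≤ l' := by
    intro l l' h h2
    rw [le_iff']
    intro i j hij
    cases i with
    | zero => rw [YoungDiagram.mem_iff_lt_rowLen] at *; omega
    | succ i => rwa [← mem_tH, ← h, mem_tH]
  rcases le_total (l.rowLen 0) (l'.rowLen 0) with h2 | h2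
  · exact eq_of_le (key _ _ h h2) hc
  · exact (eq_of_le (key _ _ h.symm h2) hc.symm).symm

theorem tV_inj (l l' : YD) (h : tV l = tV l') (hc : l.cells.card = l'.cells.card) : l = l' := by
  have key : ∀ l l' : YD, tV l = tV l' → l.colLen 0 ≤ l'.colLen 0 → l ≤ l' := by
    intro l l' h h2
    rw [le_iff']
    intro i j hij
    cases j with
    | zero => rw [YoungDiagram.mem_iff_lt_colLen] at *; omega
    | succ i => rwa [← mem_tV, ← h, mem_tV]
  rcases le_total (l.colLen 0) (l'.colLen 0) with h2 | h2
  · exact eq_of_le (key _ _ h h2) hc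
  · exact (eq_of_le (key _ _ h.symm h2) hc.symm).symm

theorem up (l : YD) {i j i' j' : ℕ} (h : (i, j) ∈ l) (hi : i' ≤ i) (hj : j' ≤ j) : (i', j') ∈ l :=
  l.up_left_mem hi hj h

theorem Hs_tH (l : YD) : Hs l (tH l) := by
  refine ⟨le_iff'.2 fun i j h => ?_, fun i j h => (mem_tH _ _ _).2 h⟩
  rw [mem_tH] at h
  exact up l h (by omega) le_rfl

theorem Vs_tV (l : YD) : Vs l (tV l) := by
  refine ⟨le_iff'.2 fun i j h => ?_, fun i j h => (mem_tV _ _ _).2 h⟩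
  rw [mem_tV] at h
  exact up l h le_rfl (by omega)

/-- All test functionals with `b` vertical and `a` horizontal strips vanish. -/
def Z : ℕ → ℕ → FM → Prop
  | 0, 0, u => u ⊥ = 0
  | a + 1, 0, u => ∀ m, Z a 0 (D m u)
  | a, b + 1, u => ∀ m, Z a b (V m u)

theorem Z_H (a : ℕ) (u : FM) : Z (a + 1) 0 u ↔ ∀ m, Z a 0 (D m u) := by rw [Z]
theorem Z_V (a b : ℕ) (u : FM) : Z a (b + 1) u ↔ ∀ m, Z a b (V m u) := by
  cases a <;> rw [Z]

theorem Z_vanish : ∀ (b a : ℕ) (u : FM), Z a b u → ∀ l : YD, (a, b) ∉ l → u l = 0 := by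
  intro b
  induction b with
  | zero =>
    intro a
    induction a with
    | zero =>
      intro u h l hl
      have : l = ⊥ := by
        rw [eq_bot_iff, le_iff']
        intro i j hij
        exact absurd (up l hij (Nat.zero_le _) (Nat.zero_le _)) hl
      rw [this]
      simpa [Z] using h
    | succ a ih =>
      intro u h
      rw [Z_H] at h
      refine core Hs_le tH Hs_tH (fun l ν h => le_iff'.2 fun i j hij => ?_) tH_inj (a + 1, 0) (a, 0)
        (fun l => (mem_tH _ _ _).symm) u (fun m => ih _ (h m))
      exact h.2 _ _ ((mem_tH _ _ _).1 hij)
  | succ b ih =>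
    intro a u h
    rw [Z_V] at h
    refine core Vs_le tV Vs_tV (fun l ν h => le_iff'.2 fun i j hij => ?_) tV_inj (a, b + 1) (a, b)
      (fun l => (mem_tV _ _ _).symm) u (fun m => ih _ _ (h m))
    exact h.2 _ _ ((mem_tV _ _ _).1 hij)

/-- The ideal of combinations of diagrams containing a cell. -/
def I (a b : ℕ) (w : FM) : Prop := ∀ l, w l ≠ 0 → (a, b) ∈ l

theorem I_D {a b : ℕ} {w : FM} (h : I (a + 1) b w) (m : ℕ) : I a b (D m w) := by
  intro ν hν
  obtain ⟨l, h1, h2, _⟩ := Op_ne_zero Hs_le hν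
  exact h2.2 _ _ (h _ h1)

theorem I_V {a b : ℕ} {w : FM} (h : I a (b + 1) w) (m : ℕ) : I a b (V m w) := by
  intro ν hν
  obtain ⟨l, h1, h2, _⟩ := Op_ne_zero Vs_le hν
  exact h2.2 _ _ (h _ h1)

theorem I_zero (a b : ℕ) : I a b 0 := by intro l h; simp at h

theorem I_smul {a b : ℕ} {w : FM} (h : I a b w) (z : ℤ) : I a b (z • w) := by
  intro l hl
  apply h
  intro h0
  simp [h0] at hl

noncomputable def A (n g : ℕ) : FM →ₗ[ℤ] FM := if n ∣ g then D (g / n) else 0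
noncomputable def B (n g : ℕ) : FM →ₗ[ℤ] FM :=
  if n ∣ g then (-1 : ℤ) ^ (g + g / n) • V (g / n) else 0

noncomputable def run (O : ℕ → FM →ₗ[ℤ] FM) : List ℕ → FM → FM
  | [], u => u
  | g :: γ, u => run O γ (O g u)

theorem run_add (O : ℕ → FM →ₗ[ℤ] FM) (γ : List ℕ) (u v : FM) :
    run O γ (u + v) = run O γ u + run O γ v := by
  induction γ generalizing u v with
  | nil => rfl
  | cons g γ ih => simp only [run, map_add, ih]

theorem run_smul (O : ℕ → FM →ₗ[ℤ] FM) (γ : List ℕ) (z : ℤ) (u : FM) :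
    run O γ (z • u) = z • run O γ u := by
  induction γ generalizing u with
  | nil => rfl
  | cons g γ ih => simp only [run, map_smul, ih]

noncomputable def runL (O : ℕ → FM →ₗ[ℤ] FM) (γ : List ℕ) : FM →ₗ[ℤ] FM where
  toFun := run O γ
  map_add' := run_add O γ
  map_smul' := run_smul O γ

theorem run_sum {ι : Type*} (O : ℕ → FM →ₗ[ℤ] FM) (γ : List ℕ) (s : Finset ι) (f : ι → FM) :
    run O γ (∑ i ∈ s, f i) = ∑ i ∈ s, run O γ (f i) := map_sum (runL O γ) f s

theorem run_zero (O : ℕ → FM →ₗ[ℤ] FM) (γ : List ℕ) : run O γ 0 = 0 := map_zero (runL O γ)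

def P (n : ℕ) (u w : FM) : Prop := ∀ γ, run D γ u ⊥ = run (A n) γ w ⊥

theorem P_D {n : ℕ} {u w : FM} (h : P n u w) (m : ℕ) : P n (D m u) (A n m w) :=
  fun γ => h (m :: γ)

theorem P_smul {n : ℕ} {u w : FM} (h : P n u w) (z : ℤ) : P n (z • u) (z • w) := by
  intro γ
  simp [run_smul, h γ]

theorem P_sum {ι : Type*} {n : ℕ} (s : Finset ι) {u w : ι → FM} (h : ∀ i ∈ s, P n (u i) (w i)) :
    P n (∑ i ∈ s, u i) (∑ i ∈ s, w i) := by
  intro γ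
  simp only [run_sum, Finsupp.finsetSum_apply]
  exact Finset.sum_congr rfl fun i hi => h i hi γ


theorem lower_of_adj (s : Finset (ℕ × ℕ)) (h1 : ∀ i j, (i + 1, j) ∈ s → (i, j) ∈ s)
    (h2 : ∀ i j, (i, j + 1) ∈ s → (i, j) ∈ s) : IsLowerSet (s : Set (ℕ × ℕ)) := by
  have k1 : ∀ d i j, (i + d, j) ∈ s → (i, j) ∈ s := by
    intro d
    induction d with
    | zero => intro i j h; exact h
    | succ d ih => intro i j h; exact ih _ _ (h1 _ _ h)
  have k2 : ∀ d i j, (i, j + d) ∈ s → (i, j) ∈ s := by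
    intro d
    induction d with
    | zero => intro i j h; exact h
    | succ d ih => intro i j h; exact ih _ _ (h2 _ _ h)
  rintro ⟨i, j⟩ ⟨i', j'⟩ ⟨hi, hj⟩ h
  obtain ⟨d, rfl⟩ := Nat.exists_eq_add_of_le hi
  obtain ⟨e, rfl⟩ := Nat.exists_eq_add_of_le hj
  exact k1 _ _ _ (k2 _ _ _ h)

open scoped Classical in
theorem strip_cancel (l ν : YD) (hne : l ≠ ν) :
    ∑ ρ ∈ (below l).filter (fun ρ => Hs l ρ ∧ Vs ρ ν),
      (-1 : ℤ) ^ (l.cells.card - ρ.cells.card) = 0 := by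
  by_cases hle : ν ≤ l
  swap
  · rw [Finset.filter_eq_empty_iff.2, Finset.sum_empty]
    rintro ρ _ ⟨h1, h2⟩
    exact hle (h2.1.trans h1.1)
  -- there is a cell
  have hS : (l.cells \ ν.cells).Nonempty := by
    rw [Finset.sdiff_nonempty]
    intro h
    exact hne (le_antisymm h hle)
  obtain ⟨⟨r, c0⟩, hc0, hmax⟩ := Finset.exists_max_image _ (fun p : ℕ × ℕ => p.1) hS
  simp only [Finset.mem_sdiff, YoungDiagram.mem_cells] at hc0 hmax
  have hrow : ∀ i j, r < i → (i, j) ∈ l → (i, j) ∈ ν := by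
    intro i j hi h
    by_contra h2
    have := hmax (i, j) ⟨h, h2⟩
    simp at this; omega
  set c := ν.rowLen r with hc
  have hcν : (r, c) ∉ ν := by rw [YoungDiagram.mem_iff_lt_rowLen]; omega
  have hcl : (r, c) ∈ l := by
    apply up l hc0.1 le_rfl
    have := hc0.2
    rw [YoungDiagram.mem_iff_lt_rowLen] at this; omega
  have hlt : ∀ j, j < c → (r, j) ∈ ν := fun j hj => by
    rw [YoungDiagram.mem_iff_lt_rowLen]; omega
  -- adding and removing
  have hadd : ∀ ρ : YD, Hs l ρ → Vs ρ ν → IsLowerSet ((insert (r, c) ρ.cells : Finset _) : Set (ℕ × ℕ)) := by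
    intro ρ h1 h2
    apply lower_of_adj
    · intro i j h
      simp only [Finset.mem_insert, YoungDiagram.mem_cells, Prod.mk.injEq] at h ⊢
      rcases h with ⟨h3, h4⟩ | h
      · right
        apply h1.2
        rw [h3, h4]; exact hcl
      · right; exact up ρ h (by omega) le_rfl
    · intro i j h
      simp only [Finset.mem_insert, YoungDiagram.mem_cells, Prod.mk.injEq] at h ⊢
      rcases h with ⟨h3, h4⟩ | h
      · right
        rw [h3]
        exact h2.1 (hlt j (by omega))
      · right; exact up ρ h le_rfl (by omega)
  have hrem : ∀ ρ : YD, Hs l ρ → Vs ρ ν → IsLowerSet ((ρ.cells.erase (r, c) : Finset _) : Set (ℕ × ℕ)) := by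
    intro ρ h1 h2
    apply lower_of_adj
    · intro i j h
      simp only [Finset.mem_erase, YoungDiagram.mem_cells, Prod.mk.injEq, ne_eq] at h ⊢
      refine ⟨?_, up ρ h.2 (by omega) le_rfl⟩
      rintro ⟨rfl, rfl⟩
      exact hcν (up ν (hrow _ _ (Nat.lt_succ_self _) (h1.1 h.2)) (by omega) le_rfl)
    · intro i j h
      simp only [Finset.mem_erase, YoungDiagram.mem_cells, Prod.mk.injEq, ne_eq] at h ⊢
      refine ⟨?_, up ρ h.2 le_rfl (by omega)⟩
      rintro ⟨rfl, rfl⟩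
      exact hcν (h2.2 _ _ h.2)
  let tog : ∀ ρ ∈ (below l).filter (fun ρ => Hs l ρ ∧ Vs ρ ν), YD := fun ρ h =>
    if hm : (r, c) ∈ ρ then ⟨ρ.cells.erase (r, c), hrem ρ (Finset.mem_filter.1 h).2.1 (Finset.mem_filter.1 h).2.2⟩
    else ⟨insert (r, c) ρ.cells, hadd ρ (Finset.mem_filter.1 h).2.1 (Finset.mem_filter.1 h).2.2⟩
  have tog_pos : ∀ ρ h, (r, c) ∈ ρ → (tog ρ h).cells = ρ.cells.erase (r, c) := by
    intro ρ h hm; simp [tog, hm]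
  have tog_neg : ∀ ρ h, (r, c) ∉ ρ → (tog ρ h).cells = insert (r, c) ρ.cells := by
    intro ρ h hm; simp [tog, hm]
  have tog_mem : ∀ ρ h, tog ρ h ∈ (below l).filter (fun ρ => Hs l ρ ∧ Vs ρ ν) := by
    intro ρ h
    have h' := h
    simp only [Finset.mem_filter] at h' ⊢
    obtain ⟨-, h1, h2⟩ := h'
    by_cases hm : (r, c) ∈ ρ
    · have hmem : ∀ i j, (i, j) ∈ tog ρ h ↔ (i, j) ≠ (r, c) ∧ (i, j) ∈ ρ := by
        intro i j; rw [← YoungDiagram.mem_cells, tog_pos ρ h hm]; simp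
      have k1 : Hs l (tog ρ h) := by
        refine ⟨le_iff'.2 fun i j hij => h1.1 ((hmem i j).1 hij).2, fun i j hij => ?_⟩
        rw [hmem]
        refine ⟨?_, h1.2 _ _ hij⟩
        intro he
        simp only [Prod.mk.injEq] at he
        obtain ⟨rfl, rfl⟩ := he
        exact hcν (up ν (hrow _ _ (Nat.lt_succ_self _) hij) (by omega) le_rfl)
      refine ⟨mem_below.2 k1.1, k1, le_iff'.2 fun i j hij => ?_, fun i j hij => ?_⟩
      · rw [hmem]
        refine ⟨fun he => hcν (he ▸ hij), h2.1 hij⟩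
      · exact h2.2 _ _ ((hmem _ _).1 hij).2
    · have hmem : ∀ i j, (i, j) ∈ tog ρ h ↔ (i, j) = (r, c) ∨ (i, j) ∈ ρ := by
        intro i j; rw [← YoungDiagram.mem_cells, tog_neg ρ h hm]; simp
      have k1 : Hs l (tog ρ h) := by
        refine ⟨le_iff'.2 fun i j hij => ?_, fun i j hij => (hmem _ _).2 (Or.inr (h1.2 _ _ hij))⟩
        rcases (hmem i j).1 hij with h3 | h3
        · rw [h3]; exact hcl
        · exact h1.1 h3
      refine ⟨mem_below.2 k1.1, k1, le_iff'.2 fun i j hij => ?_, fun i j hij => ?_⟩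
      · exact (hmem _ _).2 (Or.inr (h2.1 hij))
      · rcases (hmem _ _).1 hij with h3 | h3
        · simp only [Prod.mk.injEq] at h3
          rw [h3.1]; exact hlt _ (by omega)
        · exact h2.2 _ _ h3
  refine Finset.sum_involution tog ?_ ?_ tog_mem ?_
  · intro ρ h
    have h' := h
    simp only [Finset.mem_filter] at h'
    obtain ⟨-, h1, h2⟩ := h'
    have hcard : ρ.cells.card ≤ l.cells.card := Finset.card_le_card h1.1
    by_cases hm : (r, c) ∈ ρ
    · rw [tog_pos ρ h hm, Finset.card_erase_of_mem ((YoungDiagram.mem_cells _).2 hm)]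
      have : 0 < ρ.cells.card := Finset.card_pos.2 ⟨_, (YoungDiagram.mem_cells _).2 hm⟩
      rw [show l.cells.card - (ρ.cells.card - 1) = (l.cells.card - ρ.cells.card) + 1 by omega]
      ring
    · rw [tog_neg ρ h hm, Finset.card_insert_of_notMem (by simpa using hm)]
      have : ρ.cells.card < l.cells.card := by
        apply Finset.card_lt_card
        refine ⟨h1.1, fun hh => hm (hh ((YoungDiagram.mem_cells _).2 hcl))⟩
      rw [show l.cells.card - ρ.cells.card = (l.cells.card - (ρ.cells.card + 1)) + 1 by omega]
      ring
  · intro ρ h _ heq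
    have heq := congrArg YoungDiagram.cells heq
    by_cases hm : (r, c) ∈ ρ
    · rw [tog_pos ρ h hm] at heq
      refine Finset.notMem_erase (r, c) ρ.cells ?_
      rw [heq]; exact (YoungDiagram.mem_cells _).2 hm
    · rw [tog_neg ρ h hm] at heq
      refine hm ((YoungDiagram.mem_cells _).1 ?_)
      rw [← heq]; exact Finset.mem_insert_self _ _
  · intro ρ h
    apply YoungDiagram.ext
    by_cases hm : (r, c) ∈ ρ
    · have h3 := tog_pos ρ h hm
      rw [tog_neg _ (tog_mem ρ h) (by rw [← YoungDiagram.mem_cells, h3]; simp), h3]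
      exact Finset.insert_erase ((YoungDiagram.mem_cells _).2 hm)
    · have h3 := tog_neg ρ h hm
      rw [tog_pos _ (tog_mem ρ h) (by rw [← YoungDiagram.mem_cells, h3]; simp), h3]
      exact Finset.erase_insert (by simpa using hm)

theorem FM_ext_lin {f g : FM →ₗ[ℤ] FM} (h : ∀ l ν, f (Finsupp.single l 1) ν = g (Finsupp.single l 1) ν) :
    f = g := by
  apply Finsupp.lhom_ext'
  intro l
  ext ν
  exact h l _

open scoped Classical in
theorem DV_rel (m : ℕ) (hm : 0 < m) :
    ∑ i ∈ Finset.range (m + 1), (-1 : ℤ) ^ i • (V (m - i) ∘ₗ D i) = 0 := by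
  apply FM_ext_lin
  intro l ν
  simp only [LinearMap.sum_apply, LinearMap.smul_apply, LinearMap.comp_apply, Finsupp.finsetSum_apply,
    LinearMap.zero_apply, Finsupp.coe_zero, Pi.zero_apply, Finsupp.smul_apply, smul_eq_mul]
  have h1 : ∀ i, V (m - i) (D i (Finsupp.single l 1)) ν =
      ∑ ρ ∈ below l, if (Hs l ρ ∧ ρ.cells.card + i = l.cells.card) ∧
        (Vs ρ ν ∧ ν.cells.card + (m - i) = ρ.cells.card) then 1 else 0 := by
    intro i
    have : D i (Finsupp.single l 1) = ∑ ν ∈ (below l).filter (fun ν => Hs l ν ∧ ν.cells.card + i = l.cells.card),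
      Finsupp.single ν (1 : ℤ) := by
      simp [D, Op]
    rw [this, map_sum, Finsupp.finsetSum_apply, Finset.sum_filter]
    refine Finset.sum_congr rfl fun ρ _ => ?_
    rw [Op_single_apply Vs_le]
    split_ifs <;> tauto
  simp only [h1, Finset.mul_sum]
  rw [Finset.sum_comm]
  by_cases hcard : ν.cells.card + m = l.cells.card
  · have hsc := strip_cancel l ν (by rintro rfl; omega)
    rw [Finset.sum_filter] at hsc
    refine Eq.trans ?_ hsc
    refine Finset.sum_congr rfl fun ρ hρ => ?_
    by_cases hh : Hs l ρ ∧ Vs ρ ν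
    · rw [if_pos hh]
      have c1 : ρ.cells.card ≤ l.cells.card := Finset.card_le_card hh.1.1
      have c2 : ν.cells.card ≤ ρ.cells.card := Finset.card_le_card hh.2.1
      rw [Finset.sum_eq_single (l.cells.card - ρ.cells.card)]
      · rw [if_pos, mul_one]
        refine ⟨⟨hh.1, by omega⟩, hh.2, by omega⟩
      · intro i _ hi
        rw [if_neg, mul_zero]
        rintro ⟨⟨_, h2⟩, _⟩
        omega
      · intro h; exfalso; apply h; simp; omega
    · rw [if_neg hh]
      apply Finset.sum_eq_zero
      intro i _
      rw [if_neg, mul_zero]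
      tauto
  · apply Finset.sum_eq_zero
    intro ρ _
    apply Finset.sum_eq_zero
    intro i hi
    rw [if_neg, mul_zero]
    rintro ⟨⟨_, h2⟩, _, h3⟩
    simp at hi
    omega

theorem AB_rel {n : ℕ} (hn : 0 < n) (m : ℕ) (hm : 0 < m) :
    ∑ i ∈ Finset.range (m + 1), (-1 : ℤ) ^ i • (B n (m - i) ∘ₗ A n i) = 0 := by
  by_cases hd : n ∣ m
  · obtain ⟨k, rfl⟩ := hd
    have hk : 0 < k := Nat.pos_of_mul_pos_left hm |> fun h => by
      rcases Nat.eq_zero_or_pos k with rfl | h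
      · simp at hm
      · exact h
    have key : ∑ i ∈ Finset.range (n * k + 1), (-1 : ℤ) ^ i • (B n (n * k - i) ∘ₗ A n i) =
        (-1 : ℤ) ^ (n * k + k) • ∑ j ∈ Finset.range (k + 1), (-1 : ℤ) ^ j • (V (k - j) ∘ₗ D j) := by
      rw [Finset.smul_sum]
      symm
      refine Finset.sum_of_injOn (fun j => n * j) ?_ ?_ ?_ ?_
      · intro a _ b _ h
        exact Nat.eq_of_mul_eq_mul_left hn h
      · intro j hj
        simp only [Finset.coe_range, Set.mem_Iio] at *
        have : n * j ≤ n * k := Nat.mul_le_mul_left _ (by omega)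
        omega
      · intro i hi hi2
        have : ¬ n ∣ i := by
          rintro ⟨j, rfl⟩
          apply hi2
          refine ⟨j, ?_, rfl⟩
          simp only [Finset.coe_range, Set.mem_Iio, Finset.mem_range] at *
          have : j ≤ k := Nat.le_of_mul_le_mul_left (by omega) hn
          omega
        simp [A, this]
      · intro j hj
        have hj : j ≤ k := by simp at hj; omega
        obtain ⟨e, rfl⟩ := Nat.exists_eq_add_of_le hj
        have e1 : n * (j + e) - n * j = n * e := by rw [Nat.mul_add]; omega
        simp only [A, B, e1, dvd_mul_right, if_true, Nat.mul_div_cancel_left _ hn, Nat.add_sub_cancel_left]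
        rw [LinearMap.smul_comp, smul_smul, smul_smul]
        congr 1
        have : ((-1 : ℤ) ^ j) * (-1) ^ j = 1 := by rw [← mul_pow]; simp
        rw [Nat.mul_add, pow_add, pow_add, pow_add, pow_add]
        linear_combination ((-1 : ℤ) ^ (n * j) * (-1) ^ (n * e) * (-1) ^ e) * this
    rw [key, DV_rel k hk, smul_zero]
  · apply Finset.sum_eq_zero
    intro i hi
    simp at hi
    by_cases h1 : n ∣ i
    · have : ¬ n ∣ m - i := by
        intro h2
        apply hd
        have := Nat.dvd_add h1 h2
        rwa [Nat.add_sub_cancel' (by omega)] at this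
      simp [B, this]
    · simp [A, h1]

theorem Op_zero {R : YD → YD → Prop} (hR : ∀ l ν, R l ν → ν ≤ l) (hrefl : ∀ l, R l l) :
    Op R 0 = LinearMap.id := by
  classical
  apply FM_ext_lin
  intro l ν
  rw [Op_single_apply hR]
  simp only [LinearMap.id_apply, Finsupp.single_apply]
  congr 1
  simp only [eq_iff_iff]
  constructor
  · rintro ⟨h1, h2⟩
    exact (eq_of_le (hR _ _ h1) (by omega)).symm
  · rintro rfl
    exact ⟨hrefl _, by omega⟩

theorem D_zero : D 0 = LinearMap.id :=
  Op_zero Hs_le fun l => ⟨le_rfl, fun _ _ h => up l h (by omega) le_rfl⟩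
theorem V_zero : V 0 = LinearMap.id :=
  Op_zero Vs_le fun l => ⟨le_rfl, fun _ _ h => up l h le_rfl (by omega)⟩
theorem A_zero (n : ℕ) : A n 0 = LinearMap.id := by simp [A, ← D_zero]
theorem B_zero (n : ℕ) : B n 0 = LinearMap.id := by simp [B, ← V_zero]

theorem P_V {n : ℕ} (hn : 0 < n) (m : ℕ) : ∀ {u w : FM}, P n u w → P n (V m u) (B n m w) := by
  induction m using Nat.strong_induction_on with
  | _ m ih =>
    intro u w h
    rcases Nat.eq_zero_or_pos m with rfl | hm
    · rw [V_zero, B_zero]; exact h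
    · have e1 := congrArg (fun f => f u) (DV_rel m hm)
      have e2 := congrArg (fun f => f w) (AB_rel hn m hm)
      simp only [Finset.sum_range_succ', LinearMap.add_apply, LinearMap.sum_apply, LinearMap.smul_apply,
        LinearMap.comp_apply, D_zero, A_zero, LinearMap.id_apply, pow_zero, one_smul, Nat.sub_zero,
        LinearMap.zero_apply] at e1 e2
      have e1' := eq_neg_of_add_eq_zero_right e1
      have e2' := eq_neg_of_add_eq_zero_right e2
      rw [e1', e2', ← neg_one_smul ℤ, ← neg_one_smul ℤ (Finset.sum _ _)]
      apply P_smul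
      apply P_sum
      intro i hi
      apply P_smul
      exact ih _ (by omega) (P_D h _)

theorem Z_of_P {n : ℕ} (hn : 0 < n) : ∀ (b a : ℕ) (u w : FM), P n u w → I a b w → Z a b u := by
  intro b
  induction b with
  | zero =>
    intro a
    induction a with
    | zero =>
      intro u w h hI
      have h1 := h []
      simp only [run] at h1
      rw [Z, h1]
      by_contra h2
      exact YoungDiagram.notMem_bot _ (hI _ h2)
    | succ a ih =>
      intro u w h hI
      rw [Z_H]
      intro m
      refine ih _ _ (P_D h m) ?_
      unfold A
      split_ifs
      · exact I_D hI _
      · exact I_zero _ _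
  | succ b ih =>
    intro a u w h hI
    rw [Z_V]
    intro m
    refine ih _ _ _ (P_V hn m h) ?_
    unfold B
    split_ifs
    · exact I_smul (I_V hI _) _
    · exact I_zero _ _

theorem Z_of_run : ∀ (a : ℕ) (u : FM), (∀ γ : List ℕ, γ.length = a → run D γ u ⊥ = 0) → Z a 0 u := by
  intro a
  induction a with
  | zero => intro u h; rw [Z]; exact h [] rfl
  | succ a ih =>
    intro u h
    rw [Z_H]
    intro m
    exact ih _ fun γ hγ => h (m :: γ) (by simp [hγ])

theorem run_degree {n : ℕ} (γ : List ℕ) : ∀ (u : FM),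
    (∀ l, u l ≠ 0 → n * l.cells.card ≠ γ.sum) → run (A n) γ u ⊥ = 0 := by
  induction γ with
  | nil =>
    intro u h
    by_contra h2
    exact h _ h2 (by simp)
  | cons g γ ih =>
    intro u h
    refine ih _ fun ν hν => ?_
    unfold A at hν
    split_ifs at hν with hd
    · obtain ⟨l, h1, h2, h3⟩ := Op_ne_zero Hs_le hν
      have h4 := h l h1
      obtain ⟨k, rfl⟩ := hd
      rw [List.sum_cons, ← h3] at h4
      intro h5
      apply h4
      rcases Nat.eq_zero_or_pos n with rfl | hn
      · simp at *; omega
      · rw [Nat.mul_div_cancel_left _ hn, Nat.mul_add]; omega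
    · simp at hν

theorem A_one : A 1 = D := by funext g; simp [A]

theorem run_filter (O : ℕ → FM →ₗ[ℤ] FM) (hO : O 0 = LinearMap.id) (γ : List ℕ) :
    ∀ u, run O (γ.filter (· ≠ 0)) u = run O γ u := by
  induction γ with
  | nil => intro u; rfl
  | cons g γ ih =>
    intro u
    by_cases hg : g = 0
    · subst hg
      simp only [run, hO]
      rw [List.filter_cons_of_neg (by simp)]
      exact ih u
    · rw [List.filter_cons_of_pos (by simpa using hg)]
      exact ih _

theorem run_pad (O : ℕ → FM →ₗ[ℤ] FM) (hO : O 0 = LinearMap.id) (γ : List ℕ) (k : ℕ) (u : FM) :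
    run O (List.replicate k 0 ++ γ) u = run O γ u := by
  induction k with
  | zero => rfl
  | succ k ih => rw [List.replicate_succ, List.cons_append, run, hO]; exact ih

theorem length_filter_le_sum (γ : List ℕ) : (γ.filter (· ≠ 0)).length ≤ γ.sum := by
  induction γ with
  | nil => simp
  | cons g γ ih =>
    by_cases hg : g = 0
    · subst hg
      rw [List.filter_cons_of_neg (by simp)]; simpa using ih
    · rw [List.filter_cons_of_pos (by simpa using hg)]
      simp only [List.length_cons, List.sum_cons]; omega

theorem run_A {n : ℕ} (γ : List ℕ) : ∀ w, run (A n) γ w =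
    if ∀ g ∈ γ, n ∣ g then run D (γ.map (· / n)) w else 0 := by
  induction γ with
  | nil => intro w; simp [run]
  | cons g γ ih =>
    intro w
    rw [run, ih]
    by_cases hg : n ∣ g
    · simp [A, hg, run]
    · simp [A, hg, run_zero]

/-- Main reduction: the identity for lists of length `N` suffices. -/
theorem main_red {n : ℕ} (N d : ℕ) (hN : n * d ≤ N) (u w : FM)
    (hw : ∀ l, w l ≠ 0 → l.cells.card = d)
    (hrows : ∀ l, u l ≠ 0 → (N, 0) ∉ l)
    (h : ∀ γ : List ℕ, γ.length = N → run D γ u ⊥ = run (A n) γ w ⊥) : P n u w := by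
  classical
  have degD : ∀ (γ : List ℕ) (v : FM), (∀ l, v l ≠ 0 → l.cells.card ≠ γ.sum) → run D γ v ⊥ = 0 := by
    intro γ v hv
    rw [← A_one]
    exact run_degree γ v (by simpa using hv)
  set ur := u.filter (fun l => l.cells.card ≠ n * d) with hur
  set uh := u.filter (fun l => ¬ l.cells.card ≠ n * d) with huh
  have hsum : u = ur + uh := (Finsupp.filter_add_filter_not u _).symm
  have hh : ∀ l, uh l ≠ 0 → l.cells.card = n * d := by
    intro l hl
    by_contra h2
    exact hl (Finsupp.filter_apply_neg _ _ (by simpa using h2))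
  have hr : ∀ l, ur l ≠ 0 → l.cells.card ≠ n * d ∧ u l ≠ 0 := by
    intro l hl
    by_cases h2 : l.cells.card ≠ n * d
    · refine ⟨h2, ?_⟩
      rwa [hur, Finsupp.filter_apply_pos (fun l : YD => l.cells.card ≠ n * d) _ h2] at hl
    · exact absurd (Finsupp.filter_apply_neg (fun l : YD => l.cells.card ≠ n * d) _ h2) hl
  have hur0 : ur = 0 := by
    have hz : Z N 0 ur := by
      apply Z_of_run
      intro γ hγ
      by_cases hs : γ.sum = n * d
      · apply degD
        intro l hl
        rw [hs]; exact (hr l hl).1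
      · have h1 := h γ hγ
        rw [hsum, run_add, Finsupp.add_apply, degD γ uh (fun l hl => by rw [hh l hl]; exact fun h => hs h.symm),
          run_degree γ w (fun l hl => by rw [hw l hl]; exact fun h => hs h.symm)] at h1
        simpa using h1
    ext l
    by_contra h2
    exact h2 (Z_vanish 0 N ur hz l (hrows l (hr l h2).2))
  rw [hur0, zero_add] at hsum
  intro γ
  by_cases hs : γ.sum = n * d
  · have hlen := length_filter_le_sum γ
    have h1 := h (List.replicate (N - (γ.filter (· ≠ 0)).length) 0 ++ γ.filter (· ≠ 0)) (by
      rw [List.length_append, List.length_replicate]; omega)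
    rwa [run_pad _ D_zero, run_pad _ (A_zero n), run_filter _ D_zero, run_filter _ (A_zero n)] at h1
  · rw [hsum, degD γ uh (fun l hl => by rw [hh l hl]; exact fun h => hs h.symm),
          run_degree γ w (fun l hl => by rw [hw l hl]; exact fun h => hs h.symm)]


open scoped Classical in
noncomputable def cnt (N : ℕ) (μ : YD) (γ : Fin N → ℕ) : ℕ :=
  (Finset.univ.filter (fun T : μ.cells → Fin N => IsSemistandardOn μ.cells T ∧
    ∀ i, (Finset.univ.filter (fun c => T c = i)).card = γ i)).card

theorem coeff_schur (N : ℕ) (μ : YD) (γ : Fin N →₀ ℕ) :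
    coeff γ (schurPoly N μ) = cnt N μ γ := by
  classical
  unfold schurPoly cellSchur cnt
  rw [coeff_sum, ← Finset.filter_filter, Finset.card_filter, Nat.cast_sum]
  refine Finset.sum_congr (by congr!) fun T _ => ?_
  have h1 : (∏ c : μ.cells, (X (T c) : MvPolynomial (Fin N) ℤ)) =
      monomial (∑ c : μ.cells, Finsupp.single (T c) 1) 1 := by
    rw [monomial_sum_one]; rfl
  rw [h1, coeff_monomial]
  have h2 : (∑ c : μ.cells, Finsupp.single (T c) 1 = γ) ↔
      ∀ i, (Finset.univ.filter (fun c => T c = i)).card = γ i := by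
    rw [Finsupp.ext_iff]
    refine forall_congr' fun i => ?_
    rw [Finsupp.finsetSum_apply, Finset.card_filter]
    simp only [Finsupp.single_apply]
  by_cases h : ∑ c : μ.cells, Finsupp.single (T c) 1 = γ
  · rw [if_pos h, if_pos (h2.1 h)]; rfl
  · rw [if_neg h, if_neg (fun hh => h (h2.2 hh))]; rfl

theorem cnt_zero (μ : YD) (γ : Fin 0 → ℕ) : (cnt 0 μ γ : ℤ) = Finsupp.single μ (1 : ℤ) ⊥ := by
  classical
  unfold cnt
  rw [Finsupp.single_apply]
  split_ifs with h
  · subst h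
    rw [Finset.filter_true_of_mem]
    · have : IsEmpty ((⊥ : YD).cells) := by rw [YoungDiagram.cells_bot]; infer_instance
      simp
    · intro T _
      refine ⟨⟨fun i j h1 => ?_, fun i j h1 => ?_⟩, fun i => i.elim0⟩ <;> simp at h1
  · have hne : μ.cells.Nonempty := by
      rw [Finset.nonempty_iff_ne_empty]
      intro h2
      exact h (YoungDiagram.ext (by simpa using h2))
    obtain ⟨c, hc⟩ := hne
    have : IsEmpty (μ.cells → Fin 0) := ⟨fun T => (T ⟨c, hc⟩).elim0⟩
    simp

open scoped Classical in
/-- Extend a filling by the largest entry. -/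
noncomputable def ext {N : ℕ} (ρ μ : YD) (T : ρ.cells → Fin N) : μ.cells → Fin (N + 1) :=
  fun c => if h : (c : ℕ × ℕ) ∈ ρ.cells then (T ⟨c, h⟩).castSucc else Fin.last N

theorem ext_ss {N : ℕ} {ρ μ : YD} (h : Hs μ ρ) (T : ρ.cells → Fin N) :
    IsSemistandardOn μ.cells (ext ρ μ T) ↔ IsSemistandardOn ρ.cells T := by
  constructor
  · rintro ⟨h1, h2⟩
    refine ⟨fun i j a b => ?_, fun i j a b => ?_⟩
    · have := h1 i j (h.1 a) (h.1 b)
      simpa only [ext, dif_pos a, dif_pos b, Fin.castSucc_le_castSucc_iff] using this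
    · have := h2 i j (h.1 a) (h.1 b)
      simpa only [ext, dif_pos a, dif_pos b, Fin.castSucc_lt_castSucc_iff] using this
  · rintro ⟨h1, h2⟩
    refine ⟨fun i j a b => ?_, fun i j a b => ?_⟩
    · by_cases hb : (i, j + 1) ∈ ρ.cells
      · have ha : (i, j) ∈ ρ.cells := up ρ hb le_rfl (by omega)
        simp only [ext, dif_pos ha, dif_pos hb, Fin.castSucc_le_castSucc_iff]
        exact h1 _ _ _ _
      · simp only [ext, dif_neg hb]
        exact Fin.le_last _
    · have ha : (i, j) ∈ ρ.cells := h.2 _ _ b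
      by_cases hb : (i + 1, j) ∈ ρ.cells
      · simp only [ext, dif_pos ha, dif_pos hb, Fin.castSucc_lt_castSucc_iff]
        exact h2 _ _ _ _
      · simp only [ext, dif_neg hb, dif_pos ha]
        exact Fin.castSucc_lt_last _

open scoped Classical in
theorem ext_cast {N : ℕ} {ρ μ : YD} (h : ρ ≤ μ) (T : ρ.cells → Fin N) (i : Fin N) :
    (Finset.univ.filter (fun c => ext ρ μ T c = i.castSucc)).card =
      (Finset.univ.filter (fun c => T c = i)).card := by
  symm
  refine Finset.card_bij (fun c _ => ⟨c.1, h c.2⟩) ?_ ?_ ?_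
  · intro c hc
    have := c.2
    simp only [Finset.mem_filter, Finset.mem_univ, true_and] at hc ⊢
    simp only [ext, dif_pos this, hc]
  · intro a _ b _ hab
    simp only [Subtype.mk.injEq] at hab
    exact Subtype.ext hab
  · intro c hc
    simp only [Finset.mem_filter, Finset.mem_univ, true_and] at hc
    by_cases hh : (c : ℕ × ℕ) ∈ ρ.cells
    · refine ⟨⟨c.1, hh⟩, ?_, rfl⟩
      simp only [ext, dif_pos hh] at hc
      simpa using hc
    · simp only [ext, dif_neg hh] at hc
      exact absurd hc (Fin.castSucc_ne_last i).symm

open scoped Classical in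
theorem ext_last {N : ℕ} {ρ μ : YD} (h : ρ ≤ μ) (T : ρ.cells → Fin N) :
    (Finset.univ.filter (fun c => ext ρ μ T c = Fin.last N)).card + ρ.cells.card = μ.cells.card := by
  have h1 : (Finset.univ.filter (fun c => ext ρ μ T c = Fin.last N)).card = (μ.cells \ ρ.cells).card := by
    refine Finset.card_bij (fun c _ => c.1) ?_ ?_ ?_
    · intro c hc
      simp only [Finset.mem_filter, Finset.mem_univ, true_and] at hc
      rw [Finset.mem_sdiff]
      refine ⟨c.2, fun hh => ?_⟩
      simp only [ext, dif_pos hh] at hc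
      exact Fin.castSucc_ne_last _ hc
    · intro a _ b _ hab
      exact Subtype.ext hab
    · intro c hc
      rw [Finset.mem_sdiff] at hc
      refine ⟨⟨c, hc.1⟩, ?_, rfl⟩
      refine Finset.mem_filter.2 ⟨Finset.mem_univ _, ?_⟩
      simp only [ext, dif_neg hc.2]
  rw [h1]
  exact Finset.card_sdiff_add_card_eq_card h

theorem ss_restrict {N : ℕ} {μ : YD} {T : μ.cells → Fin (N + 1)} (hT : IsSemistandardOn μ.cells T) :
    ∃ (ρ : YD) (T' : ρ.cells → Fin N), Hs μ ρ ∧ ext ρ μ T' = T := by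
  classical
  let s : Finset (ℕ × ℕ) := μ.cells.filter (fun c => ∃ h : c ∈ μ.cells, T ⟨c, h⟩ ≠ Fin.last N)
  have hs : ∀ c, c ∈ s ↔ ∃ h : c ∈ μ.cells, T ⟨c, h⟩ ≠ Fin.last N := by
    intro c
    simp only [s, Finset.mem_filter]
    exact ⟨fun h => h.2, fun h => ⟨h.1, h⟩⟩
  have hH : ∀ i j, (i + 1, j) ∈ μ.cells → (i, j) ∈ s := by
    intro i j h
    have h' : (i, j) ∈ μ.cells := up μ h (by omega) le_rfl
    rw [hs]
    exact ⟨h', ((hT.2 i j h' h).trans_le (Fin.le_last _)).ne⟩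
  let ρ : YD := ⟨s, lower_of_adj s (fun i j h => hH i j ((hs _).1 h).1) (fun i j h => by
    rw [hs] at h ⊢
    obtain ⟨h1, h2⟩ := h
    have h' : (i, j) ∈ μ.cells := up μ h1 le_rfl (by omega)
    refine ⟨h', ?_⟩
    have h3 := hT.1 i j h' h1
    exact (h3.trans_lt (Fin.lt_last_iff_ne_last.2 h2)).ne)⟩
  refine ⟨ρ, fun c => (T ⟨c.1, ((hs _).1 c.2).1⟩).castPred ((hs _).1 c.2).2, ⟨?_, hH⟩, ?_⟩
  · intro c hc
    exact ((hs c).1 hc).1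
  · funext c
    by_cases hh : (c : ℕ × ℕ) ∈ ρ.cells
    · simp only [ext, dif_pos hh]
      simp
    · simp only [ext, dif_neg hh]
      have h2 : ¬ ∃ h : (c : ℕ × ℕ) ∈ μ.cells, T ⟨c, h⟩ ≠ Fin.last N := fun h => hh ((hs _).2 h)
      push Not at h2
      exact (h2 c.2).symm

theorem ext_inj {N : ℕ} {ρ ρ' μ : YD} (h : ρ ≤ μ) (h' : ρ' ≤ μ) {T : ρ.cells → Fin N}
    {T' : ρ'.cells → Fin N} (he : ext ρ μ T = ext ρ' μ T') :
    (⟨ρ, T⟩ : Σ ρ : YD, (ρ.cells → Fin N)) = ⟨ρ', T'⟩ := by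
  have key : ∀ c (hc : c ∈ μ.cells), c ∈ ρ.cells ↔ c ∈ ρ'.cells := by
    intro c hc
    have h1 := congrFun he ⟨c, hc⟩
    simp only [ext] at h1
    split_ifs at h1 with a b b
    · exact ⟨fun _ => b, fun _ => a⟩
    · exact absurd h1 (Fin.castSucc_ne_last _)
    · exact absurd h1.symm (Fin.castSucc_ne_last _)
    · exact ⟨fun h => absurd h a, fun h => absurd h b⟩
  have hρ : ρ = ρ' := by
    apply YoungDiagram.ext
    ext c
    exact ⟨fun hc => (key c (h hc)).1 hc, fun hc => (key c (h' hc)).2 hc⟩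
  subst hρ
  congr 1
  funext c
  have h1 := congrFun he ⟨c.1, h c.2⟩
  have h2 := c.2
  simp only [ext, dif_pos h2] at h1
  exact Fin.castSucc_injective _ h1

open scoped Classical in
theorem cnt_succ (N : ℕ) (μ : YD) (γ : Fin (N + 1) → ℕ) :
    cnt (N + 1) μ γ = ∑ ρ ∈ (below μ).filter (fun ρ => Hs μ ρ ∧
      ρ.cells.card + γ (Fin.last N) = μ.cells.card), cnt N ρ (fun i => γ i.castSucc) := by
  unfold cnt
  rw [← Finset.card_sigma]
  symm
  refine Finset.card_bij (fun p _ => ext p.1 μ p.2) ?_ ?_ ?_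
  · rintro ⟨ρ, T⟩ h
    simp only [Finset.mem_sigma, Finset.mem_filter, Finset.mem_univ, true_and] at h ⊢
    obtain ⟨⟨_, h1, h2⟩, h3, h4⟩ := h
    refine ⟨(ext_ss h1 T).2 h3, fun i => ?_⟩
    induction i using Fin.lastCases with
    | last => have := ext_last h1.1 T; omega
    | cast i => rw [ext_cast h1.1, h4]
  · rintro ⟨ρ, T⟩ h ⟨ρ', T'⟩ h' he
    simp only [Finset.mem_sigma, Finset.mem_filter] at h h'
    exact ext_inj h.1.2.1.1 h'.1.2.1.1 he
  · intro T hT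
    simp only [Finset.mem_filter, Finset.mem_univ, true_and] at hT
    obtain ⟨ρ, T', h1, rfl⟩ := ss_restrict hT.1
    refine ⟨⟨ρ, T'⟩, ?_, rfl⟩
    simp only [Finset.mem_sigma, Finset.mem_filter, Finset.mem_univ, true_and, mem_below]
    refine ⟨⟨h1.1, h1, ?_⟩, (ext_ss h1 T').1 hT.1, fun i => ?_⟩
    · have := ext_last h1.1 T'
      have h2 := hT.2 (Fin.last N)
      omega
    · rw [← ext_cast h1.1, hT.2]

theorem cnt_eq_run : ∀ (N : ℕ) (μ : YD) (γ : Fin N → ℕ),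
    (cnt N μ γ : ℤ) = run D (List.ofFn (fun i => γ i.rev)) (Finsupp.single μ 1) ⊥ := by
  classical
  intro N
  induction N with
  | zero => intro μ γ; rw [cnt_zero]; simp [run]
  | succ N ih =>
    intro μ γ
    rw [cnt_succ, List.ofFn_succ, run]
    have h1 : D (γ (Fin.rev 0)) (Finsupp.single μ 1) =
        ∑ ν ∈ (below μ).filter (fun ν => Hs μ ν ∧ ν.cells.card + γ (Fin.last N) = μ.cells.card),
      Finsupp.single ν (1 : ℤ) := by
      simp [D, Op]
    rw [h1, run_sum, Finsupp.finsetSum_apply, Nat.cast_sum]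
    refine Finset.sum_congr rfl fun ρ _ => ?_
    rw [ih]
    simp only [Fin.rev_succ]

theorem coeff_expand_schur {n : ℕ} (hn : 0 < n) (N : ℕ) (μ : YD) (γ : Fin N →₀ ℕ) :
    coeff γ (expand n (schurPoly N μ)) =
      run (A n) (List.ofFn (fun i => γ i.rev)) (Finsupp.single μ 1) ⊥ := by
  rw [run_A]
  by_cases h : ∀ i, n ∣ γ i
  · rw [if_pos (by simp only [List.mem_ofFn]; rintro g ⟨i, rfl⟩; exact h _)]
    let δ : Fin N →₀ ℕ := Finsupp.equivFunOnFinite.symm (fun i => γ i / n)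
    have hδ : γ = n • δ := by
      ext i
      simp only [Finsupp.smul_apply, smul_eq_mul, δ, Finsupp.equivFunOnFinite_symm_apply_apply]
      exact (Nat.mul_div_cancel' (h i)).symm
    rw [hδ, coeff_expand_smul _ hn.ne', coeff_schur, cnt_eq_run, ← hδ, List.map_ofFn]
    rfl
  · push Not at h
    obtain ⟨i, hi⟩ := h
    rw [coeff_expand_of_not_dvd _ hi, if_neg]
    · rfl
    · intro hh
      exact hi (hh _ (by rw [List.mem_ofFn]; exact ⟨i.rev, by simp⟩))

end SXPaux

open SXPaux in
/-- **Lower bound for the SXP coefficients.**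
Let `n ≥ 1` and let `λ, μ` be partitions (Young diagrams).  The SXP coefficient
`⟨s_μ, p_n ∘ s_λ⟩` is the (integer) coefficient of `s_μ` in the Schur expansion of
`p_n ∘ s_λ = s_λ(x_1^n, …, x_N^n)` in `N ≥ n·|λ|` variables; here this expansion is
encoded by a finitely supported coefficient family `co` (supported on diagrams with
at most `N` rows, which makes it unique).  If `⟨s_μ, p_n ∘ s_λ⟩ ≠ 0` then
`[λ] ⊆ [μ]`, i.e. `λ_i ≤ μ_i` for all `i`. -/
theorem SXP_lower_bound {n : ℕ} (hn : 0 < n) (lam mu : YoungDiagram)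
    (N : ℕ) (hN : n * lam.cells.card ≤ N)
    (co : YoungDiagram →₀ ℤ)
    (hrows : ∀ l ∈ co.support, l.colLen 0 ≤ N)
    (hexp : aeval (fun i : Fin N => (X i : MvPolynomial (Fin N) ℤ) ^ n) (schurPoly N lam)
        = ∑ l ∈ co.support, co l • schurPoly N l)
    (hne : co mu ≠ 0) :
    ∀ i, lam.rowLen i ≤ mu.rowLen i := by
  classical
  have hP : P n co (Finsupp.single lam 1) := by
    refine main_red N lam.cells.card hN _ _ ?_ ?_ ?_
    · intro l hl
      rw [Finsupp.single_apply] at hl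
      split_ifs at hl with h
      · rw [h]
      · simp at hl
    · intro l hl
      have := hrows l (by simpa using hl)
      rw [YoungDiagram.mem_iff_lt_colLen]; omega
    · intro γ hγ
      subst hγ
      let δ : Fin γ.length →₀ ℕ := Finsupp.equivFunOnFinite.symm (fun i => γ.get i.rev)
      have hδ : List.ofFn (fun i => δ i.rev) = γ := by
        have : ∀ i : Fin γ.length, δ i.rev = γ.get i := by
          intro i
          simp only [δ, Finsupp.equivFunOnFinite_symm_apply_apply, Fin.rev_rev]
        simp only [this]
        exact List.ofFn_get γ
      have h1 := congrArg (coeff δ) hexp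
      have h2 : aeval (fun i : Fin γ.length => (X i : MvPolynomial (Fin γ.length) ℤ) ^ n)
          (schurPoly γ.length lam) = expand n (schurPoly γ.length lam) := by
        rfl
      rw [h2, coeff_expand_schur hn, hδ, coeff_sum] at h1
      rw [h1]
      conv_lhs => rw [← Finsupp.sum_single co]
      rw [Finsupp.sum, run_sum, Finsupp.finsetSum_apply]
      refine Finset.sum_congr rfl fun l _ => ?_
      have h3 : Finsupp.single l (co l) = co l • Finsupp.single l (1 : ℤ) := by simp
      rw [h3, run_smul, coeff_smul, coeff_schur, cnt_eq_run, hδ]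
      rfl
  intro i
  by_contra hlt
  push Not at hlt
  have hI : I i (mu.rowLen i) (Finsupp.single lam 1) := by
    intro l hl
    rw [Finsupp.single_apply] at hl
    split_ifs at hl with h
    · rw [← h, YoungDiagram.mem_iff_lt_rowLen]; exact hlt
    · simp at hl
  refine hne (Z_vanish _ _ _ (Z_of_P hn _ _ _ _ hP hI) mu ?_)
  rw [YoungDiagram.mem_iff_lt_rowLen]; omega
end
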